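/- There exists a positive constant c₃ such that for all sufficiently large y and all real x ≥ y + 1, the interval [x − y, x] contains a set of pairwise coprime positive integers of size at least c₃·√y / log y. -/

import Mathlib

open Real


namespace CI

/-- `n` has no prime factor below `z`. -/
def Rough (z : ℝ) (n : ℕ) : Prop := ∀ p : ℕ, p.Prime → p ∣ n → z ≤ p

open Classical in
/-- rough integers up to `N`. -/
noncomputable def RS (N : ℕ) (z : ℝ) : Finset ℕ := (Finset.Icc 1 N).filter (Rough z)

/-- primes below `z`. -/
noncomputable def PB (z : ℝ) : Finset ℕ := (Finset.range ⌈z⌉₊).filter Nat.Prime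

lemma mem_PB {z : ℝ} {p : ℕ} : p ∈ PB z ↔ p.Prime ∧ (p : ℝ) < z := by
  simp [PB, Nat.lt_ceil, and_comm]

lemma mem_RS {N : ℕ} {z : ℝ} {n : ℕ} : n ∈ RS N z ↔ (1 ≤ n ∧ n ≤ N) ∧ Rough z n := by
  simp [RS]

lemma RS_two (N : ℕ) : RS N 2 = Finset.Icc 1 N := by
  ext n
  simp only [mem_RS, Finset.mem_Icc, and_iff_left_iff_imp]
  intro _ p hp _
  exact_mod_cast hp.two_le

lemma rough_mono {z w : ℝ} (h : z ≤ w) {n : ℕ} (hn : Rough w n) : Rough z n :=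
  fun p hp hd => h.trans (hn p hp hd)

lemma RS_mono (N : ℕ) {z w : ℝ} (h : z ≤ w) : RS N w ⊆ RS N z := by
  intro n hn
  rw [mem_RS] at *
  exact ⟨hn.1, rough_mono h hn.2⟩

lemma buchstab (N : ℕ) (z : ℝ) (w : ℕ → ℝ) (hw : ∀ n, N < n → w n = 0) :
    ∑ n ∈ RS N z, w n = ∑ n ∈ Finset.Icc 1 N, w n
      - ∑ p ∈ PB z, ∑ m ∈ RS N p, w (p * m) := by
  classical
  have h1 := Finset.sum_filter_add_sum_filter_not (Finset.Icc 1 N) (Rough z) w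
  have h2 : ∑ n ∈ (Finset.Icc 1 N).filter (fun n => ¬ Rough z n), w n
      = ∑ p ∈ PB z, ∑ m ∈ RS N p, w (p * m) := by
    rw [← Finset.sum_fiberwise_of_maps_to (t := PB z) (g := Nat.minFac)]
    · refine Finset.sum_congr rfl fun p hp => ?_
      rw [mem_PB] at hp
      have hinj : Set.InjOn (fun m => p * m) (RS N p : Set ℕ) := by
        intro a _ b _ h
        exact Nat.eq_of_mul_eq_mul_left hp.1.pos h
      rw [← Finset.sum_image (f := w) hinj]
      apply Finset.sum_subset
      · intro n hn
        simp only [Finset.mem_filter, Finset.mem_Icc] at hn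
        obtain ⟨⟨⟨hn1, hn2⟩, hn3⟩, hn4⟩ := hn
        have hd : p ∣ n := hn4 ▸ Nat.minFac_dvd n
        obtain ⟨m, rfl⟩ := hd
        have hm : 1 ≤ m := Nat.pos_of_ne_zero (by rintro rfl; simp at hn1)
        refine Finset.mem_image.2 ⟨m, mem_RS.2 ⟨⟨hm, ?_⟩, ?_⟩, rfl⟩
        · exact le_trans (Nat.le_mul_of_pos_left m hp.1.pos) hn2
        · intro q hq hqm
          have := Nat.minFac_le_of_dvd hq.two_le (Dvd.dvd.mul_left hqm p)
          rw [hn4] at this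
          exact_mod_cast this
      · intro n hn hn'
        obtain ⟨m, hm, rfl⟩ := Finset.mem_image.1 hn
        rw [mem_RS] at hm
        by_contra hne
        apply hn'
        simp only [Finset.mem_filter, Finset.mem_Icc]
        refine ⟨⟨⟨Nat.mul_pos hp.1.pos hm.1.1, ?_⟩, ?_⟩, ?_⟩
        · by_contra hlt
          exact hne (hw _ (by omega))
        · intro hr
          exact absurd (hr p hp.1 (dvd_mul_right _ _)) (not_le.2 hp.2)
        · apply le_antisymm
          · exact Nat.minFac_le_of_dvd hp.1.two_le (dvd_mul_right _ _)
          · have hne1 : p * m ≠ 1 := by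
              intro h
              exact hp.1.one_lt.ne' (Nat.eq_one_of_mul_eq_one_right h)
            have hpr := Nat.minFac_prime hne1
            rcases (Nat.Prime.dvd_mul hpr).1 (Nat.minFac_dvd (p*m)) with h | h
            · exact ((Nat.prime_dvd_prime_iff_eq hpr hp.1).1 h).ge
            · exact_mod_cast hm.2 _ hpr h
    · intro n hn
      simp only [Finset.mem_filter, Finset.mem_Icc] at hn
      obtain ⟨⟨hn1, hn2⟩, hn3⟩ := hn
      unfold Rough at hn3
      push Not at hn3
      obtain ⟨p, hp, hd, hlt⟩ := hn3
      rw [mem_PB]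
      refine ⟨Nat.minFac_prime (fun h => ?_), ?_⟩
      · subst h; exact hp.one_lt.ne' (Nat.dvd_one.1 hd)
      · exact lt_of_le_of_lt (by exact_mod_cast Nat.minFac_le_of_dvd hp.two_le hd) hlt
  rw [← h2, ← h1]
  simp [RS]

open Classical in
/-- indicator of `(a,b]`. -/
noncomputable def ind (a b : ℝ) (n : ℕ) : ℝ := if a < n ∧ (n : ℝ) ≤ b then 1 else 0

/-- sifted count. -/
noncomputable def S (N : ℕ) (a b z : ℝ) : ℝ := ∑ n ∈ RS N z, ind a b n

/-- parity of the floor. -/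
noncomputable def f (u : ℝ) : ℝ := (⌊u⌋₊ : ℝ) - 2 * (⌊u / 2⌋₊ : ℝ)

lemma f_eq (u : ℝ) : f u = ((⌊u⌋₊ % 2 : ℕ) : ℝ) := by
  have h : ⌊u / 2⌋₊ = ⌊u⌋₊ / 2 := by
    have := Nat.floor_div_natCast u 2
    simpa using this
  have h2 : (⌊u⌋₊ : ℝ) = 2 * ((⌊u⌋₊ / 2 : ℕ) : ℝ) + ((⌊u⌋₊ % 2 : ℕ) : ℝ) := by
    exact_mod_cast (Nat.div_add_mod _ 2).symm
  unfold f
  rw [h]; linarith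

lemma f_nonneg (u : ℝ) : 0 ≤ f u := by rw [f_eq]; positivity

lemma f_le_one (u : ℝ) : f u ≤ 1 := by
  rw [f_eq]; exact_mod_cast Nat.lt_succ_iff.1 (Nat.mod_lt _ two_pos)

lemma f_of_lt {u : ℝ} (h : u < 1) : f u = 0 := by
  rw [f_eq, Nat.floor_eq_zero.2 h]; simp

open ArithmeticFunction in
/-- indicator of odd number of prime factors. -/
noncomputable def oddI (n : ℕ) : ℝ := if Odd (cardFactors n) then 1 else 0

open ArithmeticFunction in
/-- indicator of even number of prime factors. -/
noncomputable def evenI (n : ℕ) : ℝ := if Even (cardFactors n) then 1 else 0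

noncomputable def G (N : ℕ) (v z : ℝ) : ℝ :=
  2 / log 2 * ∑ n ∈ RS N z, oddI n * f (v / n)

noncomputable def g (N : ℕ) (v z : ℝ) : ℝ :=
  2 / log 2 * ∑ n ∈ RS N z, evenI n * f (v / n)

lemma oddI_mul {p m : ℕ} (hp : p.Prime) (hm : 1 ≤ m) : oddI (p * m) = evenI m := by
  unfold oddI evenI
  rw [ArithmeticFunction.cardFactors_mul hp.ne_zero (by omega),
    ArithmeticFunction.cardFactors_apply_prime hp]
  congr 1
  rw [Nat.add_comm, Nat.odd_add_one, Nat.not_odd_iff_even]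

lemma evenI_mul {p m : ℕ} (hp : p.Prime) (hm : 1 ≤ m) : evenI (p * m) = oddI m := by
  unfold oddI evenI
  rw [ArithmeticFunction.cardFactors_mul hp.ne_zero (by omega),
    ArithmeticFunction.cardFactors_apply_prime hp]
  congr 1
  rw [Nat.add_comm, Nat.even_add_one, Nat.not_even_iff_odd]

lemma S_buchstab (N : ℕ) (a b z : ℝ) (hb : b ≤ N) :
    S N a b z = S N a b 2 - ∑ p ∈ PB z, S N (a / p) (b / p) p := by
  unfold S
  rw [buchstab, RS_two]
  · congr 1
    refine Finset.sum_congr rfl fun p hp => Finset.sum_congr rfl fun m hm => ?_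
    have hp0 : (0:ℝ) < p := by exact_mod_cast (mem_PB.1 hp).1.pos
    unfold ind
    simp only [div_lt_iff₀ hp0, le_div_iff₀ hp0]
    push_cast
    simp only [mul_comm (p:ℝ)]
  · intro n hn
    unfold ind
    rw [if_neg]
    rintro ⟨_, h⟩
    have : (N:ℝ) < n := by exact_mod_cast hn
    linarith

lemma f_big {N n : ℕ} {v : ℝ} (hv : v ≤ N) (hn : N < n) : f (v / n) = 0 := by
  apply f_of_lt
  have : (N:ℝ) < n := by exact_mod_cast hn
  have h0 : (0:ℝ) < n := lt_of_le_of_lt (by positivity) this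
  rw [div_lt_one h0]; linarith

lemma G_buchstab (N : ℕ) (v z : ℝ) (hv : v ≤ N) :
    G N v z = G N v 2 - ∑ p ∈ PB z, g N (v / p) p := by
  unfold G g
  rw [buchstab, RS_two, mul_sub, ← Finset.mul_sum]
  · congr 2
    refine Finset.sum_congr rfl fun p hp => Finset.sum_congr rfl fun m hm => ?_
    rw [oddI_mul (mem_PB.1 hp).1 (mem_RS.1 hm).1.1]
    push_cast
    rw [div_div]
  · intro n hn
    rw [f_big hv hn, mul_zero]

lemma g_buchstab (N : ℕ) (v z : ℝ) (hv : v ≤ N) :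
    g N v z = g N v 2 - ∑ p ∈ PB z, G N (v / p) p := by
  unfold G g
  rw [buchstab, RS_two, mul_sub, ← Finset.mul_sum]
  · congr 2
    refine Finset.sum_congr rfl fun p hp => Finset.sum_congr rfl fun m hm => ?_
    rw [evenI_mul (mem_PB.1 hp).1 (mem_RS.1 hm).1.1]
    push_cast
    rw [div_div]
  · intro n hn
    rw [f_big hv hn, mul_zero]

lemma S_two (N : ℕ) (a b : ℝ) (ha : 0 ≤ a) (hab : a ≤ b) (hb : b ≤ N) :
    |S N a b 2 - (b - a)| ≤ 1 := by
  have h : S N a b 2 = (⌊b⌋₊ : ℝ) - ⌊a⌋₊ := by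
    unfold S ind
    rw [RS_two, Finset.sum_boole]
    have : (Finset.Icc 1 N).filter (fun n : ℕ => a < n ∧ (n:ℝ) ≤ b) = Finset.Ioc ⌊a⌋₊ ⌊b⌋₊ := by
      ext n
      simp only [Finset.mem_filter, Finset.mem_Icc, Finset.mem_Ioc, Nat.floor_lt ha,
        Nat.le_floor_iff (ha.trans hab)]
      constructor
      · rintro ⟨_, h⟩; exact h
      · rintro ⟨h1, h2⟩
        refine ⟨⟨?_, ?_⟩, h1, h2⟩
        · have : (0:ℝ) < n := by linarith
          exact_mod_cast this
        · have : (n:ℝ) ≤ N := by linarith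
          exact_mod_cast this
    rw [this, Nat.card_Ioc, Nat.cast_sub (Nat.floor_le_floor hab)]
  rw [h, abs_le]
  have := Nat.floor_le ha
  have := Nat.floor_le (ha.trans hab)
  have := Nat.lt_floor_add_one a
  have := Nat.lt_floor_add_one b
  constructor <;> linarith

lemma S_nonneg (N : ℕ) (a b z : ℝ) : 0 ≤ S N a b z :=
  Finset.sum_nonneg fun n _ => by unfold ind; split_ifs <;> norm_num

lemma S_anti (N : ℕ) (a b : ℝ) {z w : ℝ} (h : z ≤ w) : S N a b w ≤ S N a b z :=
  Finset.sum_le_sum_of_subset_of_nonneg (RS_mono N h)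
    fun n _ _ => by unfold ind; split_ifs <;> norm_num

lemma two_div_log_two_pos : 0 < 2 / log 2 := div_pos two_pos (log_pos one_lt_two)

lemma two_div_log_two_le : 2 / log 2 ≤ 3 := by
  rw [div_le_iff₀ (log_pos one_lt_two)]
  have := Real.log_two_gt_d9
  linarith

lemma oddI_nonneg (n : ℕ) : 0 ≤ oddI n := by unfold oddI; split_ifs <;> norm_num
lemma evenI_nonneg (n : ℕ) : 0 ≤ evenI n := by unfold evenI; split_ifs <;> norm_num
lemma oddI_le (n : ℕ) : oddI n ≤ 1 := by unfold oddI; split_ifs <;> norm_num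
lemma evenI_le (n : ℕ) : evenI n ≤ 1 := by unfold evenI; split_ifs <;> norm_num

lemma G_nonneg (N : ℕ) (v z : ℝ) : 0 ≤ G N v z :=
  mul_nonneg two_div_log_two_pos.le (Finset.sum_nonneg fun n _ =>
    mul_nonneg (oddI_nonneg n) (f_nonneg _))

lemma g_nonneg (N : ℕ) (v z : ℝ) : 0 ≤ g N v z :=
  mul_nonneg two_div_log_two_pos.le (Finset.sum_nonneg fun n _ =>
    mul_nonneg (evenI_nonneg n) (f_nonneg _))

/-- Bound of a weighted sum by the size of a set containing the support. -/
lemma sum_wf_le (N : ℕ) (v z : ℝ) (e : ℕ → ℝ) (he1 : ∀ n, e n ≤ 1)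
    (T : Finset ℕ) (hT : ∀ n, 1 ≤ n → n ≤ N → (n:ℝ) ≤ v → Rough z n → e n ≠ 0 → n ∈ T) :
    2 / log 2 * ∑ n ∈ RS N z, e n * f (v / n) ≤ 3 * T.card := by
  have h1 : ∑ n ∈ RS N z, e n * f (v / n) ≤ T.card := by
    classical
    calc ∑ n ∈ RS N z, e n * f (v / n) ≤ ∑ n ∈ RS N z, (if n ∈ T then (1:ℝ) else 0) := by
          refine Finset.sum_le_sum fun n hn => ?_
          rw [mem_RS] at hn
          split_ifs with h
          · exact mul_le_one₀ (he1 n) (f_nonneg _) (f_le_one _)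
          · by_contra hc
            push Not at hc
            have he : e n ≠ 0 := by rintro h; rw [h] at hc; simp at hc
            have hf : f (v / n) ≠ 0 := by rintro h; rw [h] at hc; simp at hc
            have h0 : (0:ℝ) < n := by exact_mod_cast hn.1.1
            have : (n:ℝ) ≤ v := by
              by_contra hlt
              exact hf (f_of_lt (by rw [div_lt_one h0]; linarith))
            exact h (hT n hn.1.1 hn.1.2 this hn.2 he)
      _ = ((RS N z).filter (· ∈ T)).card := by rw [Finset.sum_boole]
      _ ≤ T.card := by
          have : (RS N z).filter (· ∈ T) ⊆ T := fun n hn => (Finset.mem_filter.1 hn).2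
          exact_mod_cast Finset.card_le_card this
  have h0 : (0:ℝ) ≤ T.card := by positivity
  calc _ ≤ 2 / log 2 * (T.card:ℝ) := mul_le_mul_of_nonneg_left h1 two_div_log_two_pos.le
    _ ≤ _ := mul_le_mul_of_nonneg_right two_div_log_two_le h0

end CI


namespace CI

section liou
open ArithmeticFunction

lemma liou_sum (k : ℕ) : k ≠ 0 → (liouville * (zeta : ArithmeticFunction ℤ)) k = 0 ∨
    ((liouville * (zeta : ArithmeticFunction ℤ)) k = 1 ∧ IsSquare k) := by
  have hmul : IsMultiplicative (liouville * (zeta : ArithmeticFunction ℤ)) :=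
    isMultiplicative_liouville.mul isMultiplicative_zeta.natCast
  induction k using Nat.recOnPosPrimePosCoprime with
  | prime_pow p n hp hn =>
    intro _
    rw [coe_mul_zeta_apply, Nat.sum_divisors_prime_pow hp]
    have h : ∀ i ∈ Finset.range (n+1), liouville (p ^ i) = (-1)^i := by
      intro i _
      rw [liouville_apply (pow_ne_zero _ hp.ne_zero), cardFactors_apply_prime_pow hp]
    rw [Finset.sum_congr rfl h, neg_one_geom_sum]
    rcases Nat.even_or_odd n with he | ho
    · right
      rw [if_neg (by rw [Nat.even_add_one]; simpa using he)]
      exact ⟨rfl, he.isSquare_pow p⟩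
    · left
      rw [if_pos ho.add_one]
  | zero => intro h; exact absurd rfl h
  | one =>
    intro _
    right
    exact ⟨hmul.1, ⟨1, by norm_num⟩⟩
  | coprime a b ha hb hab iha ihb =>
    intro _
    rw [hmul.2 hab]
    rcases iha (by omega) with h | ⟨h, h'⟩
    · left; rw [h]; simp
    · rcases ihb (by omega) with k | ⟨k, k'⟩
      · left; rw [k]; simp
      · right; rw [h, k]; exact ⟨by norm_num, h'.mul k'⟩

lemma liou_bound (M : ℕ) :
    |∑ n ∈ Finset.Ioc 0 M, (liouville n : ℝ) * ((M / n : ℕ) : ℝ)| ≤ Nat.sqrt M := by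
  have h := sum_Ioc_mul_zeta_eq_sum liouville M
  have h2 : ∑ n ∈ Finset.Ioc 0 M, (liouville n : ℝ) * ((M / n : ℕ) : ℝ) =
      ((∑ n ∈ Finset.Ioc 0 M, (liouville * (zeta : ArithmeticFunction ℤ)) n : ℤ) : ℝ) := by
    rw [h]; push_cast; rfl
  rw [h2]
  have h3 : 0 ≤ ∑ n ∈ Finset.Ioc 0 M, (liouville * (zeta : ArithmeticFunction ℤ)) n := by
    refine Finset.sum_nonneg fun n hn => ?_
    rcases liou_sum n (by simp at hn; omega) with h | ⟨h, _⟩ <;> rw [h]; norm_num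
  have h4 : ∑ n ∈ Finset.Ioc 0 M, (liouville * (zeta : ArithmeticFunction ℤ)) n ≤ Nat.sqrt M := by
    calc _ ≤ ∑ n ∈ Finset.Ioc 0 M, (if n ∈ (Finset.Icc 1 (Nat.sqrt M)).image (fun a => a * a)
            then (1:ℤ) else 0) := by
          refine Finset.sum_le_sum fun n hn => ?_
          rw [Finset.mem_Ioc] at hn
          rcases liou_sum n (by omega) with h | ⟨h, h'⟩
          · rw [h]; split_ifs <;> norm_num
          · rw [h, if_pos]
            obtain ⟨r, rfl⟩ := h'
            refine Finset.mem_image.2 ⟨r, Finset.mem_Icc.2 ⟨?_, Nat.le_sqrt.2 hn.2⟩, rfl⟩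
            exact Nat.pos_of_ne_zero (by rintro rfl; simp at hn)
      _ = (((Finset.Ioc 0 M).filter
            (· ∈ (Finset.Icc 1 (Nat.sqrt M)).image (fun a => a * a))).card : ℤ) := by
          rw [Finset.sum_boole]
      _ ≤ (((Finset.Icc 1 (Nat.sqrt M)).image (fun a => a * a)).card : ℤ) := by
          exact_mod_cast Finset.card_le_card fun n hn => (Finset.mem_filter.1 hn).2
      _ ≤ Nat.sqrt M := by
          have := Finset.card_image_le (s := Finset.Icc 1 (Nat.sqrt M)) (f := fun a => a * a)
          simp only [Nat.card_Icc] at this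
          exact_mod_cast this
  rw [abs_of_nonneg (by exact_mod_cast h3)]
  exact_mod_cast h4

lemma floor_div (v : ℝ) (n : ℕ) : ⌊v / n⌋₊ = ⌊v⌋₊ / n := Nat.floor_div_natCast v n

lemma f_div (v : ℝ) (n : ℕ) :
    f (v / n) = ((⌊v⌋₊ / n : ℕ) : ℝ) - 2 * ((⌊v / 2⌋₊ / n : ℕ) : ℝ) := by
  unfold f
  rw [floor_div, div_right_comm, floor_div]

lemma sum_ext (N M : ℕ) (h : M ≤ N) (e : ℕ → ℝ) :
    ∑ n ∈ Finset.Icc 1 N, e n * ((M / n : ℕ) : ℝ) = ∑ n ∈ Finset.Ioc 0 M, e n * ((M / n : ℕ) : ℝ) := by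
  symm
  apply Finset.sum_subset
  · intro n hn; simp at *; omega
  · intro n hn hn'
    simp at hn hn'
    rw [Nat.div_eq_of_lt (hn' (by omega))]; simp

lemma liou_f (N : ℕ) (v : ℝ) (hv0 : 0 ≤ v) (hv : v ≤ N) :
    |∑ n ∈ Finset.Icc 1 N, (liouville n : ℝ) * f (v / n)| ≤ 3 * √v := by
  have h1 : ∑ n ∈ Finset.Icc 1 N, (liouville n : ℝ) * f (v / n) =
    ∑ n ∈ Finset.Ioc 0 ⌊v⌋₊, (liouville n : ℝ) * ((⌊v⌋₊ / n : ℕ) : ℝ)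
    - 2 * ∑ n ∈ Finset.Ioc 0 ⌊v/2⌋₊, (liouville n : ℝ) * ((⌊v/2⌋₊ / n : ℕ) : ℝ) := by
    rw [← sum_ext N ⌊v⌋₊, ← sum_ext N ⌊v/2⌋₊, Finset.mul_sum, ← Finset.sum_sub_distrib]
    · refine Finset.sum_congr rfl fun n _ => ?_
      rw [f_div]; ring
    · exact Nat.floor_le_of_le (by linarith)
    · exact Nat.floor_le_of_le hv
  rw [h1]
  have hb : ∀ u : ℝ, 0 ≤ u → (Nat.sqrt ⌊u⌋₊ : ℝ) ≤ √u := by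
    intro u hu
    apply Real.le_sqrt_of_sq_le
    have : Nat.sqrt ⌊u⌋₊ ^ 2 ≤ ⌊u⌋₊ := Nat.sqrt_le' _
    have : ((Nat.sqrt ⌊u⌋₊ : ℝ)) ^ 2 ≤ ⌊u⌋₊ := by exact_mod_cast this
    exact this.trans (Nat.floor_le hu)
  have b1 := (liou_bound ⌊v⌋₊).trans (hb v hv0)
  have b2 := (liou_bound ⌊v/2⌋₊).trans (hb (v/2) (by linarith))
  have b3 : √(v/2) ≤ √v := Real.sqrt_le_sqrt (by linarith)
  rw [abs_le] at *
  constructor <;> linarith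

end liou

lemma alt_aux (M : ℕ) : ∑ j ∈ Finset.range (2*M), (-1:ℝ)^j / (j+1) =
    ∑ j ∈ Finset.range M, 1 / ((M:ℝ) + j + 1) := by
  induction M with
  | zero => simp
  | succ m ih =>
    rw [show 2*(m+1) = 2*m+1+1 by ring, Finset.sum_range_succ, Finset.sum_range_succ, ih,
      Finset.sum_range_succ]
    have h : ∑ j ∈ Finset.range m, 1 / (((m+1:ℕ):ℝ) + j + 1) =
        ∑ j ∈ Finset.range m, 1 / ((m:ℝ) + (j+1:ℕ) + 1) := by
      refine Finset.sum_congr rfl fun j _ => ?_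
      push_cast; ring_nf
    have h2 := Finset.sum_range_succ' (fun j : ℕ => 1 / ((m:ℝ) + j + 1)) m
    rw [Finset.sum_range_succ] at h2
    rw [h]
    rw [pow_succ, pow_mul]
    push_cast at *
    norm_num at *
    have e1 : (2*(m:ℝ)+1) ≠ 0 := by positivity
    have e2 : (2*(m:ℝ)+1+1) ≠ 0 := by positivity
    have e3 : ((m:ℝ)+1) ≠ 0 := by positivity
    have e4 : ((m:ℝ)+m+1) ≠ 0 := by positivity
    have : (m:ℝ) + 1 + m + 1 ≠ 0 := by positivity
    have e5 : ((m:ℝ)+1)⁻¹ = 2 * (2*(m:ℝ)+1+1)⁻¹ := by field_simp; ring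
    have e6 : ((m:ℝ) + 1 + m + 1)⁻¹ = (2*(m:ℝ)+1+1)⁻¹ := by congr 1; ring
    have e7 : ((m:ℝ)+m+1)⁻¹ = (2*(m:ℝ)+1)⁻¹ := by congr 1; ring
    rw [e6]
    rw [e5, e7] at h2
    ring_nf at h2 ⊢
    linarith

lemma log_lower (x : ℝ) (hx : 0 < x) : 1 / (x+1) ≤ log (x+1) - log x := by
  rw [← Real.log_div (by positivity) (by positivity)]
  have := Real.one_sub_inv_le_log_of_pos (x := (x+1)/x) (by positivity)
  refine le_trans (le_of_eq ?_) this
  field_simp; ring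

lemma log_upper (x : ℝ) (hx : 0 < x) : log (x+1) - log x ≤ 1 / x := by
  rw [← Real.log_div (by positivity) (by positivity)]
  have := Real.log_le_sub_one_of_pos (x := (x+1)/x) (by positivity)
  refine le_trans this (le_of_eq ?_)
  field_simp; ring

lemma alt_even (M : ℕ) (hM : 1 ≤ M) :
    |∑ j ∈ Finset.range (2*M), (-1:ℝ)^j / (j+1) - log 2| ≤ 1 / (2*M+1) := by
  rw [alt_aux]
  have hM' : (1:ℝ) ≤ M := by exact_mod_cast hM
  have key : ∀ m : ℕ, log (M + m + 1) - log (M+1) ≤ ∑ j ∈ Finset.range m, 1 / ((M:ℝ) + j + 1) ∧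
     ∑ j ∈ Finset.range m, 1 / ((M:ℝ) + j + 1) ≤ log (M + m) - log M := by
    intro m
    induction m with
    | zero => simp
    | succ m ih =>
      rw [Finset.sum_range_succ]
      have h1 := log_lower (M + m) (by positivity)
      have h2 := log_upper (M + m + 1) (by positivity)
      push_cast
      rw [← add_assoc]
      constructor <;> linarith [ih.1, ih.2]
  obtain ⟨k1, k2⟩ := key M
  have e1 : log ((M:ℝ) + M) - log M = log 2 := by
    rw [← two_mul, Real.log_mul (by norm_num) (by positivity)]; ring
  have e2 : log (M+M+1+1:ℝ) - log (M+1) = log 2 := by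
    rw [show (M+M+1+1:ℝ) = 2 * (M+1) by ring, Real.log_mul (by norm_num) (by positivity)]; ring
  have h2 := log_upper (M + M + 1) (by positivity)
  have e3 : (2*M+1:ℝ) = M+M+1 := by ring
  rw [abs_le, e3]
  have : (0:ℝ) ≤ 1 / (M+M+1) := by positivity
  constructor <;> linarith

lemma alt_bound (K : ℕ) (hK : 1 ≤ K) :
    |∑ j ∈ Finset.range K, (-1:ℝ)^j / (j+1) - log 2| ≤ 2 / K := by
  have hK' : (1:ℝ) ≤ K := by exact_mod_cast hK
  rcases Nat.even_or_odd' K with ⟨M, rfl | rfl⟩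
  · refine (alt_even M (by omega)).trans ?_
    push_cast at *
    rw [div_le_div_iff₀ (by positivity) (by positivity)]; linarith
  · rcases Nat.eq_zero_or_pos M with rfl | hM
    · simp
      have := Real.log_two_lt_d9
      have := Real.log_two_gt_d9
      rw [abs_le]; constructor <;> linarith
    · rw [Finset.sum_range_succ]
      have := alt_even M hM
      rw [pow_mul]
      push_cast
      norm_num at *
      rw [abs_le] at *
      have h2 : (0:ℝ) ≤ (2*(M:ℝ)+1)⁻¹ := by positivity
      rw [div_eq_mul_inv]
      constructor <;> linarith

lemma mod_two_alt (m K : ℕ) (h : m ≤ K) :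
    ((m % 2 : ℕ) : ℝ) = ∑ j ∈ Finset.range K, (-1:ℝ)^j * (if j + 1 ≤ m then 1 else 0) := by
  have h1 : ∑ j ∈ Finset.range K, (-1:ℝ)^j * (if j + 1 ≤ m then 1 else 0) =
     ∑ j ∈ Finset.range m, (-1:ℝ)^j := by
    simp only [mul_ite, mul_one, mul_zero]
    rw [← Finset.sum_filter]
    congr 1
    ext j; simp; omega
  rw [h1, neg_one_geom_sum]
  rcases Nat.even_or_odd m with he | ho
  · rw [if_pos he, Nat.even_iff.1 he]; simp
  · rw [if_neg (Nat.not_even_iff_odd.2 ho), Nat.odd_iff.1 ho]; simp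

lemma T_bound (N : ℕ) (v : ℝ) (hv1 : 1 ≤ v) (hv : v ≤ N) :
    |∑ n ∈ Finset.Icc 1 N, f (v / n) - v * log 2| ≤ 8 * √v := by
  set K := ⌊√v⌋₊ with hK
  have hs1 : 1 ≤ √v := by rw [Real.one_le_sqrt]; exact hv1
  have hss : √v * √v = v := Real.mul_self_sqrt (by linarith)
  have hKle : (K:ℝ) ≤ √v := Nat.floor_le (by positivity)
  have hKlt : √v < K + 1 := Nat.lt_floor_add_one _
  have hK1 : 1 ≤ K := Nat.le_floor (by simpa using hs1)
  have hK1' : (1:ℝ) ≤ K := by exact_mod_cast hK1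
  have hKN : K ≤ N := by
    have : (K:ℝ) ≤ N := by nlinarith
    exact_mod_cast this
  have hsplit : ∑ n ∈ Finset.Icc 1 N, f (v / n) =
      ∑ n ∈ Finset.Icc 1 K, f (v / n) + ∑ n ∈ Finset.Ioc K N, f (v / n) := by
    rw [← Finset.sum_union]
    · congr 1
      ext n; simp; omega
    · rw [Finset.disjoint_left]; intro n h1 h2; simp at h1 h2; omega
  have hA0 : 0 ≤ ∑ n ∈ Finset.Icc 1 K, f (v / n) := Finset.sum_nonneg fun n _ => f_nonneg _
  have hA1 : ∑ n ∈ Finset.Icc 1 K, f (v / n) ≤ K := by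
    refine (Finset.sum_le_sum (g := fun _ => (1:ℝ)) fun n _ => f_le_one _).trans ?_
    simp
  have hB : ∑ n ∈ Finset.Ioc K N, f (v / n) =
      ∑ j ∈ Finset.range K, (-1:ℝ)^j * ((⌊v / ((j+1:ℕ):ℝ)⌋₊ : ℝ) - K) := by
    have h1 : ∀ n ∈ Finset.Ioc K N, f (v / n) =
        ∑ j ∈ Finset.range K, (-1:ℝ)^j * (if (n:ℝ) ≤ v / ((j+1:ℕ):ℝ) then 1 else 0) := by
      intro n hn
      rw [Finset.mem_Ioc] at hn
      have hn1 : ((K:ℝ) + 1) ≤ n := by exact_mod_cast hn.1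
      have hn0 : (0:ℝ) < n := by linarith
      rw [f_eq, mod_two_alt _ K]
      · refine Finset.sum_congr rfl fun j _ => ?_
        congr 1
        have : (j + 1 ≤ ⌊v / (n:ℝ)⌋₊) ↔ ((n:ℝ) ≤ v / ((j+1:ℕ):ℝ)) := by
          rw [Nat.le_floor_iff (by positivity), le_div_iff₀ hn0, le_div_iff₀ (by positivity), mul_comm]
        simp only [this]
      · have : v / n < K + 1 := by
          rw [div_lt_iff₀ hn0]; nlinarith
        rw [← Nat.lt_succ_iff, Nat.floor_lt (by positivity)]
        push_cast; exact this
    rw [Finset.sum_congr rfl h1, Finset.sum_comm]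
    refine Finset.sum_congr rfl fun j hj => ?_
    rw [← Finset.mul_sum, Finset.sum_boole]
    congr 1
    have hjK : ((j:ℝ)+1) ≤ K := by exact_mod_cast Finset.mem_range.1 hj
    have hle : K ≤ ⌊v / ((j+1:ℕ):ℝ)⌋₊ := by
      apply Nat.le_floor
      rw [le_div_iff₀ (by positivity)]; push_cast; nlinarith
    rw [← Nat.cast_sub hle, ← Nat.card_Ioc]
    congr 2
    ext n
    simp only [Finset.mem_filter, Finset.mem_Ioc, Nat.le_floor_iff (show 0 ≤ v / ((j+1:ℕ):ℝ) by positivity)]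
    constructor
    · rintro ⟨h1, h2⟩; exact ⟨h1.1, h2⟩
    · rintro ⟨h1, h2⟩
      refine ⟨⟨h1, ?_⟩, h2⟩
      have h3 : v / ((j+1:ℕ):ℝ) ≤ v := div_le_self (by linarith) (by push_cast; linarith [Nat.cast_nonneg (α := ℝ) j])
      exact_mod_cast (h2.trans h3).trans hv
  have hC : |∑ j ∈ Finset.range K, (-1:ℝ)^j * ((⌊v / ((j+1:ℕ):ℝ)⌋₊ : ℝ) - K)
      - (v * ∑ j ∈ Finset.range K, (-1:ℝ)^j / (j+1) - K * ∑ j ∈ Finset.range K, (-1:ℝ)^j)| ≤ K := by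
    rw [Finset.mul_sum, Finset.mul_sum, ← Finset.sum_sub_distrib, ← Finset.sum_sub_distrib]
    refine (Finset.abs_sum_le_sum_abs _ _).trans ?_
    refine (Finset.sum_le_sum (g := fun _ => (1:ℝ)) fun j _ => ?_).trans (by simp)
    have : (-1:ℝ)^j * ((⌊v / ((j+1:ℕ):ℝ)⌋₊ : ℝ) - K) - (v * ((-1:ℝ)^j / (j+1)) - K * (-1:ℝ)^j)
      = (-1:ℝ)^j * ((⌊v / ((j+1:ℕ):ℝ)⌋₊ : ℝ) - v / ((j+1:ℕ):ℝ)) := by push_cast; ring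
    rw [this, abs_mul, abs_neg_one_pow, one_mul, abs_le]
    have h1 := Nat.floor_le (show 0 ≤ v / ((j+1:ℕ):ℝ) by positivity)
    have h2 := Nat.lt_floor_add_one (v / ((j+1:ℕ):ℝ))
    constructor <;> linarith
  have hD := alt_bound K hK1
  have hE : v * |∑ j ∈ Finset.range K, (-1:ℝ)^j / (j+1) - log 2| ≤ 4 * √v := by
    have : v * |∑ j ∈ Finset.range K, (-1:ℝ)^j / (j+1) - log 2| ≤ v * (2 / K) :=
      mul_le_mul_of_nonneg_left hD (by linarith)
    refine this.trans ?_
    rw [mul_div_assoc', div_le_iff₀ (by linarith)]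
    nlinarith
  rw [← abs_of_nonneg (show 0 ≤ v by linarith), ← abs_mul, abs_of_nonneg (show 0 ≤ v by linarith)] at hE
  have hF : ∑ j ∈ Finset.range K, (-1:ℝ)^j = 0 ∨ ∑ j ∈ Finset.range K, (-1:ℝ)^j = 1 := by
    rw [neg_one_geom_sum]; split_ifs <;> simp
  rw [hsplit, hB]
  rw [mul_sub] at hE
  rw [abs_le] at *
  rcases hF with hF | hF <;> rw [hF] at hC <;> constructor <;> linarith [hE.1, hE.2, hC.1, hC.2]

lemma liou_split (n : ℕ) (hn : n ≠ 0) :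
    oddI n = (1 - (ArithmeticFunction.liouville n : ℝ)) / 2 ∧
    evenI n = (1 + (ArithmeticFunction.liouville n : ℝ)) / 2 := by
  unfold oddI evenI
  rw [ArithmeticFunction.liouville_apply hn]
  rcases Nat.even_or_odd (ArithmeticFunction.cardFactors n) with he | ho
  · rw [if_neg (Nat.not_odd_iff_even.2 he), if_pos he, he.neg_one_pow]; norm_num
  · rw [if_pos ho, if_neg (Nat.not_even_iff_odd.2 ho), ho.neg_one_pow]; norm_num

lemma Gg_two (N : ℕ) (v : ℝ) (hv1 : 1 ≤ v) (hv : v ≤ N) :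
    |G N v 2 - v| ≤ 20 * √v ∧ |g N v 2 - v| ≤ 20 * √v := by
  have h1 := T_bound N v hv1 hv
  have h2 := liou_f N v (by linarith) hv
  have e1 : G N v 2 = (1 / log 2) * (∑ n ∈ Finset.Icc 1 N, f (v / n) -
      ∑ n ∈ Finset.Icc 1 N, (ArithmeticFunction.liouville n : ℝ) * f (v / n)) := by
    unfold G
    rw [RS_two, ← Finset.sum_sub_distrib, Finset.mul_sum, Finset.mul_sum]
    refine Finset.sum_congr rfl fun n hn => ?_
    rw [(liou_split n (by simp at hn; omega)).1]; ring
  have e2 : g N v 2 = (1 / log 2) * (∑ n ∈ Finset.Icc 1 N, f (v / n) +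
      ∑ n ∈ Finset.Icc 1 N, (ArithmeticFunction.liouville n : ℝ) * f (v / n)) := by
    unfold g
    rw [RS_two, ← Finset.sum_add_distrib, Finset.mul_sum, Finset.mul_sum]
    refine Finset.sum_congr rfl fun n hn => ?_
    rw [(liou_split n (by simp at hn; omega)).2]; ring
  set A := ∑ n ∈ Finset.Icc 1 N, f (v / n)
  set B := ∑ n ∈ Finset.Icc 1 N, (ArithmeticFunction.liouville n : ℝ) * f (v / n)
  have hl : 0 < log 2 := log_pos one_lt_two
  have hl2 := Real.log_two_gt_d9
  have hs : 0 ≤ √v := Real.sqrt_nonneg v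
  have key : ∀ X : ℝ, |X - v * log 2| ≤ 11 * √v → |(1 / log 2) * X - v| ≤ 20 * √v := by
    intro X hX
    have : (1 / log 2) * X - v = (1 / log 2) * (X - v * log 2) := by field_simp
    rw [this, abs_mul, abs_of_pos (by positivity), div_mul_eq_mul_div, one_mul, div_le_iff₀ hl]
    nlinarith
  rw [e1, e2]
  constructor <;> apply key <;> rw [abs_le] at * <;> constructor <;> linarith

end CI


namespace CI

open MeasureTheory intervalIntegral in
lemma tail_sum (w : ℝ → ℝ) (B K : ℝ) (hK : 0 ≤ K) (x a : ℕ → ℝ) :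
    ∀ (k : ℕ) (s : Finset ℕ) (_ : s.card = k) (A : ℝ) (φ : ℝ → ℝ) (_ : A ≤ B)
    (_ : ∀ i ∈ s, A ≤ x i ∧ x i ≤ B) (_ : ∀ i ∈ s, 0 ≤ a i)
    (_ : ContinuousOn w (Set.Icc A B)) (_ : ∀ t ∈ Set.Icc A B, 0 ≤ w t)
    (_ : ∀ t ∈ Set.Icc A B, ∑ i ∈ s with t ≤ x i, a i ≤ (∫ y in t..B, w y) + K)
    (_ : MonotoneOn φ (Set.Icc A B)) (_ : ∀ t ∈ Set.Icc A B, 0 ≤ φ t),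
    ∑ i ∈ s, a i * φ (x i) ≤ (∫ y in A..B, w y * φ y) + K * φ B := by
  intro k
  induction k with
  | zero =>
    intro s hs A φ hAB _ _ _ hw0 _ _ hφ0
    rw [Finset.card_eq_zero] at hs
    subst hs
    have h1 : 0 ≤ ∫ y in A..B, w y * φ y :=
      intervalIntegral.integral_nonneg hAB fun u hu => mul_nonneg (hw0 u hu) (hφ0 u hu)
    have h2 := mul_nonneg hK (hφ0 B ⟨hAB, le_refl _⟩)
    simp only [Finset.sum_empty]; linarith
  | succ k ih =>
    intro s hs A φ hAB hx ha hwc hw0 ht hφm hφ0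
    have hne : s.Nonempty := Finset.card_pos.1 (by omega)
    obtain ⟨i0, hi0, hmin⟩ := Finset.exists_min_image s x hne
    obtain ⟨hA0, h0B⟩ := hx i0 hi0
    have hsub : Set.Icc (x i0) B ⊆ Set.Icc A B := Set.Icc_subset_Icc_left hA0
    have hmem0 : x i0 ∈ Set.Icc (x i0) B := ⟨le_refl _, h0B⟩
    have hmemB : B ∈ Set.Icc (x i0) B := ⟨h0B, le_refl _⟩
    have IH := ih (s.erase i0) (by rw [Finset.card_erase_of_mem hi0]; omega) (x i0)
      (fun t => φ t - φ (x i0)) h0B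
      (fun i hi => ⟨hmin i (Finset.mem_of_mem_erase hi), (hx i (Finset.mem_of_mem_erase hi)).2⟩)
      (fun i hi => ha i (Finset.mem_of_mem_erase hi))
      (hwc.mono hsub) (fun t h => hw0 t (hsub h))
      (fun t h => by
        refine le_trans ?_ (ht t (hsub h))
        refine Finset.sum_le_sum_of_subset_of_nonneg ?_ ?_
        · intro i hi
          rw [Finset.mem_filter] at *
          exact ⟨Finset.mem_of_mem_erase hi.1, hi.2⟩
        · intro i hi _
          exact ha i (Finset.mem_filter.1 hi).1)
      (fun p hp q hq hpq => by
        have := hφm (hsub hp) (hsub hq) hpq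
        simpa using this)
      (fun t h => by
        have := hφm (hsub hmem0) (hsub h) h.1
        simpa using this)
    have h2 := ht (x i0) (hsub hmem0)
    rw [Finset.filter_true_of_mem (fun i hi => hmin i hi)] at h2
    have h3 : ∑ i ∈ s, a i * φ (x i) =
        ∑ i ∈ s.erase i0, a i * (φ (x i) - φ (x i0)) + φ (x i0) * ∑ i ∈ s, a i := by
      have : ∑ i ∈ s.erase i0, a i * (φ (x i) - φ (x i0)) = ∑ i ∈ s, a i * (φ (x i) - φ (x i0)) := by
        apply Finset.sum_erase; simp
      rw [this, Finset.mul_sum, ← Finset.sum_add_distrib]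
      refine Finset.sum_congr rfl fun i _ => by ring
    have hintg : ∀ A', A' ∈ Set.Icc A B → ∀ B', A' ≤ B' → B' ∈ Set.Icc A B →
        IntervalIntegrable (fun y => w y * φ y) volume A' B' := by
      intro A' hA' B' hAB' hB'
      have hsub' : Set.uIcc A' B' ⊆ Set.Icc A B := by
        rw [Set.uIcc_of_le hAB']; exact Set.Icc_subset_Icc hA'.1 hB'.2
      exact (hφm.mono hsub').intervalIntegrable.continuousOn_mul (hwc.mono hsub')
    have hi1 := hintg (x i0) (hsub hmem0) B h0B (hsub hmemB)
    have hi2 : IntervalIntegrable w volume (x i0) B := by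
      apply ContinuousOn.intervalIntegrable
      rw [Set.uIcc_of_le h0B]; exact hwc.mono hsub
    have e1 : ∫ y in (x i0)..B, w y * (φ y - φ (x i0)) =
        (∫ y in (x i0)..B, w y * φ y) - (∫ y in (x i0)..B, w y) * φ (x i0) := by
      rw [← intervalIntegral.integral_mul_const, ← intervalIntegral.integral_sub hi1 (hi2.mul_const _)]
      congr 1; ext y; ring
    have e2 : (∫ y in A..B, w y * φ y) = (∫ y in A..(x i0), w y * φ y) + ∫ y in (x i0)..B, w y * φ y := by
      rw [intervalIntegral.integral_add_adjacent_intervals _ hi1]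
      exact hintg A ⟨le_refl _, hAB⟩ (x i0) hA0 (hsub hmem0)
    have e3 : 0 ≤ ∫ y in A..(x i0), w y * φ y :=
      intervalIntegral.integral_nonneg hA0 fun u hu => mul_nonneg (hw0 u ⟨hu.1, hu.2.trans h0B⟩)
        (hφ0 u ⟨hu.1, hu.2.trans h0B⟩)
    have h4 := mul_le_mul_of_nonneg_left h2 (hφ0 (x i0) (hsub hmem0))
    rw [h3, e2]
    rw [e1] at IH
    nlinarith

lemma head_sum (w : ℝ → ℝ) (A K : ℝ) (hK : 0 ≤ K) (x a : ℕ → ℝ) 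
    (s : Finset ℕ) (B : ℝ) (φ : ℝ → ℝ) (hAB : A ≤ B)
    (hx : ∀ i ∈ s, A ≤ x i ∧ x i ≤ B) (ha : ∀ i ∈ s, 0 ≤ a i)
    (hw : ContinuousOn w (Set.Icc A B)) (hw0 : ∀ t ∈ Set.Icc A B, 0 ≤ w t)
    (h : ∀ t ∈ Set.Icc A B, ∑ i ∈ s with x i ≤ t, a i ≤ (∫ y in A..t, w y) + K)
    (hm : AntitoneOn φ (Set.Icc A B)) (hφ0 : ∀ t ∈ Set.Icc A B, 0 ≤ φ t) :
    ∑ i ∈ s, a i * φ (x i) ≤ (∫ y in A..B, w y * φ y) + K * φ A := by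
  have hmem : ∀ t ∈ Set.Icc (-B) (-A), -t ∈ Set.Icc A B := fun t ht =>
    ⟨by linarith [ht.2], by linarith [ht.1]⟩
  have := tail_sum (fun y => w (-y)) (-A) K hK (fun i => - x i) a s.card s rfl (-B)
    (fun y => φ (-y)) (by linarith) (fun i hi => ⟨by linarith [(hx i hi).2], by linarith [(hx i hi).1]⟩)
    ha (hw.comp continuous_neg.continuousOn hmem) (fun t ht => hw0 _ (hmem t ht))
    (fun t ht => by
      have := h (-t) (hmem t ht)
      rw [intervalIntegral.integral_comp_neg (fun y => w y), neg_neg]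
      simpa only [le_neg] using this)
    (fun p hp q hq hpq => hm (hmem q hq) (hmem p hp) (by linarith))
    (fun t ht => hφ0 _ (hmem t ht))
  rw [intervalIntegral.integral_comp_neg (fun y => w y * φ y), neg_neg, neg_neg] at this
  simpa using this

section mertens
open ArithmeticFunction hiding log

lemma logfact (n : ℕ) : ∑ m ∈ Finset.Ioc 0 n, log m =
    ∑ d ∈ Finset.Ioc 0 n, vonMangoldt d * ((n / d : ℕ) : ℝ) := by
  rw [← sum_Ioc_mul_zeta_eq_sum, vonMangoldt_mul_zeta]
  simp [ArithmeticFunction.log_apply]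

lemma logfact_lower (n : ℕ) : n * log n - n ≤ ∑ m ∈ Finset.Ioc 0 n, log m := by
  induction n with
  | zero => simp
  | succ n ih =>
    rw [Finset.sum_Ioc_succ_top (by omega)]
    rcases Nat.eq_zero_or_pos n with rfl | hn
    · simp
    · have h0 : (0:ℝ) < n := by exact_mod_cast hn
      have := log_upper n h0
      push_cast
      have h2 : n * (log (n+1) - log n) ≤ 1 := by
        calc _ ≤ (n:ℝ) * (1/n) := mul_le_mul_of_nonneg_left this h0.le
          _ = 1 := by field_simp
      nlinarith

lemma logfact_upper (n : ℕ) : ∑ m ∈ Finset.Ioc 0 n, log m ≤ n * log n := by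
  calc _ ≤ ∑ m ∈ Finset.Ioc 0 n, log n := by
        refine Finset.sum_le_sum fun m hm => ?_
        rw [Finset.mem_Ioc] at hm
        apply Real.log_le_log
        · exact_mod_cast hm.1
        · exact_mod_cast hm.2
    _ = _ := by simp

/-- The first Mertens theorem for von Mangoldt. -/
lemma mertens1 (n : ℕ) (hn : 1 ≤ n) :
    |∑ d ∈ Finset.Ioc 0 n, vonMangoldt d / d - log n| ≤ log 4 + 4 := by
  have h0 : (0:ℝ) < n := by exact_mod_cast hn
  have h1 := logfact n
  have h2 := logfact_lower n
  have h3 := logfact_upper n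
  have hpsi : ∑ d ∈ Finset.Ioc 0 n, vonMangoldt d ≤ (log 4 + 4) * n := by
    have := Chebyshev.psi_le_const_mul_self (x := (n:ℝ)) h0.le
    unfold Chebyshev.psi at this
    simpa using this
  have hup : ∑ d ∈ Finset.Ioc 0 n, vonMangoldt d * ((n / d : ℕ) : ℝ) ≤
      n * ∑ d ∈ Finset.Ioc 0 n, vonMangoldt d / d := by
    rw [Finset.mul_sum]
    refine Finset.sum_le_sum fun d _ => ?_
    have : ((n / d : ℕ) : ℝ) ≤ n / d := Nat.cast_div_le
    calc _ ≤ vonMangoldt d * (n / d : ℝ) := mul_le_mul_of_nonneg_left this vonMangoldt_nonneg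
      _ = _ := by ring
  have hlo : n * ∑ d ∈ Finset.Ioc 0 n, vonMangoldt d / d - ∑ d ∈ Finset.Ioc 0 n, vonMangoldt d ≤
      ∑ d ∈ Finset.Ioc 0 n, vonMangoldt d * ((n / d : ℕ) : ℝ) := by
    rw [Finset.mul_sum, ← Finset.sum_sub_distrib]
    refine Finset.sum_le_sum fun d hd => ?_
    have hd0 : (0:ℝ) < d := by exact_mod_cast (Finset.mem_Ioc.1 hd).1
    have : (n / d : ℝ) - 1 ≤ ((n / d : ℕ) : ℝ) := by
      have := Nat.lt_floor_add_one ((n:ℝ) / d)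
      rw [Nat.floor_div_natCast, Nat.floor_natCast] at this
      linarith
    calc _ = vonMangoldt d * (n / d - 1 : ℝ) := by ring
      _ ≤ _ := mul_le_mul_of_nonneg_left this vonMangoldt_nonneg
  have hl4 : 0 < log 4 := log_pos (by norm_num)
  rw [abs_le]
  constructor
  · have : n * (log n - 1) ≤ n * ∑ d ∈ Finset.Ioc 0 n, vonMangoldt d / d := by linarith
    have := le_of_mul_le_mul_left this h0
    linarith
  · have : n * ∑ d ∈ Finset.Ioc 0 n, vonMangoldt d / d ≤ n * (log n + (log 4 + 4)) := by linarith
    have := le_of_mul_le_mul_left this h0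
    linarith

open Classical in
/-- primes in `[x,z]` -/
noncomputable def PI (x z : ℝ) : Finset ℕ := (Finset.range (⌊z⌋₊+1)).filter (fun p => p.Prime ∧ x ≤ p)

lemma mem_PI {x z : ℝ} (hz : 0 ≤ z) {p : ℕ} : p ∈ PI x z ↔ p.Prime ∧ x ≤ p ∧ (p:ℝ) ≤ z := by
  simp only [PI, Finset.mem_filter, Finset.mem_range, Nat.lt_succ_iff, Nat.le_floor_iff hz]
  tauto

lemma sum_logp (x z : ℝ) (hx : 2 ≤ x) (hxz : x ≤ z) :
    ∑ p ∈ PI x z, log p / p ≤ log z - log x + 13 := by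
  have hz : 0 ≤ z := by linarith
  set m := ⌈x⌉₊ - 1
  set n := ⌊z⌋₊
  have hm1 : 1 ≤ m := by
    have : 2 ≤ ⌈x⌉₊ := by
      have := Nat.le_ceil x
      have : (2:ℝ) ≤ ⌈x⌉₊ := by linarith
      exact_mod_cast this
    omega
  have hmx : (m:ℝ) + 1 = ⌈x⌉₊ := by
    have : m + 1 = ⌈x⌉₊ := by omega
    exact_mod_cast this
  have hx1 := Nat.le_ceil x
  have hx2 := Nat.ceil_lt_add_one (show 0 ≤ x by linarith)
  have hmn : m ≤ n := by
    apply Nat.le_floor; linarith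
  have hn1 : 1 ≤ n := hm1.trans hmn
  have h1 : ∑ p ∈ PI x z, log p / p ≤ ∑ d ∈ Finset.Ioc m n, vonMangoldt d / d := by
    calc _ = ∑ p ∈ PI x z, vonMangoldt p / p := by
          refine Finset.sum_congr rfl fun p hp => ?_
          rw [vonMangoldt_apply_prime ((mem_PI hz).1 hp).1]
      _ ≤ _ := by
          refine Finset.sum_le_sum_of_subset_of_nonneg ?_ fun d _ _ => by
            have : 0 ≤ vonMangoldt d := vonMangoldt_nonneg
            positivity
          intro p hp
          rw [mem_PI hz] at hp
          rw [Finset.mem_Ioc]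
          constructor
          · have : ⌈x⌉₊ ≤ p := Nat.ceil_le.2 hp.2.1
            omega
          · exact Nat.le_floor hp.2.2
  have h2 : ∑ d ∈ Finset.Ioc m n, vonMangoldt d / d = ∑ d ∈ Finset.Ioc 0 n, vonMangoldt d / d
      - ∑ d ∈ Finset.Ioc 0 m, vonMangoldt d / (d:ℝ) := by
    rw [eq_sub_iff_add_eq, add_comm]
    exact Finset.sum_Ioc_consecutive _ (by omega) hmn
  have h3 := (abs_le.1 (mertens1 n hn1)).2
  have h4 := (abs_le.1 (mertens1 m hm1)).1
  have hm0 : (1:ℝ) ≤ m := by exact_mod_cast hm1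
  have hn0 : (1:ℝ) ≤ n := by exact_mod_cast hn1
  have h5 : log n ≤ log z := Real.log_le_log (by linarith) (Nat.floor_le hz)
  have h6 : log x ≤ log m + log 2 := by
    rw [← Real.log_mul (by linarith) (by norm_num)]
    apply Real.log_le_log (by linarith)
    linarith
  have h7 : log 4 = 2 * log 2 := by
    rw [show (4:ℝ) = 2^2 by norm_num, Real.log_pow]; norm_num
  have := Real.log_two_lt_d9
  rw [h2] at h1
  linarith

end mertens

lemma recip1 (x z : ℝ) (hx : 2 ≤ x) (hxz : x ≤ z) :
    ∑ p ∈ PI x z, (1:ℝ) / p ≤ (∫ y in (log x)..(log z), 1 / y) + 13 / log x := by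
  have hz : 0 ≤ z := by linarith
  have hlx : 0 < log x := log_pos (by linarith)
  have hlxz : log x ≤ log z := Real.log_le_log (by linarith) hxz
  have := head_sum (fun _ => 1) (log x) 13 (by norm_num) (fun p => log p) (fun p => log p / p)
    (PI x z) (log z) (fun y => 1 / y) hlxz
    (fun p hp => by
      rw [mem_PI hz] at hp
      exact ⟨Real.log_le_log (by linarith) hp.2.1,
        Real.log_le_log (by linarith) hp.2.2⟩)
    (fun p hp => by
      have : 0 ≤ log p := Real.log_natCast_nonneg p
      positivity)
    continuousOn_const (fun _ _ => zero_le_one)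
    (fun t ht => by
      have hxt : x ≤ exp t := by rw [← Real.log_le_iff_le_exp (by linarith)]; exact ht.1
      have h1 := sum_logp x (exp t) hx hxt
      rw [Real.log_exp] at h1
      simp only [intervalIntegral.integral_const, smul_eq_mul, mul_one]
      refine le_trans (Finset.sum_le_sum_of_subset_of_nonneg ?_ ?_) h1
      · intro p hp
        rw [Finset.mem_filter, mem_PI hz] at hp
        rw [mem_PI (Real.exp_nonneg t)]
        refine ⟨hp.1.1, hp.1.2.1, ?_⟩
        rw [← Real.log_le_iff_le_exp (by linarith [hp.1.2.1])]; exact hp.2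
      · intro p _ _
        have : 0 ≤ log p := Real.log_natCast_nonneg p
        positivity)
    (fun p hp q hq hpq => one_div_le_one_div_of_le (by linarith [hp.1]) hpq)
    (fun t ht => by have := ht.1; have : 0 < t := by linarith
                    positivity)
  simp only [one_mul] at this
  refine le_trans (le_of_eq ?_) (this.trans (le_of_eq (by ring)))
  refine Finset.sum_congr rfl fun p hp => ?_
  rw [mem_PI hz] at hp
  have : 0 < log p := log_pos (by linarith [hp.2.1])
  field_simp

lemma int_inv_sq (a b : ℝ) (ha : 0 < a) (hab : a ≤ b) :
    ∫ y in a..b, 1 / y^2 = 1 / a - 1 / b := by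
  have h : ∀ y ∈ Set.uIcc a b, HasDerivAt (fun y : ℝ => - (1 / y)) (1 / y^2) y := by
    intro y hy
    rw [Set.uIcc_of_le hab] at hy
    have hy0 : y ≠ 0 := by linarith [hy.1]
    have := (hasDerivAt_inv hy0).neg
    simp only [one_div]
    convert! this using 1
    simp
  rw [intervalIntegral.integral_eq_sub_of_hasDerivAt h]
  · ring
  · apply ContinuousOn.intervalIntegrable
    rw [Set.uIcc_of_le hab]
    intro y hy
    have hy0 : y ≠ 0 := by linarith [hy.1]
    have : y^2 ≠ 0 := pow_ne_zero _ hy0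
    exact ContinuousAt.continuousWithinAt (by fun_prop (disch := assumption))

lemma recip2 : ∃ C : ℝ, 1 ≤ C ∧ ∀ x z : ℝ, 2 ≤ x → x ≤ z →
    ∑ p ∈ PI x z, (1:ℝ) / p ≤ (∫ y in (log x)..(log z), (1 / y + C / y^2)) + min (1/2) (C / log z) := by
  set K : ℝ := 13
  refine ⟨exp (4*K) * (4 * K^2) + K, ?_, ?_⟩
  · have : 0 < exp (4*K) := exp_pos _
    have : 0 ≤ exp (4*K) * (4 * K^2) := by positivity
    simp only [K] at *; linarith
  intro x z hx hxz
  set C := exp (4*K) * (4 * K^2) + K with hC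
  have hE : 0 ≤ exp (4*K) * (4 * K^2) := by positivity
  have hCK : K ≤ C := by linarith
  have hz : 0 ≤ z := by linarith
  have hlx : 0 < log x := log_pos (by linarith)
  have hlz : 0 < log z := log_pos (by linarith)
  have hlxz : log x ≤ log z := Real.log_le_log (by linarith) hxz
  have hcont : ∀ k : ℕ, IntervalIntegrable (fun y : ℝ => 1 / y^k) MeasureTheory.volume (log x) (log z) := by
    intro k
    apply ContinuousOn.intervalIntegrable
    rw [Set.uIcc_of_le hlxz]
    intro y hy
    have hy0 : y ≠ 0 := by linarith [hy.1]
    have : y^k ≠ 0 := pow_ne_zero _ hy0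
    exact ContinuousAt.continuousWithinAt (by fun_prop (disch := assumption))
  have hI : (∫ y in (log x)..(log z), (1 / y + C / y^2)) = (∫ y in (log x)..(log z), 1 / y) +
      C * (1 / log x - 1 / log z) := by
    rw [← int_inv_sq _ _ hlx hlxz, ← intervalIntegral.integral_const_mul,
      ← intervalIntegral.integral_add]
    · congr 1; ext y; ring
    · simpa only [pow_one] using hcont 1
    · exact (hcont 2).const_mul C
  have h1 := recip1 x z hx hxz
  have hinv : 0 ≤ 1 / log x - 1 / log z := by
    have := one_div_le_one_div_of_le hlx hlxz; linarith
  have hJ : 0 ≤ ∫ y in (log x)..(log z), 1 / y :=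
    intervalIntegral.integral_nonneg hlxz fun u hu => by
      have : 0 < u := by linarith [hu.1]
      positivity
  rw [hI]
  rw [show (13:ℝ) / log x = K * (1 / log x - 1 / log z) + K / log z by simp only [K]; ring] at h1
  have h2 : K * (1 / log x - 1 / log z) ≤ C * (1 / log x - 1 / log z) :=
    mul_le_mul_of_nonneg_right hCK hinv
  have h3 : K / log z ≤ C / log z := by gcongr
  rcases le_total (K / log z) (1/2) with h | h
  · have : K / log z ≤ min (1/2) (C / log z) := le_min h h3
    linarith
  · have hlz2 : log z ≤ 2 * K := by
      rw [le_div_iff₀ hlz] at h; linarith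
    have hz2 : z ≤ exp (2*K) := by rwa [← Real.log_le_iff_le_exp (by linarith)]
    have hmin : min (1/2) (C / log z) = 1/2 := min_eq_left (h.trans h3)
    rw [hmin]
    rcases le_or_gt (PI x z).card 1 with hc | hc
    · have : ∑ p ∈ PI x z, (1:ℝ) / p ≤ 1/2 := by
        calc _ ≤ ∑ p ∈ PI x z, (1:ℝ) / 2 := by
              refine Finset.sum_le_sum fun p hp => ?_
              rw [mem_PI hz] at hp
              exact one_div_le_one_div_of_le (by norm_num) (by linarith [hp.2.1])
          _ = (PI x z).card * (1/2) := by simp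
          _ ≤ _ := by
              have : ((PI x z).card : ℝ) ≤ 1 := by exact_mod_cast hc
              linarith
      have := mul_nonneg (le_trans (by norm_num [K]) hCK : (0:ℝ) ≤ C) hinv
      linarith
    · have hcard : ∑ p ∈ PI x z, (1:ℝ) / p ≤ z := by
        calc _ ≤ ∑ p ∈ Finset.Ioc 0 ⌊z⌋₊, (1:ℝ) := by
              refine le_trans (Finset.sum_le_sum (g := fun _ => (1:ℝ)) fun p hp => ?_) ?_
              · rw [mem_PI hz] at hp
                rw [div_le_one (by linarith [hp.2.1])]; linarith [hp.2.1]
              · refine Finset.sum_le_sum_of_subset_of_nonneg ?_ fun _ _ _ => zero_le_one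
                intro p hp
                rw [mem_PI hz] at hp
                rw [Finset.mem_Ioc]
                exact ⟨hp.1.pos, Nat.le_floor hp.2.2⟩
          _ = ⌊z⌋₊ := by simp
          _ ≤ z := Nat.floor_le hz
      obtain ⟨p, hp, q, hq, hpq⟩ := Finset.one_lt_card.1 hc
      rw [mem_PI hz] at hp hq
      have hgap : x + 1 ≤ z := by
        rcases lt_or_gt_of_ne hpq with hlt | hlt
        · have : (p:ℝ) + 1 ≤ q := by exact_mod_cast hlt
          linarith [hp.2.1, hq.2.2]
        · have : (q:ℝ) + 1 ≤ p := by exact_mod_cast hlt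
          linarith [hp.2.2, hq.2.1]
      have hd : 1 / z ≤ log z - log x := by
        have a1 := log_lower x (by linarith)
        have a2 : log (x+1) ≤ log z := Real.log_le_log (by linarith) hgap
        have a3 := log_lower (z-1) (by linarith)
        rw [sub_add_cancel] at a3
        have a4 : log x ≤ log (z-1) := Real.log_le_log (by linarith) (by linarith)
        linarith
      have hz0 : 0 < z := by linarith
      have hfin : z ≤ C * (1 / log x - 1 / log z) := by
        have b1 : (1 / z) / (2*K)^2 ≤ 1 / log x - 1 / log z := by
          rw [div_sub_div _ _ hlx.ne' hlz.ne', one_mul, mul_one]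
          apply div_le_div₀ (by linarith [one_div_pos.2 hz0]) hd (by positivity)
          have : log x ≤ 2*K := by linarith
          nlinarith
        have b2 : z * z ≤ exp (4*K) := by
          rw [show 4*K = 2*K + 2*K by ring, Real.exp_add]
          exact mul_le_mul hz2 hz2 hz (exp_pos _).le
        calc z = (z * z * (4 * K^2)) * ((1/z) / (2*K)^2) := by simp only [K]; field_simp; ring
          _ ≤ C * ((1/z) / (2*K)^2) := by
              apply mul_le_mul_of_nonneg_right _ (by positivity)
              have : z * z * (4 * K^2) ≤ exp (4*K) * (4*K^2) := by gcongr
              simp only [K] at *; linarith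
          _ ≤ _ := mul_le_mul_of_nonneg_left b1 (le_trans (by norm_num [K]) hCK)
      linarith

end CI


namespace CI

/-- kernel -/
noncomputable def kk (t : ℝ) : ℝ := max t 2 / (max t 2 - 1)^2

lemma kk_cont : Continuous kk := by
  unfold kk
  apply Continuous.div
  · fun_prop
  · fun_prop
  · intro t
    have : 2 ≤ max t 2 := le_max_right _ _
    have : 0 < max t 2 - 1 := by linarith
    positivity

lemma kk_pos (t : ℝ) : 0 < kk t := by
  unfold kk
  have : 2 ≤ max t 2 := le_max_right _ _
  have : 0 < max t 2 - 1 := by linarith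
  positivity

lemma kk_eq {t : ℝ} (h : 2 ≤ t) : kk t = t / (t-1)^2 := by
  unfold kk; rw [max_eq_left h]

/-- iterates -/
noncomputable def PM : ℕ → (ℝ → ℝ) × (ℝ → ℝ)
  | 0 => (fun _ => 1, fun _ => 2)
  | n+1 => (fun s => 1 - ∫ t in (3:ℝ)..(max s 3), kk t * (PM n).2 (t-1),
            fun s => 2 - ∫ t in (2:ℝ)..(max s 2), kk t * (PM n).1 (t-1))

lemma prim_cont (h : ℝ → ℝ) (hh : Continuous h) (c : ℝ) :
    Continuous (fun s => ∫ t in c..(max s c), h t) := by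
  have : Continuous (fun s => ∫ t in c..s, h t) :=
    intervalIntegral.continuous_primitive (fun a b => hh.intervalIntegrable a b) c
  exact this.comp (by fun_prop)

lemma PM_cont (n : ℕ) : Continuous (PM n).1 ∧ Continuous (PM n).2 := by
  induction n with
  | zero => exact ⟨continuous_const, continuous_const⟩
  | succ n ih =>
    constructor
    · exact continuous_const.sub (prim_cont _ (kk_cont.mul (ih.2.comp (by fun_prop))) 3)
    · exact continuous_const.sub (prim_cont _ (kk_cont.mul (ih.1.comp (by fun_prop))) 2)

lemma PM_stab (n : ℕ) : ∀ s : ℝ, s ≤ n + 2 → (PM (n+1)).1 s = (PM n).1 s ∧ (PM (n+1)).2 s = (PM n).2 s := by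
  induction n with
  | zero =>
    intro s hs
    simp at hs
    simp [PM, max_eq_right (show s ≤ 3 by linarith), max_eq_right hs]
  | succ n ih =>
    intro s hs
    push_cast at hs
    constructor
    · show 1 - (∫ t in (3:ℝ)..(max s 3), kk t * (PM (n+1)).2 (t-1)) =
        1 - ∫ t in (3:ℝ)..(max s 3), kk t * (PM n).2 (t-1)
      congr 1
      apply intervalIntegral.integral_congr
      intro t ht
      rw [Set.uIcc_of_le (le_max_right _ _)] at ht
      rcases le_total s 3 with h | h
      · rw [max_eq_right h] at ht
        have h3 : t = 3 := le_antisymm ht.2 ht.1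
        show kk t * (PM (n+1)).2 (t-1) = kk t * (PM n).2 (t-1)
        rw [(ih (t-1) (by rw [h3]; linarith [Nat.cast_nonneg (α := ℝ) n])).2]
      · rw [max_eq_left h] at ht
        show kk t * (PM (n+1)).2 (t-1) = kk t * (PM n).2 (t-1)
        rw [(ih (t-1) (by linarith [ht.2])).2]
    · show 2 - (∫ t in (2:ℝ)..(max s 2), kk t * (PM (n+1)).1 (t-1)) =
        2 - ∫ t in (2:ℝ)..(max s 2), kk t * (PM n).1 (t-1)
      congr 1
      apply intervalIntegral.integral_congr
      intro t ht
      rw [Set.uIcc_of_le (le_max_right _ _)] at ht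
      rcases le_total s 2 with h | h
      · rw [max_eq_right h] at ht
        show kk t * (PM (n+1)).1 (t-1) = kk t * (PM n).1 (t-1)
        rw [(ih (t-1) (by linarith [ht.2, Nat.cast_nonneg (α := ℝ) n])).1]
      · rw [max_eq_left h] at ht
        show kk t * (PM (n+1)).1 (t-1) = kk t * (PM n).1 (t-1)
        rw [(ih (t-1) (by linarith [ht.2])).1]

noncomputable def rP (s : ℝ) : ℝ := (PM ⌈s⌉₊).1 s
noncomputable def rM (s : ℝ) : ℝ := (PM ⌈s⌉₊).2 s

lemma PM_eq (n : ℕ) (s : ℝ) (h : s ≤ n) : (PM n).1 s = rP s ∧ (PM n).2 s = rM s := by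
  have h1 : ⌈s⌉₊ ≤ n := Nat.ceil_le.2 h
  have h2 : s ≤ ⌈s⌉₊ := Nat.le_ceil s
  unfold rP rM
  obtain ⟨d, rfl⟩ := Nat.exists_eq_add_of_le h1
  clear h h1
  induction d with
  | zero => simp
  | succ d ih =>
    rw [← ih.1, ← ih.2, ← add_assoc]
    apply PM_stab
    push_cast
    linarith [Nat.cast_nonneg (α := ℝ) d]

lemma rP_cont : Continuous rP := by
  rw [continuous_iff_continuousAt]
  intro s
  obtain ⟨n, hn⟩ := exists_nat_gt s
  refine ((PM_cont n).1.continuousAt (x := s)).congr ?_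
  filter_upwards [Iio_mem_nhds hn] with t ht
  exact (PM_eq n t (le_of_lt ht)).1

lemma rM_cont : Continuous rM := by
  rw [continuous_iff_continuousAt]
  intro s
  obtain ⟨n, hn⟩ := exists_nat_gt s
  refine ((PM_cont n).2.continuousAt (x := s)).congr ?_
  filter_upwards [Iio_mem_nhds hn] with t ht
  exact (PM_eq n t (le_of_lt ht)).2

lemma rP_eq (s : ℝ) : rP s = 1 - ∫ t in (3:ℝ)..(max s 3), kk t * rM (t-1) := by
  obtain ⟨n, hn⟩ := exists_nat_gt (max s 3)
  have hs : s ≤ n := by linarith [le_max_left s 3]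
  rw [← (PM_eq (n+1) s (by push_cast; linarith)).1]
  show 1 - (∫ t in (3:ℝ)..(max s 3), kk t * (PM n).2 (t-1)) = _
  congr 1
  apply intervalIntegral.integral_congr
  intro t ht
  rw [Set.uIcc_of_le (le_max_right _ _)] at ht
  show kk t * (PM n).2 (t-1) = kk t * rM (t-1)
  rw [(PM_eq n (t-1) (by linarith [ht.2])).2]

lemma rM_eq (s : ℝ) : rM s = 2 - ∫ t in (2:ℝ)..(max s 2), kk t * rP (t-1) := by
  obtain ⟨n, hn⟩ := exists_nat_gt (max s 2)
  have hs : s ≤ n := by linarith [le_max_left s 2]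
  rw [← (PM_eq (n+1) s (by push_cast; linarith)).2]
  show 2 - (∫ t in (2:ℝ)..(max s 2), kk t * (PM n).1 (t-1)) = _
  congr 1
  apply intervalIntegral.integral_congr
  intro t ht
  rw [Set.uIcc_of_le (le_max_right _ _)] at ht
  show kk t * (PM n).1 (t-1) = kk t * rP (t-1)
  rw [(PM_eq n (t-1) (by linarith [ht.2])).1]

lemma rP_one {s : ℝ} (h : s ≤ 3) : rP s = 1 := by
  rw [rP_eq, max_eq_right h]; simp

lemma rM_two {s : ℝ} (h : s ≤ 2) : rM s = 2 := by
  rw [rM_eq, max_eq_right h]; simp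

lemma rP_deriv {s : ℝ} (h : 3 < s) : HasDerivAt rP (- (s / (s-1)^2 * rM (s-1))) s := by
  have hc : Continuous (fun t => kk t * rM (t-1)) := kk_cont.mul (rM_cont.comp (by fun_prop))
  have h1 : HasDerivAt (fun s => 1 - ∫ t in (3:ℝ)..s, kk t * rM (t-1)) (-(kk s * rM (s-1))) s := by
    have := (intervalIntegral.integral_hasDerivAt_right (hc.intervalIntegrable 3 s)
      (hc.stronglyMeasurableAtFilter _ _) hc.continuousAt).const_sub 1
    exact this
  rw [← kk_eq (by linarith)]
  apply h1.congr_of_eventuallyEq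
  filter_upwards [Ioi_mem_nhds h] with t ht
  rw [rP_eq, max_eq_left (le_of_lt ht)]

lemma rM_deriv {s : ℝ} (h : 2 < s) : HasDerivAt rM (- (s / (s-1)^2 * rP (s-1))) s := by
  have hc : Continuous (fun t => kk t * rP (t-1)) := kk_cont.mul (rP_cont.comp (by fun_prop))
  have h1 : HasDerivAt (fun s => 2 - ∫ t in (2:ℝ)..s, kk t * rP (t-1)) (-(kk s * rP (s-1))) s := by
    have := (intervalIntegral.integral_hasDerivAt_right (hc.intervalIntegrable 2 s)
      (hc.stronglyMeasurableAtFilter _ _) hc.continuousAt).const_sub 2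
    exact this
  rw [← kk_eq (by linarith)]
  apply h1.congr_of_eventuallyEq
  filter_upwards [Ioi_mem_nhds h] with t ht
  rw [rM_eq, max_eq_left (le_of_lt ht)]

lemma rM_explicit {s : ℝ} (h2 : 2 ≤ s) (h4 : s ≤ 4) : rM s = 1 + 1/(s-1) - log (s-1) := by
  rw [rM_eq, max_eq_left h2]
  have : ∫ t in (2:ℝ)..s, kk t * rP (t-1) = (log (s-1) - 1/(s-1)) - (log (2-1) - 1/(2-1)) := by
    have e : ∫ t in (2:ℝ)..s, kk t * rP (t-1) = ∫ t in (2:ℝ)..s, kk t := by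
      apply intervalIntegral.integral_congr
      intro t ht
      rw [Set.uIcc_of_le h2] at ht
      show kk t * rP (t-1) = kk t
      rw [rP_one (by linarith [ht.2]), mul_one]
    rw [e]
    apply intervalIntegral.integral_eq_sub_of_hasDerivAt (f := fun t => log (t-1) - 1/(t-1))
    · intro t ht
      rw [Set.uIcc_of_le h2] at ht
      have h0 : t - 1 ≠ 0 := by linarith [ht.1]
      have d1 : HasDerivAt (fun t : ℝ => t - 1) 1 t := (hasDerivAt_id t).sub_const 1
      have d2 := d1.log h0
      have d3 := d1.inv h0
      have d4 := d2.sub d3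
      rw [kk_eq ht.1]
      have e1 : (fun t : ℝ => log (t-1) - 1/(t-1)) = (fun t : ℝ => log (t-1)) - (fun t : ℝ => t-1)⁻¹ := by
        ext t; simp
      rw [e1]
      convert! d4 using 1
      field_simp; ring
    · exact kk_cont.intervalIntegrable _ _
  rw [this]; norm_num; ring

/-- moving window derivative -/
lemma window_deriv (h : ℝ → ℝ) (s : ℝ) (hs : 1 < s) (hh : ContinuousOn h (Set.Ioi 0)) :
    HasDerivAt (fun s => ∫ x in (s-1)..s, h x) (h s - h (s-1)) s := by
  have hc : ∀ a b : ℝ, 0 < a → 0 < b → IntervalIntegrable h MeasureTheory.volume a b := by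
    intro a b ha hb
    apply ContinuousOn.intervalIntegrable
    apply hh.mono
    intro x hx
    have := hx.1
    exact lt_of_lt_of_le (lt_min ha hb) this
  have hA : ∀ u : ℝ, 0 < u → HasDerivAt (fun s => ∫ x in (1:ℝ)..s, h x) (h u) u := by
    intro u hu
    apply intervalIntegral.integral_hasDerivAt_right (hc 1 u one_pos hu)
    · exact hh.stronglyMeasurableAtFilter isOpen_Ioi u hu
    · exact hh.continuousAt (Ioi_mem_nhds hu)
  have h1 := hA s (by linarith)
  have h2 := (hA (s-1) (by linarith)).comp s ((hasDerivAt_id s).sub_const 1)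
  have h3 := h1.sub h2
  simp only [mul_one] at h3
  apply h3.congr_of_eventuallyEq
  filter_upwards [Ioi_mem_nhds hs] with t ht
  have ht' : 1 < t := ht
  simp only [Pi.sub_apply, Function.comp]
  rw [eq_sub_iff_add_eq, add_comm]
  exact intervalIntegral.integral_add_adjacent_intervals (hc _ _ one_pos (by simp; linarith)) (hc _ _ (by simp; linarith) (by linarith))

lemma const_of_deriv (F : ℝ → ℝ) (hF : ContinuousOn F (Set.Ici 3)) (hd : ∀ s, 3 < s → HasDerivAt F 0 s)
    (s : ℝ) (hs : 3 ≤ s) : F s = F 3 := by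
  apply constant_of_has_deriv_right_zero (a := 3) (b := s)
  · exact hF.mono (fun x hx => hx.1)
  · intro x hx
    rcases eq_or_lt_of_le hx.1 with h | h
    · -- at the endpoint use the limit of derivatives
      subst h
      apply hasDerivWithinAt_Ici_of_tendsto_deriv (s := Set.Ioi 3)
      · exact fun x hx => (hd x hx).differentiableAt.differentiableWithinAt
      · exact (hF 3 (by simp)).mono Set.Ioi_subset_Ici_self
      · exact self_mem_nhdsWithin
      · apply tendsto_const_nhds.congr'
        filter_upwards [self_mem_nhdsWithin] with t ht
        exact (hd t ht).deriv.symm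
    · exact (hd x h).hasDerivWithinAt
  · exact ⟨hs, le_refl _⟩

end CI


namespace CI

lemma sq_ne {x : ℝ} (hx : x ∈ Set.Ioi (0:ℝ)) : x^2 ≠ 0 := pow_ne_zero _ (ne_of_gt hx)

lemma D_cont : ContinuousOn (fun x => (rP x - rM x) / x^2) (Set.Ioi 0) := by
  apply ContinuousOn.div
  · exact (rP_cont.sub rM_cont).continuousOn
  · fun_prop
  · intro x hx; exact sq_ne hx

lemma E_cont : ContinuousOn (fun x => (x^2 - 1/2) * ((rP x + rM x) / x^2)) (Set.Ioi 0) := by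
  apply ContinuousOn.mul
  · fun_prop
  apply ContinuousOn.div
  · exact (rP_cont.add rM_cont).continuousOn
  · fun_prop
  · intro x hx; exact sq_ne hx

lemma win_cont (h : ℝ → ℝ) (hh : ContinuousOn h (Set.Ioi 0)) :
    ContinuousOn (fun s => ∫ x in (s-1)..s, h x) (Set.Ici 3) := fun s hs =>
  (window_deriv h s (by have : (3:ℝ) ≤ s := hs
                        linarith) hh).continuousAt.continuousWithinAt

lemma inv_J (s : ℝ) (hs : 3 ≤ s) :
    (rP s - rM s) / s + ∫ x in (s-1)..s, (rP x - rM x) / x^2 = 0 := by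
  have key := const_of_deriv (fun s => (rP s - rM s) / s + ∫ x in (s-1)..s, (rP x - rM x) / x^2)
    (by
      apply ContinuousOn.add _ (win_cont _ D_cont)
      apply ContinuousOn.div (rP_cont.sub rM_cont).continuousOn continuousOn_id
      intro x hx
      have : (3:ℝ) ≤ x := hx
      simp; linarith)
    (by
      intro s hs
      have h0 : s ≠ 0 := by linarith
      have h1 : s - 1 ≠ 0 := by linarith
      have d1 := (((rP_deriv hs).sub (rM_deriv (by linarith : 2 < s))).div (hasDerivAt_id s) h0).add
        (window_deriv _ s (by linarith) D_cont)
      convert! d1 using 1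
      simp only [id, Pi.sub_apply]
      field_simp
      ring) s hs
  rw [key]
  have hI : ∫ x in (3-1:ℝ)..3, (rP x - rM x) / x^2 =
      (-log (3-1)/3 - 1/3) - (-log ((3-1:ℝ)-1)/(3-1) - 1/(3-1)) := by
    apply intervalIntegral.integral_eq_sub_of_hasDerivAt (f := fun x => -log (x-1)/x - 1/x)
    · intro x hx
      rw [Set.uIcc_of_le (by norm_num)] at hx
      obtain ⟨hx2, hx3⟩ := hx
      norm_num at hx2
      rw [rP_one hx3, rM_explicit hx2 (by linarith)]
      have h0 : x ≠ 0 := by linarith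
      have h1 : x - 1 ≠ 0 := by linarith
      have d1 : HasDerivAt (fun t : ℝ => t - 1) 1 x := (hasDerivAt_id x).sub_const 1
      have d2 := (d1.log h1).neg.div (hasDerivAt_id x) h0
      have d3 := (hasDerivAt_const x (1:ℝ)).div (hasDerivAt_id x) h0
      have d4 := d2.sub d3
      convert! d4 using 1
      simp only [id, Pi.neg_apply]
      field_simp
      ring
    · apply ContinuousOn.intervalIntegrable
      apply D_cont.mono
      intro x hx
      rw [Set.uIcc_of_le (by norm_num)] at hx
      have := hx.1
      show 0 < x
      linarith
  rw [hI, rP_one (le_refl 3), rM_explicit (by norm_num) (by norm_num)]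
  norm_num
  ring

lemma inv_I (s : ℝ) (hs : 3 ≤ s) :
    (s - 2 + 1/(2*s)) * (rP s + rM s) = ∫ x in (s-1)..s, (x^2 - 1/2) * ((rP x + rM x) / x^2) := by
  have key := const_of_deriv (fun s => (s - 2 + 1/(2*s)) * (rP s + rM s)
      - ∫ x in (s-1)..s, (x^2 - 1/2) * ((rP x + rM x) / x^2))
    (by
      apply ContinuousOn.sub _ (win_cont _ E_cont)
      apply ContinuousOn.mul _ (rP_cont.add rM_cont).continuousOn
      apply ContinuousOn.add (by fun_prop)
      apply ContinuousOn.div (by fun_prop) (by fun_prop)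
      intro x hx
      have : (3:ℝ) ≤ x := hx
      simp; linarith)
    (by
      intro s hs
      have h0 : s ≠ 0 := by linarith
      have h1 : s - 1 ≠ 0 := by linarith
      have d0 : HasDerivAt (fun s : ℝ => s - 2 + 1/(2*s)) (1 - 1/(2*s^2)) s := by
        have a1 : HasDerivAt (fun s : ℝ => 2*s) 2 s := by simpa using (hasDerivAt_id s).const_mul 2
        have a2 := ((hasDerivAt_id s).sub_const 2).add
          ((hasDerivAt_const s (1:ℝ)).div a1 (by simpa using h0))
        convert! a2 using 1
        field_simp; ring
      have d1 := (d0.mul ((rP_deriv hs).add (rM_deriv (by linarith : 2 < s)))).sub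
        (window_deriv _ s (by linarith) E_cont)
      convert! d1 using 1
      simp only [Pi.add_apply]
      field_simp
      ring) s hs
  rw [← sub_eq_zero, key]
  have hI : ∫ x in (3-1:ℝ)..3, (x^2 - 1/2) * ((rP x + rM x) / x^2) =
      ((3+1/(2*3))*(2+1/(3-1)-log (3-1)) + (3 + 2*log (3-1) - 3/2*(1/(3-1)))) -
      (((3-1)+1/(2*(3-1)))*(2+1/((3-1:ℝ)-1)-log ((3-1:ℝ)-1)) +
        ((3-1) + 2*log ((3-1:ℝ)-1) - 3/2*(1/((3-1:ℝ)-1)))) := by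
    apply intervalIntegral.integral_eq_sub_of_hasDerivAt
      (f := fun x => (x+1/(2*x))*(2+1/(x-1)-log (x-1)) + (x + 2*log (x-1) - 3/2*(1/(x-1))))
    · intro x hx
      rw [Set.uIcc_of_le (by norm_num)] at hx
      obtain ⟨hx2, hx3⟩ := hx
      norm_num at hx2
      rw [rP_one hx3, rM_explicit hx2 (by linarith)]
      have h0 : x ≠ 0 := by linarith
      have h1 : x - 1 ≠ 0 := by linarith
      have d1 : HasDerivAt (fun t : ℝ => t - 1) 1 x := (hasDerivAt_id x).sub_const 1
      have dl := d1.log h1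
      have di := (hasDerivAt_const x (1:ℝ)).div d1 h1
      have a1 : HasDerivAt (fun s : ℝ => 2*s) 2 x := by simpa using (hasDerivAt_id x).const_mul 2
      have a2 := (hasDerivAt_id x).add ((hasDerivAt_const x (1:ℝ)).div a1 (by simpa using h0))
      have a3 := (di.const_add 2).sub dl
      have a4 := (a2.mul a3).add (((hasDerivAt_id x).add (dl.const_mul 2)).sub (di.const_mul (3/2)))
      convert! a4 using 1
      simp only [id, Pi.add_apply, Pi.sub_apply, Pi.div_apply]
      field_simp
      ring
    · apply ContinuousOn.intervalIntegrable
      apply E_cont.mono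
      intro x hx
      rw [Set.uIcc_of_le (by norm_num)] at hx
      have := hx.1
      show 0 < x
      linarith
  rw [hI, rP_one (le_refl 3), rM_explicit (by norm_num) (by norm_num)]
  norm_num
  ring

lemma small_pos {s : ℝ} (h : s ≤ 3) : 0 < rP s ∧ 0 < rM s := by
  rw [rP_one h]
  refine ⟨one_pos, ?_⟩
  rcases le_total s 2 with h2 | h2
  · rw [rM_two h2]; norm_num
  · rw [rM_explicit h2 (by linarith)]
    have a1 : log (s-1) ≤ log 2 := Real.log_le_log (by linarith) (by linarith)
    have a2 : 0 < 1/(s-1) := one_div_pos.2 (by linarith)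
    have := Real.log_two_lt_d9
    linarith

lemma S_cont' : ContinuousOn (fun x => (rP x + rM x) / x^2) (Set.Ioi 0) := by
  apply ContinuousOn.div
  · exact (rP_cont.add rM_cont).continuousOn
  · fun_prop
  · intro x hx; exact sq_ne hx

lemma pos_step (s : ℝ) (hs : 3 ≤ s) (h : ∀ t, t < s → 0 < rP t ∧ 0 < rM t) : 0 < rP s ∧ 0 < rM s := by
  have hs0 : (0:ℝ) < s := by linarith
  have hintg : ∀ h : ℝ → ℝ, ContinuousOn h (Set.Ioi 0) → IntervalIntegrable h MeasureTheory.volume (s-1) s := by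
    intro h hh
    apply ContinuousOn.intervalIntegrable
    apply hh.mono
    intro x hx
    rw [Set.uIcc_of_le (by linarith)] at hx
    have := hx.1
    show 0 < x
    linarith
  have hJ := inv_J s hs
  have hI := inv_I s hs
  have iD := hintg _ D_cont
  have iS := hintg _ S_cont'
  have iE := hintg _ E_cont
  -- lower bound
  have h1 : (s-2+1/(2*s)) * s * ∫ x in (s-1)..s, (rP x + rM x) / x^2 ≤
      ∫ x in (s-1)..s, (x^2 - 1/2) * ((rP x + rM x) / x^2) := by
    rw [← intervalIntegral.integral_const_mul]
    apply intervalIntegral.integral_mono_on_of_le_Ioo (by linarith) (iS.const_mul _) iE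
    intro x hx
    have hx0 : 0 < x := by linarith [hx.1]
    have hp := h x hx.2
    apply mul_le_mul_of_nonneg_right _ (by have := hp.1; have := hp.2; positivity)
    have e : (s-2+1/(2*s)) * s = s^2 - 2*s + 1/2 := by field_simp
    rw [e]
    nlinarith [hx.1]
  rw [← hI, mul_assoc] at h1
  have hq : 0 < s-2+1/(2*s) := by have : 0 < 1/(2*s) := by positivity
                                  linarith
  have h2 := le_of_mul_le_mul_left h1 hq
  have e1 : (∫ x in (s-1)..s, (rP x + rM x) / x^2) - (∫ x in (s-1)..s, (rP x - rM x) / x^2)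
      = ∫ x in (s-1)..s, 2 * rM x / x^2 := by
    rw [← intervalIntegral.integral_sub iS iD]
    congr 1; ext x; ring
  have e2 : (∫ x in (s-1)..s, (rP x + rM x) / x^2) + (∫ x in (s-1)..s, (rP x - rM x) / x^2)
      = ∫ x in (s-1)..s, 2 * rP x / x^2 := by
    rw [← intervalIntegral.integral_add iS iD]
    congr 1; ext x; ring
  have p1 : 0 < ∫ x in (s-1)..s, 2 * rM x / x^2 := by
    apply intervalIntegral.intervalIntegral_pos_of_pos_on
    · apply hintg
      apply ContinuousOn.div (by have := rM_cont; fun_prop) (by fun_prop)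
      intro x hx; exact sq_ne hx
    · intro x hx
      have hx0 : 0 < x := by linarith [hx.1]
      have := (h x hx.2).2
      positivity
    · linarith
  have p2 : 0 < ∫ x in (s-1)..s, 2 * rP x / x^2 := by
    apply intervalIntegral.intervalIntegral_pos_of_pos_on
    · apply hintg
      apply ContinuousOn.div (by have := rP_cont; fun_prop) (by fun_prop)
      intro x hx; exact sq_ne hx
    · intro x hx
      have hx0 : 0 < x := by linarith [hx.1]
      have := (h x hx.2).1
      positivity
    · linarith
  have hJ' : rP s - rM s = - (s * ∫ x in (s-1)..s, (rP x - rM x) / x^2) := by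
    have : s * ((rP s - rM s) / s + ∫ x in (s-1)..s, (rP x - rM x) / x^2) = 0 := by rw [hJ, mul_zero]
    rw [mul_add, mul_div_cancel₀ _ hs0.ne'] at this
    linarith
  have q1 := mul_pos hs0 p1
  have q2 := mul_pos hs0 p2
  rw [← e1, mul_sub] at q1
  rw [← e2, mul_add] at q2
  constructor <;> linarith

lemma r_pos (s : ℝ) : 0 < rP s ∧ 0 < rM s := by
  by_contra hc
  set Z : Set ℝ := {t | rP t ≤ 0 ∨ rM t ≤ 0}
  have hZc : IsClosed Z := (isClosed_le rP_cont continuous_const).union (isClosed_le rM_cont continuous_const)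
  have hsZ : s ∈ Z := by
    by_contra h
    simp only [Z, Set.mem_setOf_eq, not_or, not_le] at h
    exact hc h
  have hb : ∀ t ∈ Z, 3 ≤ t := by
    intro t ht
    by_contra h
    have := small_pos (not_le.1 h).le
    rcases ht with h | h <;> linarith [this.1, this.2]
  have hbdd : BddBelow Z := ⟨3, hb⟩
  have hmem := hZc.csInf_mem ⟨s, hsZ⟩ hbdd
  have := pos_step (sInf Z) (hb _ hmem) (fun t ht => by
    by_contra h
    have : t ∈ Z := by
      by_contra h'
      simp only [Z, Set.mem_setOf_eq, not_or, not_le] at h'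
      exact h h'
    exact absurd (csInf_le hbdd this) (not_le.2 ht))
  rcases hmem with h | h <;> linarith [this.1, this.2]

lemma rP_anti : Antitone rP := by
  intro a b hab
  have h3 : max a 3 ≤ max b 3 := max_le_max_right 3 hab
  have hc : Continuous (fun t => kk t * rM (t-1)) := kk_cont.mul (rM_cont.comp (by fun_prop))
  have e := intervalIntegral.integral_add_adjacent_intervals
    (hc.intervalIntegrable (μ := MeasureTheory.volume) 3 (max a 3)) (hc.intervalIntegrable (max a 3) (max b 3))
  have : 0 ≤ ∫ t in (max a 3)..(max b 3), kk t * rM (t-1) :=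
    intervalIntegral.integral_nonneg h3 fun t _ => mul_nonneg (kk_pos t).le (r_pos _).2.le
  rw [rP_eq a, rP_eq b]
  linarith

lemma rM_anti : Antitone rM := by
  intro a b hab
  have h3 : max a 2 ≤ max b 2 := max_le_max_right 2 hab
  have hc : Continuous (fun t => kk t * rP (t-1)) := kk_cont.mul (rP_cont.comp (by fun_prop))
  have e := intervalIntegral.integral_add_adjacent_intervals
    (hc.intervalIntegrable (μ := MeasureTheory.volume) 2 (max a 2)) (hc.intervalIntegrable (max a 2) (max b 2))
  have : 0 ≤ ∫ t in (max a 2)..(max b 2), kk t * rP (t-1) :=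
    intervalIntegral.integral_nonneg h3 fun t _ => mul_nonneg (kk_pos t).le (r_pos _).1.le
  rw [rM_eq a, rM_eq b]
  linarith

lemma rP_le (s : ℝ) : rP s ≤ 1 := by
  rcases le_total s 3 with h | h
  · exact (rP_one h).le
  · exact (rP_anti h).trans (rP_one (le_refl 3)).le

lemma rM_le (s : ℝ) : rM s ≤ 2 := by
  rcases le_total s 2 with h | h
  · exact (rM_two h).le
  · exact (rM_anti h).trans (rM_two (le_refl 2)).le

lemma r_decay_step (s : ℝ) (hs : 5 ≤ s) : rP s + rM s ≤ exp (-1) * (rP (s-1) + rM (s-1)) := by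
  have hI := inv_I s (by linarith)
  have hY : 0 < rP (s-1) + rM (s-1) := add_pos (r_pos _).1 (r_pos _).2
  have h1 : ∫ x in (s-1)..s, (x^2 - 1/2) * ((rP x + rM x) / x^2) ≤ rP (s-1) + rM (s-1) := by
    have : ∫ x in (s-1)..s, (x^2 - 1/2) * ((rP x + rM x) / x^2) ≤ ∫ x in (s-1)..s, (rP (s-1) + rM (s-1)) := by
      apply intervalIntegral.integral_mono_on (by linarith)
      · apply ContinuousOn.intervalIntegrable
        apply E_cont.mono
        intro x hx
        rw [Set.uIcc_of_le (by linarith)] at hx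
        have := hx.1
        show 0 < x
        linarith
      · exact intervalIntegrable_const
      · intro x hx
        have hx0 : 0 < x := by linarith [hx.1]
        have a1 := rP_anti hx.1
        have a2 := rM_anti hx.1
        have a3 : 0 < rP x + rM x := add_pos (r_pos _).1 (r_pos _).2
        have : (x^2 - 1/2) * ((rP x + rM x) / x^2) ≤ rP x + rM x := by
          rw [mul_div_assoc', div_le_iff₀ (by positivity)]
          nlinarith
        linarith
    simpa using this
  rw [← hI] at h1
  have he : (0.35:ℝ) < exp (-1) := by
    rw [Real.exp_neg, lt_inv_comm₀ (by norm_num) (exp_pos 1)]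
    have := Real.exp_one_lt_d9
    norm_num
    linarith
  have hY2 : 0 < rP s + rM s := add_pos (r_pos _).1 (r_pos _).2
  have h3 : (3:ℝ) ≤ s-2+1/(2*s) := by have : 0 < 1/(2*s) := by positivity
                                      linarith
  have h4 : (3:ℝ) * (rP s + rM s) ≤ rP (s-1) + rM (s-1) := le_trans (mul_le_mul_of_nonneg_right h3 hY2.le) h1
  nlinarith

lemma r_decay (s : ℝ) : rP s + rM s ≤ (3 * exp 5) * exp (-s) := by
  have : ∀ n : ℕ, ∀ s : ℝ, s ≤ 5 + n → rP s + rM s ≤ (3 * exp 5) * exp (-s) := by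
    intro n
    induction n with
    | zero =>
      intro s hs
      simp at hs
      rw [mul_assoc, ← Real.exp_add]
      have := Real.one_le_exp (show 0 ≤ 5 + -s by linarith)
      linarith [rP_le s, rM_le s]
    | succ n ih =>
      intro s hs
      rcases le_total s 5 with h | h
      · exact ih s (by linarith [Nat.cast_nonneg (α := ℝ) n])
      · have h1 := r_decay_step s h
        have h2 := ih (s-1) (by push_cast at hs; linarith)
        calc _ ≤ _ := h1
          _ ≤ exp (-1) * ((3 * exp 5) * exp (-(s-1))) := mul_le_mul_of_nonneg_left h2 (exp_pos _).le
          _ = _ := by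
            rw [show -s = -1 + -(s-1) by ring, Real.exp_add]; ring
  obtain ⟨n, hn⟩ := exists_nat_ge s
  exact this n s (by linarith)

end CI

namespace CI

noncomputable def ch (x : ℝ) : ℝ := 1 - 1 / √(1 + x)

noncomputable def RR (r : ℝ → ℝ) (l L : ℝ) : ℝ := r (l / L) * ch L / l^2 + exp (-(l/L)/4) / l^3

lemma ch_mono {x y : ℝ} (hx : 0 ≤ x) (h : x ≤ y) : ch x ≤ ch y := by
  unfold ch
  have : √(1+x) ≤ √(1+y) := sqrt_le_sqrt (by linarith)
  have h0 : 0 < √(1+x) := sqrt_pos.2 (by linarith)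
  have := one_div_le_one_div_of_le h0 this
  linarith

lemma ch_nonneg {x : ℝ} (hx : 0 ≤ x) : 0 ≤ ch x := by
  have := ch_mono (le_refl 0) hx
  simpa [ch] using this

lemma ch_le_one {x : ℝ} : ch x ≤ 1 := by
  unfold ch
  have : 0 ≤ 1/√(1+x) := by positivity
  linarith

lemma ch_gap {L l : ℝ} (hL : 1 ≤ L) (hl : L ≤ l / 2) : (1/10) / √l ≤ ch L - ch (L/2) := by
  unfold ch
  have h1 : √(1+L/2) ≤ (7/8) * √(1+L) := by
    rw [show (7/8:ℝ) = √((7/8)^2) by rw [sqrt_sq (by norm_num)], ← sqrt_mul (by positivity)]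
    apply sqrt_le_sqrt
    linarith
  have h0 : 0 < √(1+L/2) := sqrt_pos.2 (by linarith)
  have h2 := one_div_le_one_div_of_le h0 h1
  have h3 : √(1+L) ≤ √l := sqrt_le_sqrt (by linarith)
  have h4 : 0 < √(1+L) := sqrt_pos.2 (by linarith)
  have h5 := one_div_le_one_div_of_le h4 h3
  have h6 : 1/(7/8*√(1+L)) = 8/7 * (1/√(1+L)) := by field_simp
  have h7 : (1/10)/√l = 1/10 * (1/√l) := by ring
  have : 0 ≤ 1/√l := by positivity
  rw [h6] at h2
  rw [h7]
  linarith

lemma ch_cont : ContinuousOn ch (Set.Ici 0) := by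
  unfold ch
  apply ContinuousOn.sub continuousOn_const
  apply ContinuousOn.div continuousOn_const (by fun_prop)
  intro x hx
  have : (0:ℝ) ≤ x := hx
  have : 0 < √(1+x) := sqrt_pos.2 (by linarith)
  exact this.ne'

/-- properties package -/
structure Pr (ri ro : ℝ → ℝ) (m D : ℝ) : Prop where
  hm : 2 ≤ m
  ric : Continuous ri
  roc : Continuous ro
  rip : ∀ s, 0 < ri s
  rop : ∀ s, 0 < ro s
  ria : Antitone ri
  roa : Antitone ro
  hD : 0 < D
  rid : ∀ s, ri s ≤ D * exp (-s)
  der : ∀ s, m < s → HasDerivAt ro (-(s / (s-1)^2 * ri (s-1))) s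

lemma PrP : Pr rM rP 3 (3 * exp 5) where
  hm := by norm_num
  ric := rM_cont
  roc := rP_cont
  rip s := (r_pos s).2
  rop s := (r_pos s).1
  ria := rM_anti
  roa := rP_anti
  hD := by positivity
  rid s := by linarith [r_decay s, (r_pos s).1]
  der s h := rP_deriv h

lemma PrM : Pr rP rM 2 (3 * exp 5) where
  hm := by norm_num
  ric := rP_cont
  roc := rM_cont
  rip s := (r_pos s).1
  rop s := (r_pos s).2
  ria := rP_anti
  roa := rM_anti
  hD := by positivity
  rid s := by linarith [r_decay s, (r_pos s).2]
  der s h := rM_deriv h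

lemma W_int {ri ro : ℝ → ℝ} {m D : ℝ} (P : Pr ri ro m D) {l A B : ℝ} (hA : 0 < A) (hAB : A ≤ B) (hB : B ≤ l / m) :
    IntervalIntegrable (fun y => ri (l/y-1) * l^2 / (y * (l-y)^2)) MeasureTheory.volume A B ∧
    ∫ y in A..B, ri (l/y-1) * l^2 / (y * (l-y)^2) = ro (l/B) - ro (l/A) := by
  have hm := P.hm
  have hm0 : 0 < m := by linarith
  have hBl : B * m ≤ l := by rwa [le_div_iff₀ hm0] at hB
  have hy : ∀ y, y ∈ Set.Icc A B → 0 < y ∧ y < l := by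
    intro y hy
    have := hy.1; have := hy.2
    constructor
    · linarith
    · nlinarith
  have hI : IntervalIntegrable (fun y => ri (l/y-1) * l^2 / (y * (l-y)^2)) MeasureTheory.volume A B := by
    apply ContinuousOn.intervalIntegrable
    rw [Set.uIcc_of_le hAB]
    apply ContinuousOn.div
    · apply ContinuousOn.mul _ continuousOn_const
      apply P.ric.comp_continuousOn
      apply ContinuousOn.sub _ continuousOn_const
      exact continuousOn_const.div continuousOn_id (fun y h => (hy y h).1.ne')
    · fun_prop
    · intro y h
      have h1 := (hy y h).1
      have h2 : 0 < l - y := by linarith [(hy y h).2]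
      positivity
  refine ⟨hI, ?_⟩
  rw [intervalIntegral.integral_eq_sub_of_hasDerivAt_of_le (f := fun y => ro (l/y)) hAB _ _ hI]
  · apply P.roc.comp_continuousOn
    exact continuousOn_const.div continuousOn_id (fun y h => (hy y h).1.ne')
  · intro y h
    obtain ⟨h1, h2⟩ := hy y ⟨h.1.le, h.2.le⟩
    have hlm : m < l / y := by
      rw [lt_div_iff₀ h1]; nlinarith [h.2]
    have d1 := (P.der _ hlm).comp y (((hasDerivAt_inv h1.ne').const_mul l))
    have e : (ro ∘ fun y => l * y⁻¹) = fun y => ro (l/y) := by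
      ext y; simp [div_eq_mul_inv]
    have d2 := d1
    simp only [Function.comp_def, ← div_eq_mul_inv] at d2
    convert! d2 using 1
    have : l - y ≠ 0 := by linarith
    have e2 : l/y - 1 = (l-y)/y := by field_simp
    generalize ri (l/y-1) = t
    rw [e2]
    field_simp

lemma E_int {c A B : ℝ} (hc : 0 < c) (hA : 0 < A) (hAB : A ≤ B) :
    IntervalIntegrable (fun y => exp (-(c/y)) / y^2) MeasureTheory.volume A B ∧
    ∫ y in A..B, exp (-(c/y)) / y^2 = exp (-(c/B))/c - exp (-(c/A))/c := by
  have hy : ∀ y, y ∈ Set.Icc A B → 0 < y := by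
    intro y hy
    linarith [hy.1]
  have hI : IntervalIntegrable (fun y => exp (-(c/y)) / y^2) MeasureTheory.volume A B := by
    apply ContinuousOn.intervalIntegrable
    rw [Set.uIcc_of_le hAB]
    apply ContinuousOn.div
    · apply Real.continuous_exp.comp_continuousOn
      apply ContinuousOn.neg
      exact continuousOn_const.div continuousOn_id (fun y h => (hy y h).ne')
    · fun_prop
    · intro y h
      have := hy y h
      positivity
  refine ⟨hI, ?_⟩
  rw [intervalIntegral.integral_eq_sub_of_hasDerivAt_of_le (f := fun y => exp (-(c/y))/c) hAB _ _ hI]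
  · apply ContinuousOn.div_const
    apply Real.continuous_exp.comp_continuousOn
    apply ContinuousOn.neg
    exact continuousOn_const.div continuousOn_id (fun y h => (hy y h).ne')
  · intro y h
    have h1 := hy y ⟨h.1.le, h.2.le⟩
    have d := (((hasDerivAt_inv h1.ne').const_mul (-c)).exp).div_const c
    have e : ∀ y, -c * y⁻¹ = -(c/y) := by intro y; ring
    simp only [e] at d
    convert! d using 1
    field_simp

lemma RR_child (r : ℝ → ℝ) {l y : ℝ} (hy : 0 < y) : RR r (l-y) y =
    r (l/y-1) * ch y / (l-y)^2 + exp (1/4) * exp (-((l/4)/y)) / (l-y)^3 := by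
  unfold RR
  have e : (l-y)/y = l/y-1 := by field_simp
  rw [e, ← exp_add]
  congr 3
  ring

lemma RR_child_mono {ri ro : ℝ → ℝ} {m D : ℝ} (P : Pr ri ro m D) {l B : ℝ} (hB : B < l) :
    ∀ x y, 0 < x → x ≤ y → y ≤ B → RR ri (l-x) x ≤ RR ri (l-y) y := by
  intro x y hx hxy hyB
  have hy : 0 < y := by linarith
  rw [RR_child _ hx, RR_child _ hy]
  have h1 : 0 < l - y := by linarith
  have h2 : l - y ≤ l - x := by linarith
  have hl : 0 < l := by linarith
  have h3 : l / y ≤ l / x := by gcongr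
  have h4 : (l/4) / y ≤ (l/4) / x := by gcongr
  have h5 : ri (l/x-1) ≤ ri (l/y-1) := P.ria (by linarith)
  have h6 := ch_mono hx.le hxy
  have h7 := ch_nonneg hx.le
  have h8 := ch_nonneg hy.le
  have h9 := (P.rip (l/y-1)).le
  have h10 := (P.rip (l/x-1)).le
  gcongr

lemma RR_child_nonneg {ri ro : ℝ → ℝ} {m D : ℝ} (P : Pr ri ro m D) {l x : ℝ} (hx : 0 < x) (h : x < l) :
    0 ≤ RR ri (l-x) x := by
  rw [RR_child _ hx]
  have h1 : 0 < l - x := by linarith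
  have h7 := ch_nonneg hx.le
  have h9 := (P.rip (l/x-1)).le
  positivity

lemma int_piece {ri ro : ℝ → ℝ} {m D : ℝ} (P : Pr ri ro m D) {C l A B L : ℝ} (hC : 1 ≤ C) (hA : 0 < A)
    (hAB : A ≤ B) (hBL : B ≤ L) (hL : L ≤ l / m) :
    ∫ y in A..B, (1/y + C/y^2) * RR ri (l-y) y ≤ ch B * (ro (l/B) - ro (l/A)) / l^2
      + 4*C*D*exp 1/l^2 * (exp (-(l/B))/l - exp (-(l/A))/l)
      + exp (1/4) / (l-L)^3 * (L + C) * (exp (-((l/4)/B))/(l/4) - exp (-((l/4)/A))/(l/4)) := by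
  have hm := P.hm
  have hm0 : 0 < m := by linarith
  have hD := P.hD
  have hLl : L * m ≤ l := by rwa [le_div_iff₀ hm0] at hL
  have hLl2 : 2 * L ≤ l := by nlinarith
  have hl : 0 < l := by linarith
  obtain ⟨i1, e1⟩ := W_int P hA hAB (hBL.trans hL)
  obtain ⟨i2, e2⟩ := E_int (c := l) hl hA hAB
  obtain ⟨i3, e3⟩ := E_int (c := l/4) (by linarith) hA hAB
  rw [← e1, ← e2, ← e3]
  have : ch B * (∫ y in A..B, ri (l/y-1) * l^2 / (y * (l-y)^2)) / l^2 =
    ∫ y in A..B, (ch B / l^2) * (ri (l/y-1) * l^2 / (y * (l-y)^2)) := by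
    rw [intervalIntegral.integral_const_mul]; ring
  rw [this, ← intervalIntegral.integral_const_mul, ← intervalIntegral.integral_const_mul,
    ← intervalIntegral.integral_add (i1.const_mul _) (i2.const_mul _),
    ← intervalIntegral.integral_add ((i1.const_mul _).add (i2.const_mul _)) (i3.const_mul _)]
  apply intervalIntegral.integral_mono_on hAB
  · apply ContinuousOn.intervalIntegrable
    rw [Set.uIcc_of_le hAB]
    have hy : ∀ y, y ∈ Set.Icc A B → 0 < y ∧ 0 < l - y := by
      intro y hy
      have := hy.1; have := hy.2
      constructor <;> linarith
    have c0 : ContinuousOn (fun y => l / y) (Set.Icc A B) :=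
      continuousOn_const.div continuousOn_id (fun y h => (hy y h).1.ne')
    apply ContinuousOn.mul
    · apply ContinuousOn.add
      · exact continuousOn_const.div continuousOn_id (fun y h => (hy y h).1.ne')
      · exact continuousOn_const.div (by fun_prop) (fun y h => (pow_pos (hy y h).1 2).ne')
    · have : ContinuousOn (fun y => ri (l/y-1) * ch y / (l-y)^2 + exp (-(l/y-1)/4) / (l-y)^3) (Set.Icc A B) := by
        apply ContinuousOn.add
        · apply ContinuousOn.div
          · apply ContinuousOn.mul
            · exact P.ric.comp_continuousOn (c0.sub continuousOn_const)
            · exact ch_cont.mono (fun y h => (hy y h).1.le)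
          · fun_prop
          · intro y h; exact (pow_pos (hy y h).2 2).ne'
        · apply ContinuousOn.div
          · exact Real.continuous_exp.comp_continuousOn (((c0.sub continuousOn_const).neg).div_const _)
          · fun_prop
          · intro y h; exact (pow_pos (hy y h).2 3).ne'
      refine this.congr ?_
      intro y h
      unfold RR
      have e : (l-y)/y = l/y-1 := by have := (hy y h).1; field_simp
      simp only [e]
  · exact ((i1.const_mul _).add (i2.const_mul _)).add (i3.const_mul _)
  · intro y hy
    have hy0 : 0 < y := by linarith [hy.1]
    have hyl : 0 < l - y := by linarith [hy.2]
    rw [RR_child _ hy0]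
    have hyL : y ≤ L := hy.2.trans hBL
    have r0 := (P.rip (l/y-1)).le
    have t1 : 1/y * (ri (l/y-1) * ch y / (l-y)^2) ≤ ch B / l^2 * (ri (l/y-1) * l^2 / (y * (l-y)^2)) := by
      have : ch B / l^2 * (ri (l/y-1) * l^2 / (y * (l-y)^2)) = 1/y * (ri (l/y-1) * ch B / (l-y)^2) := by
        field_simp
      rw [this]
      have := ch_mono hy0.le hy.2
      gcongr
    have t2 : C/y^2 * (ri (l/y-1) * ch y / (l-y)^2) ≤ 4*C*D*exp 1/l^2 * (exp (-(l/y)) / y^2) := by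
      have a1 : ri (l/y-1) * ch y ≤ D * exp 1 * exp (-(l/y)) := by
        have b1 := P.rid (l/y-1)
        rw [show -(l/y-1) = 1 + -(l/y) by ring, exp_add] at b1
        have b2 := ch_le_one (x := y)
        have b3 := ch_nonneg hy0.le
        calc ri (l/y-1) * ch y ≤ ri (l/y-1) * 1 := by gcongr
          _ ≤ _ := by linarith
      have a2 : l/2 ≤ l - y := by linarith
      calc C/y^2 * (ri (l/y-1) * ch y / (l-y)^2) ≤ C/y^2 * (D * exp 1 * exp (-(l/y)) / (l/2)^2) := by
            gcongr
        _ = _ := by field_simp; ring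
    have t3 : (1/y+C/y^2) * (exp (1/4) * exp (-((l/4)/y)) / (l-y)^3) ≤
        exp (1/4) / (l-L)^3 * (L + C) * (exp (-((l/4)/y)) / y^2) := by
      have a1 : 1/y + C/y^2 ≤ (L+C)/y^2 := by
        rw [add_div]
        have : 1/y ≤ L/y^2 := by
          rw [div_le_div_iff₀ hy0 (by positivity)]
          nlinarith
        linarith
      have a2 : 0 < l - L := by linarith
      have a4 : 0 ≤ (L+C)/y^2 := by
        have : 0 ≤ L + C := by linarith
        positivity
      have a3 : l - L ≤ l - y := by linarith
      calc (1/y+C/y^2) * (exp (1/4) * exp (-((l/4)/y)) / (l-y)^3) ≤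
          ((L+C)/y^2) * (exp (1/4) * exp (-((l/4)/y)) / (l-L)^3) := by
            gcongr
        _ = _ := by ring
    have : (1 / y + C / y ^ 2) * (ri (l / y - 1) * ch y / (l - y) ^ 2 + rexp (1 / 4) * rexp (-(l / 4 / y)) / (l - y) ^ 3)
      = 1/y * (ri (l/y-1) * ch y / (l-y)^2) + C/y^2 * (ri (l/y-1) * ch y / (l-y)^2) +
      (1/y+C/y^2) * (exp (1/4) * exp (-((l/4)/y)) / (l-y)^3) := by ring
    rw [this]
    linarith

end CI

namespace CI

lemma tot {ri ro : ℝ → ℝ} {m D : ℝ} (P : Pr ri ro m D) : ∃ C : ℝ, 1 ≤ C ∧ ∀ l L M : ℝ, log 2 ≤ M → M ≤ L → L ≤ l / m →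
    ∑ p ∈ PI 2 (exp L), (1:ℝ)/p * RR ri (l - log p) (log p) ≤
      (ch L * ro (l/L) - (ch L - ch M) * ro (l/M)) / l^2 + 4*C*D*exp 1 * ((1 + l/L) * exp (-(l/L))) / l^3
      + exp (1/4) / (l-L)^3 * exp (-(l/L)/4) * ((L+C)*4/l + 1/2) := by
  obtain ⟨C, hC, hr⟩ := recip2
  refine ⟨C, hC, fun l L M hM hML hL => ?_⟩
  have hm := P.hm
  have hm0 : 0 < m := by linarith
  have hD := P.hD
  have l2 : 0 < log 2 := log_pos (by norm_num)
  have hM0 : 0 < M := by linarith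
  have hL0 : 0 < L := by linarith
  have hLl : L * m ≤ l := by rwa [le_div_iff₀ hm0] at hL
  have hLl2 : 2 * L ≤ l := by nlinarith
  have hl : 0 < l := by linarith
  have hlL : 0 < l - L := by linarith
  have hE : (2:ℝ) ≤ exp L := by
    rw [← log_le_iff_le_exp (by norm_num)]; linarith
  have memP : ∀ p ∈ PI 2 (exp L), log 2 ≤ log p ∧ log p ≤ L ∧ (2:ℝ) ≤ p := by
    intro p hp
    rw [mem_PI (exp_pos L).le] at hp
    obtain ⟨_, h2, h3⟩ := hp
    refine ⟨log_le_log (by norm_num) h2, ?_, h2⟩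
    rw [log_le_iff_le_exp (by linarith)]; exact h3
  have hts := tail_sum (fun y => 1/y + C/y^2) L (min (1/2) (C/L)) (by positivity) (fun p => log p) (fun p => (1:ℝ)/p)
    _ (PI 2 (exp L)) rfl (log 2) (fun y => RR ri (l-y) y) (hM.trans hML)
    (fun p hp => ⟨(memP p hp).1, (memP p hp).2.1⟩) (fun p _ => by positivity)
    (by
      apply ContinuousOn.add
      · exact continuousOn_const.div continuousOn_id (fun y h => (by have := h.1; simp only [id]; linarith : (0:ℝ) < id y).ne')
      · exact continuousOn_const.div (by fun_prop) (fun y h => (pow_pos (by have := h.1; linarith : (0:ℝ) < y) 2).ne'))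
    (by
      intro t ht
      have : 0 < t := by linarith [ht.1]
      positivity)
    (by
      intro t ht
      have h1 : (2:ℝ) ≤ exp t := by
        rw [← log_le_iff_le_exp (by norm_num)]; exact ht.1
      have := hr (exp t) (exp L) h1 (exp_le_exp.2 ht.2)
      rw [log_exp, log_exp] at this
      refine le_trans ?_ this
      apply Finset.sum_le_sum_of_subset_of_nonneg
      · intro p hp
        rw [Finset.mem_filter] at hp
        obtain ⟨hp, htp⟩ := hp
        have h2 := (memP p hp).2.2
        rw [mem_PI (exp_pos L).le] at hp ⊢
        refine ⟨hp.1, ?_, hp.2.2⟩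
        rwa [← le_log_iff_exp_le (by linarith)]
      · intros; positivity)
    (fun x hx y hy hxy => RR_child_mono P (B := L) (by linarith) x y (by linarith [hx.1]) hxy hy.2)
    (fun t ht => RR_child_nonneg P (by linarith [ht.1]) (by linarith [ht.2]))
  refine hts.trans ?_
  have ic : ∀ A B, 0 < A → A ≤ B → B ≤ L → IntervalIntegrable (fun y => (1/y + C/y^2) * RR ri (l-y) y) MeasureTheory.volume A B := by
    intro A B hA hAB hBL
    apply ContinuousOn.intervalIntegrable
    rw [Set.uIcc_of_le hAB]
    have hy : ∀ y, y ∈ Set.Icc A B → 0 < y ∧ 0 < l - y := by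
      intro y hy
      have := hy.1; have := hy.2
      constructor <;> linarith
    have c0 : ContinuousOn (fun y => l / y) (Set.Icc A B) :=
      continuousOn_const.div continuousOn_id (fun y h => (hy y h).1.ne')
    apply ContinuousOn.mul
    · apply ContinuousOn.add
      · exact continuousOn_const.div continuousOn_id (fun y h => (hy y h).1.ne')
      · exact continuousOn_const.div (by fun_prop) (fun y h => (pow_pos (hy y h).1 2).ne')
    · have : ContinuousOn (fun y => ri (l/y-1) * ch y / (l-y)^2 + exp (-(l/y-1)/4) / (l-y)^3) (Set.Icc A B) := by
        apply ContinuousOn.add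
        · apply ContinuousOn.div
          · apply ContinuousOn.mul
            · exact P.ric.comp_continuousOn (c0.sub continuousOn_const)
            · exact ch_cont.mono (fun y h => (hy y h).1.le)
          · fun_prop
          · intro y h; exact (pow_pos (hy y h).2 2).ne'
        · apply ContinuousOn.div
          · exact Real.continuous_exp.comp_continuousOn (((c0.sub continuousOn_const).neg).div_const _)
          · fun_prop
          · intro y h; exact (pow_pos (hy y h).2 3).ne'
      refine this.congr ?_
      intro y h
      unfold RR
      have e : (l-y)/y = l/y-1 := by have := (hy y h).1; field_simp
      simp only [e]
  rw [← intervalIntegral.integral_add_adjacent_intervals (ic (log 2) M l2 hM hML) (ic M L hM0 hML le_rfl)]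
  have p1 := int_piece P hC l2 hM hML hL
  have p2 := int_piece P hC hM0 hML le_rfl hL
  have bd : min (1/2) (C/L) * RR ri (l-L) L ≤ 4*C*D*exp 1 * ((l/L) * exp (-(l/L))) / l^3 +
      exp (1/4) / (l-L)^3 * exp (-(l/L)/4) * (1/2) := by
    rw [RR_child _ hL0, mul_add]
    have r0 := (P.rip (l/L-1)).le
    have c0 := ch_nonneg hL0.le
    apply add_le_add
    · have a1 : ri (l/L-1) * ch L ≤ D * exp 1 * exp (-(l/L)) := by
        have b1 := P.rid (l/L-1)
        rw [show -(l/L-1) = 1 + -(l/L) by ring, exp_add] at b1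
        have b2 := ch_le_one (x := L)
        calc ri (l/L-1) * ch L ≤ ri (l/L-1) * 1 := by gcongr
          _ ≤ _ := by linarith
      have a2 : l/2 ≤ l - L := by linarith
      have a3 : min (1/2) (C/L) ≤ C/L := min_le_right _ _
      calc min (1/2) (C/L) * (ri (l/L-1) * ch L / (l-L)^2) ≤ C/L * (D * exp 1 * exp (-(l/L)) / (l/2)^2) := by
            gcongr
        _ = _ := by field_simp; ring
    · have a3 : min (1/2) (C/L) ≤ 1/2 := min_le_left _ _
      calc min (1/2) (C/L) * (exp (1/4) * exp (-(l/4/L)) / (l-L)^3) ≤ 1/2 * (exp (1/4) * exp (-(l/4/L)) / (l-L)^3) := by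
            gcongr
        _ = _ := by rw [show -(l/4/L) = -(l/L)/4 by ring]; ring
  have q : (L+C) ≥ 0 := by linarith
  have rl := (P.rop (l/log 2)).le
  have x1 : ch M * (ro (l/M) - ro (l/log 2))/l^2 ≤ ch M * ro (l/M) / l^2 := by
    have := ch_nonneg hM0.le
    gcongr
    linarith
  have x2 : 4*C*D*exp 1/l^2 * (exp (-(l/M))/l - exp (-(l/log 2))/l) ≤ 4*C*D*exp 1/l^2 * (exp (-(l/M))/l) := by
    have : 0 ≤ exp (-(l/log 2))/l := by positivity
    gcongr
    linarith
  have x3 : exp (1/4) / (l-L)^3 * (L + C) * (exp (-((l/4)/M))/(l/4) - exp (-((l/4)/log 2))/(l/4)) ≤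
      exp (1/4) / (l-L)^3 * (L + C) * (exp (-((l/4)/M))/(l/4)) := by
    have : 0 ≤ exp (-((l/4)/log 2))/(l/4) := by positivity
    have : 0 ≤ exp (1/4) / (l-L)^3 * (L + C) := by positivity
    gcongr
    linarith
  have fin : ch M * ro (l/M) / l^2 + 4*C*D*exp 1/l^2 * (exp (-(l/M))/l) + exp (1/4) / (l-L)^3 * (L + C) * (exp (-((l/4)/M))/(l/4))
     + (ch L * (ro (l/L) - ro (l/M)) / l^2
      + 4*C*D*exp 1/l^2 * (exp (-(l/L))/l - exp (-(l/M))/l)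
      + exp (1/4) / (l-L)^3 * (L + C) * (exp (-((l/4)/L))/(l/4) - exp (-((l/4)/M))/(l/4))) +
      (4*C*D*exp 1 * ((l/L) * exp (-(l/L))) / l^3 +
      exp (1/4) / (l-L)^3 * exp (-(l/L)/4) * (1/2)) = (ch L * ro (l/L) - (ch L - ch M) * ro (l/M)) / l^2 + 4*C*D*exp 1 * ((1 + l/L) * exp (-(l/L))) / l^3
      + exp (1/4) / (l-L)^3 * exp (-(l/L)/4) * ((L+C)*4/l + 1/2) := by
    rw [show -(l/4/L) = -(l/L)/4 by ring]
    field_simp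
    ring
  rw [← fin]
  linarith

lemma key_D {ri ro : ℝ → ℝ} {m D : ℝ} (P : Pr ri ro m D) : ∃ s5 : ℝ, 100 ≤ s5 ∧ ∀ K : ℝ, 0 ≤ K → ∃ l1 : ℝ, 100 ≤ l1 ∧ ∀ l, l1 ≤ l → ∀ L,
    log 2 ≤ L → L ≤ l / m →
    ∑ p ∈ PI 2 (exp L), (1:ℝ)/p * RR ri (l - log p) (log p) + (if l/L < s5 then K/l^3 else K * exp (-(l/2))) ≤ RR ro l L := by
  obtain ⟨C, hC, ht⟩ := tot P
  have hm := P.hm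
  have hm0 : 0 < m := by linarith
  have hD := P.hD
  set M0 := 4*C*D*exp 1 with hM0
  have hM0p : 0 < M0 := by positivity
  have e4 : exp (1/4) ≤ 1.29 := by
    have h1 : exp (1/4)^4 = exp 1 := by rw [← exp_nat_mul]; norm_num
    have h2 := exp_one_lt_d9
    by_contra hc
    push Not at hc
    have : (1.29:ℝ)^4 ≤ exp (1/4)^4 := by gcongr
    norm_num at this
    rw [← exp_nat_mul] at this
    norm_num at this
    linarith
  obtain ⟨s5, h100, hs5⟩ : ∃ s5 : ℝ, 100 ≤ s5 ∧ ∀ s, s5 ≤ s → M0 * ((1+s) * exp (-s)) ≤ 0.01 * exp (-s/4) := by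
    have t1 : Filter.Tendsto (fun s : ℝ => M0 * ((1 + s) * exp (-(3/4*s)))) Filter.atTop (nhds 0) := by
      have a0 := (Real.tendsto_pow_mul_exp_neg_atTop_nhds_zero 0).comp (Filter.Tendsto.const_mul_atTop (by norm_num : (0:ℝ) < 3/4) Filter.tendsto_id)
      have a1 := (Real.tendsto_pow_mul_exp_neg_atTop_nhds_zero 1).comp (Filter.Tendsto.const_mul_atTop (by norm_num : (0:ℝ) < 3/4) Filter.tendsto_id)
      have := (a0.add (a1.const_mul (4/3))).const_mul M0
      simp only [mul_zero, add_zero] at this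
      refine this.congr ?_
      intro s
      simp only [Function.comp, id]
      ring
    have ev := t1.eventually (gt_mem_nhds (show (0:ℝ) < 0.01 by norm_num))
    obtain ⟨s5, h5⟩ := (ev.and (Filter.eventually_ge_atTop 100)).exists_forall_of_atTop
    refine ⟨s5, (h5 s5 le_rfl).2, fun s hs => ?_⟩
    have h := (h5 s hs).1
    have e : exp (-s) = exp (-(3/4*s)) * exp (-s/4) := by rw [← exp_add]; congr 1; ring
    rw [e]
    have := exp_pos (-s/4)
    nlinarith
  refine ⟨s5, h100, fun K hK => ?_⟩
  obtain ⟨l2, hl2⟩ : ∃ l2 : ℝ, ∀ l, l2 ≤ l → K * l^3 * exp (-(13/100*l)) ≤ 0.01 := by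
    have a1 := (Real.tendsto_pow_mul_exp_neg_atTop_nhds_zero 3).comp (Filter.Tendsto.const_mul_atTop (by norm_num : (0:ℝ) < 13/100) Filter.tendsto_id)
    have t1 : Filter.Tendsto (fun l : ℝ => K * l^3 * exp (-(13/100*l))) Filter.atTop (nhds 0) := by
      have := a1.const_mul (K * (100/13)^3)
      simp only [mul_zero] at this
      refine this.congr ?_
      intro s
      simp only [Function.comp, id]
      ring
    have ev := t1.eventually (gt_mem_nhds (show (0:ℝ) < 0.01 by norm_num))
    obtain ⟨l2, h2⟩ := ev.exists_forall_of_atTop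
    exact ⟨l2, fun l hl => (h2 l hl).le⟩
  set Q := M0 + 31 + K
  set ρ := ro (2*s5)
  have hρ : 0 < ρ := P.rop _
  refine ⟨max (max 100 (200*C)) (max (max l2 (2*s5)) ((10*Q/ρ)^2)), le_max_of_le_left (le_max_left _ _), fun l hl L hL1 hL2 => ?_⟩
  simp only [max_le_iff] at hl
  obtain ⟨⟨hl100, hlC⟩, ⟨hll2, hls5⟩, hlQ⟩ := hl
  have hlog2 := Real.log_two_gt_d9
  have hlog2' := Real.log_two_lt_d9
  have hL0 : 0 < L := by linarith
  have hLl : L * m ≤ l := by rwa [le_div_iff₀ hm0] at hL2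
  have hLl2 : 2 * L ≤ l := by nlinarith
  have hl0 : 0 < l := by linarith
  have hlL : 0 < l - L := by linarith
  split_ifs with hs
  · -- small s
    have hLl5 : l < s5 * L := by rwa [div_lt_iff₀ hL0] at hs
    have hL2' : 2 ≤ L := by nlinarith
    have T := ht l L (L/2) (by linarith) (by linarith) hL2
    refine (add_le_add_left T _).trans ?_
    unfold RR
    have g := ch_gap (L := L) (l := l) (by linarith) (by linarith)
    have r2 : ρ ≤ ro (l/(L/2)) := by
      apply P.roa
      rw [div_le_iff₀ (by linarith)]
      linarith
    have A1 : (1/10)/√l * ρ ≤ (ch L - ch (L/2)) * ro (l/(L/2)) := by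
      have : 0 ≤ (1/10)/√l := by positivity
      exact mul_le_mul g r2 hρ.le (this.trans g)
    have A2 : M0 * ((1 + l/L) * exp (-(l/L))) ≤ M0 := by
      have h1 := add_one_le_exp (l/L)
      have h2 : (1 + l/L) * exp (-(l/L)) ≤ exp (l/L) * exp (-(l/L)) := by
        gcongr; linarith
      rw [← exp_add, add_neg_cancel, exp_zero] at h2
      nlinarith
    have A3 : exp (1/4) / (l-L)^3 * exp (-(l/L)/4) * ((L+C)*4/l + 1/2) ≤ 31/l^3 := by
      have b1 : l/2 ≤ l - L := by linarith
      have b2 : exp (-(l/L)/4) ≤ 1 := by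
        rw [exp_le_one_iff]
        have : 0 ≤ l/L := by positivity
        linarith
      have b3 : (L+C)*4/l + 1/2 ≤ 2.52 := by
        have : (L+C)*4/l ≤ 2.02 := by
          rw [div_le_iff₀ hl0]; linarith
        linarith
      calc exp (1/4) / (l-L)^3 * exp (-(l/L)/4) * ((L+C)*4/l + 1/2) ≤ 1.29/(l/2)^3 * 1 * 2.52 := by
            gcongr
        _ = (1.29*8*2.52)/l^3 := by field_simp; norm_num
        _ ≤ 31/l^3 := by gcongr; norm_num
    have A4 : Q / l^3 ≤ (1/10)/√l * ρ / l^2 := by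
      have hq : 0 ≤ 10*Q/ρ := by positivity
      have h1 : 10*Q/ρ ≤ √l := le_sqrt_of_sq_le hlQ
      have h2 : 10*Q ≤ √l*ρ := by rwa [div_le_iff₀ hρ] at h1
      have hs0 : 0 < √l := sqrt_pos.2 hl0
      have h3 : √l * √l = l := mul_self_sqrt hl0.le
      rw [div_le_div_iff₀ (by positivity) (by positivity)]
      have : 1/10/√l*ρ*l^3 = (1/10 * (√l*ρ)) * l^2 := by
        have h4 : l / √l = √l := div_sqrt
        calc 1/10/√l*ρ*l^3 = 1/10 * ((l/√l) * ρ) * l^2 := by ring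
          _ = _ := by rw [h4]
      rw [this]
      have : Q ≤ 1/10*(√l*ρ) := by linarith
      gcongr
    have A5 : 0 ≤ exp (-(l/L)/4)/l^3 := by positivity
    have A6 : M0 * ((1 + l/L) * exp (-(l/L))) / l^3 ≤ M0/l^3 := by gcongr
    have A7 : (1/10)/√l * ρ/l^2 ≤ (ch L - ch (L/2)) * ro (l/(L/2)) / l^2 := by gcongr
    have A8 : Q/l^3 = M0/l^3 + 31/l^3 + K/l^3 := by simp only [Q]; ring
    rw [sub_div, mul_comm (ro (l/L)) (ch L)]
    linarith
  · -- large s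
    push Not at hs
    set s := l/L with hsdef
    have T := ht l L L hL1 le_rfl hL2
    rw [sub_self, zero_mul, sub_zero] at T
    refine (add_le_add_left T _).trans ?_
    unfold RR
    have A2 := hs5 s hs
    have hs0 : 0 < s := by linarith
    have eL : L = l / s := by rw [hsdef]; field_simp
    have hLs : L ≤ l/100 := by
      rw [eL]; gcongr; linarith
    set E := exp (-s/4) with hE
    have hEp : 0 < E := exp_pos _
    have A3 : exp (1/4) / (l-L)^3 * exp (-s/4) * ((L+C)*4/l + 1/2) ≤ 0.8 * E / l^3 := by
      have b1 : 0.99*l ≤ l - L := by linarith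
      have b3 : (L+C)*4/l + 1/2 ≤ 0.56 := by
        have : (L+C)*4/l ≤ 0.06 := by
          rw [div_le_iff₀ hl0]; linarith
        linarith
      calc exp (1/4) / (l-L)^3 * exp (-s/4) * ((L+C)*4/l + 1/2) ≤ 1.29/(0.99*l)^3 * E * 0.56 := by
            gcongr
        _ = (1.29/0.99^3*0.56)*E/l^3 := by field_simp
        _ ≤ 0.8*E/l^3 := by gcongr; norm_num
    have A4 : K * exp (-(l/2)) ≤ 0.01 * E / l^3 := by
      rw [le_div_iff₀ (by positivity)]
      have h1 : exp (-(l/2)) = exp (-(13/100*l)) * exp (-(37/100*l)) := by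
        rw [← exp_add]; congr 1; ring
      have h2 : exp (-(37/100*l)) ≤ E := by
        rw [hE]; apply exp_le_exp.2
        have : s ≤ l / 0.69 := by
          rw [hsdef]; gcongr; linarith
        have h3 : l/0.69 ≤ 1.46 * l := by
          rw [div_le_iff₀ (by norm_num)]; linarith
        linarith
      have h4 := hl2 l hll2
      calc K * exp (-(l/2)) * l^3 = (K*l^3*exp (-(13/100*l))) * exp (-(37/100*l)) := by rw [h1]; ring
        _ ≤ 0.01 * E := by gcongr
    have A5 : M0 * ((1 + s) * exp (-s)) / l^3 ≤ 0.01 * E / l^3 := by gcongr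
    have A6 : (0.8*E/l^3) + 0.01*E/l^3 + 0.01*E/l^3 ≤ E/l^3 := by
      rw [← add_div, ← add_div]; gcongr; linarith
    rw [mul_comm (ro s) (ch L)]
    linarith

end CI

namespace CI

lemma PB_card_le {z : ℝ} (hz : 0 ≤ z) : ((PB z).card : ℝ) ≤ z := by
  have : PB z ⊆ Finset.Icc 1 ⌊z⌋₊ := by
    intro p hp
    rw [mem_PB] at hp
    rw [Finset.mem_Icc]
    exact ⟨hp.1.one_lt.le, Nat.le_floor hp.2.le⟩
  have h := Finset.card_le_card this
  simp only [Nat.card_Icc, Nat.add_sub_cancel] at h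
  calc ((PB z).card : ℝ) ≤ ⌊z⌋₊ := by exact_mod_cast h
    _ ≤ z := Nat.floor_le hz

lemma PI_card_le {x z : ℝ} (hz : 2 ≤ z) : ((PI x z).card : ℝ) ≤ 5 * z / log z := by
  have h1 : PI x z ⊆ Nat.primesLE ⌊z⌋₊ := by
    intro p hp
    rw [mem_PI (by linarith)] at hp
    rw [Nat.mem_primesLE]
    exact ⟨Nat.le_floor hp.2.2, hp.1⟩
  have h := Finset.card_le_card h1
  rw [Nat.primesLE_card_eq_primeCounting] at h
  have h2 := Chebyshev.pi_le_log4_mul_div (x := z) (by linarith)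
  have h3 : ((PI x z).card : ℝ) ≤ (Nat.primeCounting ⌊z⌋₊ : ℝ) := by exact_mod_cast h
  refine h3.trans (h2.trans ?_)
  have hz0 : 0 < z := by linarith
  have hl : 0 < log z := log_pos (by linarith)
  have h4 : log √z = log z / 2 := log_sqrt hz0.le
  have h5 : log √z ≤ √z - 1 := log_le_sub_one_of_pos (sqrt_pos.2 hz0)
  have h6 : √z * √z = z := mul_self_sqrt hz0.le
  have h7 : √z ≤ 2 * z / log z := by
    rw [le_div_iff₀ hl]
    have : 0 ≤ √z := sqrt_nonneg z
    nlinarith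
  have h8 : log 4 = 2 * log 2 := by
    rw [show (4:ℝ) = 2^2 by norm_num, log_pow]; norm_num
  have h9 := log_two_lt_d9
  have h10 : log 4 * z / log √z = (4 * log 2) * z / log z := by
    rw [h4, h8]; field_simp; ring
  rw [h10]
  calc 4 * log 2 * z / log z + √z ≤ 3 * z / log z + 2 * z / log z := by
        gcongr; linarith
    _ = _ := by ring

lemma PB_sub_PI (z : ℝ) (hz : 0 ≤ z) : PB z ⊆ PI 2 z := by
  intro p hp
  rw [mem_PB] at hp
  rw [mem_PI hz]
  exact ⟨hp.1, by exact_mod_cast hp.1.two_le, hp.2.le⟩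

lemma PB_card_le' {z : ℝ} (hz : 2 ≤ z) : ((PB z).card : ℝ) ≤ 5 * z / log z := by
  have h := Finset.card_le_card (PB_sub_PI z (by linarith))
  exact le_trans (by exact_mod_cast h) (PI_card_le hz)

noncomputable def Ru (v z : ℝ) : ℝ := v * RR rP (log v) (log z)
noncomputable def Rl (v z : ℝ) : ℝ := v * RR rM (log v) (log z)

lemma exp_half_le {l : ℝ} (hl : 0 < l) : exp (-(l/2)) ≤ 48 / l^3 := by
  have h := Real.pow_div_factorial_le_exp (l/2) (by linarith) 3
  rw [exp_neg, inv_le_comm₀ (exp_pos _) (by positivity)]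
  refine le_trans (le_of_eq ?_) h
  simp [Nat.factorial]
  field_simp
  norm_num

lemma child_eq (r : ℝ → ℝ) {v : ℝ} (hv : 0 < v) {p : ℕ} (hp : 0 < p) :
    v / p * RR r (log (v/p)) (log p) = v * ((1:ℝ)/p * RR r (log v - log p) (log p)) := by
  have hp' : (0:ℝ) < p := by exact_mod_cast hp
  rw [log_div hv.ne' hp'.ne']
  ring

lemma L_ineq : ∃ v1 : ℝ, 1 ≤ v1 ∧ ∀ v z : ℝ, v1 ≤ v → 2 ≤ z → z ≤ √v →
    ∑ p ∈ PB z, Ru (v/p) p + (20*√v + 1) ≤ Rl v z := by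
  obtain ⟨s5, h100, hk⟩ := key_D PrM
  obtain ⟨l1, hl1, hk⟩ := hk (21*48) (by norm_num)
  refine ⟨exp l1, one_le_exp (by linarith), fun v z hv hz hzv => ?_⟩
  have hv0 : 0 < v := (exp_pos _).trans_le hv
  have hz0 : 0 < z := by linarith
  have hlv : l1 ≤ log v := by rwa [le_log_iff_exp_le hv0]
  have hlz : log 2 ≤ log z := log_le_log (by norm_num) hz
  have hlz2 : log z ≤ log v / 2 := by
    rw [← log_sqrt hv0.le]; exact log_le_log hz0 hzv
  have key := hk (log v) hlv (log z) hlz hlz2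
  rw [exp_log hz0] at key
  have hl : 0 < log v := by linarith
  have hsv : 1 ≤ √v := by
    rw [one_le_sqrt]; exact (one_le_exp (by linarith)).trans hv
  have hsq : √v = v * exp (-(log v/2)) := by
    rw [exp_neg, ← log_sqrt hv0.le, exp_log (by linarith)]
    have := mul_self_sqrt hv0.le
    field_simp
    nlinarith
  have herr : 20*√v + 1 ≤ v * (if log v/log z < s5 then 21*48/(log v)^3 else 21*48 * exp (-(log v/2))) := by
    have h1 : 20*√v + 1 ≤ v * (21 * exp (-(log v/2))) := by linarith
    refine h1.trans ?_
    gcongr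
    have := exp_pos (-(log v/2))
    split_ifs
    · have := exp_half_le hl
      calc 21 * exp (-(log v/2)) ≤ 21 * (48/(log v)^3) := by gcongr
        _ = _ := by ring
    · linarith
  have hsum : ∑ p ∈ PB z, Ru (v/p) p ≤ v * ∑ p ∈ PI 2 z, (1:ℝ)/p * RR rP (log v - log p) (log p) := by
    rw [Finset.mul_sum]
    calc ∑ p ∈ PB z, Ru (v/p) p = ∑ p ∈ PB z, v * ((1:ℝ)/p * RR rP (log v - log p) (log p)) := by
          refine Finset.sum_congr rfl fun p hp => ?_
          rw [mem_PB] at hp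
          exact child_eq _ hv0 hp.1.pos
      _ ≤ _ := by
          apply Finset.sum_le_sum_of_subset_of_nonneg (PB_sub_PI z hz0.le)
          intro p hp _
          rw [mem_PI hz0.le] at hp
          have h1 : 0 < log p := log_pos (by linarith [hp.2.1])
          have h2 : log p ≤ log z := log_le_log (by linarith [hp.2.1]) hp.2.2
          have := RR_child_nonneg PrM (l := log v) h1 (by linarith)
          positivity
  unfold Rl
  calc _ ≤ v * (∑ p ∈ PI 2 z, (1:ℝ)/p * RR rP (log v - log p) (log p)) +
      v * (if log v/log z < s5 then 21*48/(log v)^3 else 21*48 * exp (-(log v/2))) := by linarith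
    _ = v * (_ + _) := by rw [mul_add]
    _ ≤ _ := by gcongr

lemma Ru_mono {v z w : ℝ} (hv : 1 < v) (hz : 1 < z) (hzw : z ≤ w) (hw : v ≤ z^3) : Ru v z ≤ Ru v w := by
  unfold Ru RR
  have hl : 0 < log v := log_pos hv
  have hlz : 0 < log z := log_pos hz
  have hzw' : log z ≤ log w := log_le_log (by linarith) hzw
  have h3 : log v ≤ 3 * log z := by
    have := log_le_log (by linarith) hw
    rwa [log_pow] at this
  have h4 : log v / log z ≤ 3 := by rw [div_le_iff₀ hlz]; exact h3
  have h5 : log v / log w ≤ log v/log z := by gcongr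
  rw [rP_one h4, rP_one (h5.trans h4)]
  have := ch_mono hlz.le hzw'
  gcongr

lemma U_ineq : ∃ v1 : ℝ, 1 ≤ v1 ∧ ∀ v z : ℝ, v1 ≤ v → 2 ≤ z → z ≤ √v →
    ∑ p ∈ (PB z).filter (fun p : ℕ => (p:ℝ)^3 ≤ v), (Rl (v/p) p + 3 * ((PB p).card:ℝ)^2) + (20*√v + 1) + 3 * (PB z).card ≤ Ru v z := by
  obtain ⟨s5, h100, hk⟩ := key_D PrP
  set K : ℝ := 27*48 + 3*125*s5^3
  obtain ⟨l1, hl1, hk⟩ := hk K (by positivity)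
  refine ⟨exp l1, one_le_exp (by linarith), fun v z hv hz hzv => ?_⟩
  have hv0 : 0 < v := (exp_pos _).trans_le hv
  have hz0 : 0 < z := by linarith
  have hlv : l1 ≤ log v := by rwa [le_log_iff_exp_le hv0]
  have hv1 : 1 < v := lt_of_lt_of_le (by rw [one_lt_exp_iff]; linarith) hv
  have hlz : log 2 ≤ log z := log_le_log (by norm_num) hz
  have hlog2' := Real.log_two_lt_d9
  have hlog2 := Real.log_two_gt_d9
  have hl : 0 < log v := by linarith
  obtain ⟨w, hwdef⟩ : ∃ w, w = min z (exp (log v/3)) := ⟨_, rfl⟩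
  have hwz : w ≤ z := hwdef ▸ min_le_left _ _
  have hw2 : 2 ≤ w := by
    rw [hwdef, le_min_iff]
    refine ⟨hz, ?_⟩
    rw [← log_le_iff_le_exp (by norm_num)]; linarith
  have hw0 : 0 < w := by linarith
  have hlw : log w ≤ log v / 3 := by
    rw [log_le_iff_le_exp hw0, hwdef]; exact min_le_right _ _
  have hlw2 : log 2 ≤ log w := log_le_log (by norm_num) hw2
  have hlw0 : 0 < log w := by linarith
  have hRu : Ru v w ≤ Ru v z := by
    rcases le_total z (exp (log v/3)) with h | h
    · rw [hwdef, min_eq_left h]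
    · rw [min_eq_right h] at hwdef
      apply Ru_mono hv1 (by linarith) hwz
      rw [hwdef, ← exp_nat_mul]
      apply le_of_eq
      push_cast
      rw [mul_div_cancel₀ _ (by norm_num : (3:ℝ) ≠ 0), exp_log hv0]
  have key := hk (log v) hlv (log w) hlw2 hlw
  rw [exp_log hw0] at key
  have hsv : 1 ≤ √v := by rw [one_le_sqrt]; exact hv1.le
  have hsq : √v = v * exp (-(log v/2)) := by
    rw [exp_neg, ← log_sqrt hv0.le, exp_log (by linarith)]
    have := mul_self_sqrt hv0.le
    field_simp
    nlinarith
  have hsubw : (PB z).filter (fun p : ℕ => (p:ℝ)^3 ≤ v) ⊆ PI 2 w := by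
    intro p hp
    rw [Finset.mem_filter, mem_PB] at hp
    rw [mem_PI hw0.le]
    obtain ⟨⟨h1, h2⟩, h3⟩ := hp
    have h4 : (2:ℝ) ≤ p := by exact_mod_cast h1.two_le
    refine ⟨h1, h4, ?_⟩
    rw [hwdef, le_min_iff]
    refine ⟨h2.le, ?_⟩
    rw [← log_le_iff_le_exp (by linarith)]
    have := log_le_log (by positivity) h3
    rw [log_pow] at this
    push_cast at this
    linarith
  have hc1 : ((PI 2 w).card : ℝ) ≤ w := by
    have : PI 2 w ⊆ Finset.Icc 1 ⌊w⌋₊ := by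
      intro p hp
      rw [mem_PI hw0.le] at hp
      rw [Finset.mem_Icc]
      exact ⟨hp.1.one_lt.le, Nat.le_floor hp.2.2⟩
    have h := Finset.card_le_card this
    simp only [Nat.card_Icc, Nat.add_sub_cancel] at h
    calc ((PI 2 w).card : ℝ) ≤ ⌊w⌋₊ := by exact_mod_cast h
      _ ≤ w := Nat.floor_le hw0.le
  have herr0 : ∑ p ∈ (PB z).filter (fun p : ℕ => (p:ℝ)^3 ≤ v), 3 * ((PB p).card:ℝ)^2 ≤ 3 * ((PI 2 w).card:ℝ)^3 := by
    calc _ ≤ ∑ p ∈ PI 2 w, 3 * ((PI 2 w).card:ℝ)^2 := by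
          refine (Finset.sum_le_sum_of_subset_of_nonneg hsubw (fun _ _ _ => by positivity)).trans ?_
          apply Finset.sum_le_sum
          intro p hp
          have : (PB p).card ≤ (PI 2 w).card := by
            apply Finset.card_le_card
            intro q hq
            rw [mem_PI hw0.le] at hp ⊢
            rw [mem_PB] at hq
            exact ⟨hq.1, by exact_mod_cast hq.1.two_le, by linarith [hq.2, hp.2.2]⟩
          gcongr
      _ = _ := by rw [Finset.sum_const, nsmul_eq_mul]; ring
  have herr : 3 * ((PI 2 w).card:ℝ)^3 + (20*√v + 1) + 3 * (PB z).card ≤ v * (if log v/log w < s5 then K/(log v)^3 else K * exp (-(log v/2))) := by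
    have h0 : 3 * ((PB z).card:ℝ) ≤ 3 * √v := by
      have := PB_card_le hz0.le
      linarith
    have he := exp_pos (-(log v/2))
    have h1 : (20*√v + 1) + 3 * (PB z).card ≤ v * (24 * exp (-(log v/2))) := by linarith
    split_ifs with hs
    · have h2 := exp_half_le hl
      have h3 : 3 * ((PI 2 w).card:ℝ)^3 ≤ v * (3*125*s5^3/(log v)^3) := by
        have h4 := PI_card_le (x := 2) hw2
        have h5 : ((PI 2 w).card:ℝ)^3 ≤ (5*w/log w)^3 := by gcongr
        have h6 : w^3 ≤ v := by
          rw [← log_le_log_iff (by positivity) hv0, log_pow]; push_cast; linarith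
        have h7 : log v < s5 * log w := by rwa [div_lt_iff₀ hlw0] at hs
        have h8 : 1/log w ≤ s5 / log v := by
          rw [div_le_div_iff₀ hlw0 hl]; linarith
        calc 3 * ((PI 2 w).card:ℝ)^3 ≤ 3*(5*w/log w)^3 := by gcongr
          _ = 3*125*w^3*(1/log w)^3 := by ring
          _ ≤ 3*125*v*(s5/log v)^3 := by gcongr
          _ = _ := by ring
      have h5 : 24 * exp (-(log v/2)) ≤ 27 * 48 /(log v)^3 := by
        calc 24 * exp (-(log v/2)) ≤ 27 * (48/(log v)^3) := by gcongr; norm_num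
          _ = _ := by ring
      have h6 : K / (log v)^3 = 27*48/(log v)^3 + 3*125*s5^3/(log v)^3 := by simp only [K]; ring
      rw [h6, mul_add]
      have : v * (24 * exp (-(log v/2))) ≤ v * (27 * 48 /(log v)^3) := by gcongr
      linarith
    · push Not at hs
      have h2 : 100 * log w ≤ log v := by
        rw [le_div_iff₀ hlw0] at hs
        nlinarith
      have h3 : w^3 ≤ √v := by
        rw [← log_le_log_iff (by positivity) (by linarith), log_pow, log_sqrt hv0.le]; push_cast; linarith
      have h4 : ((PI 2 w).card:ℝ)^3 ≤ w^3 := by gcongr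
      have h5 : 27 ≤ K := by
        have : 0 ≤ 3*125*s5^3 := by positivity
        simp only [K]; linarith
      calc _ ≤ v * (27 * exp (-(log v/2))) := by linarith
        _ ≤ _ := by gcongr
  have hsum : ∑ p ∈ (PB z).filter (fun p : ℕ => (p:ℝ)^3 ≤ v), Rl (v/p) p ≤ v * ∑ p ∈ PI 2 w, (1:ℝ)/p * RR rM (log v - log p) (log p) := by
    rw [Finset.mul_sum]
    calc _ = ∑ p ∈ (PB z).filter (fun p : ℕ => (p:ℝ)^3 ≤ v), v * ((1:ℝ)/p * RR rM (log v - log p) (log p)) := by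
          refine Finset.sum_congr rfl fun p hp => ?_
          rw [Finset.mem_filter, mem_PB] at hp
          exact child_eq _ hv0 hp.1.1.pos
      _ ≤ _ := by
          apply Finset.sum_le_sum_of_subset_of_nonneg hsubw
          intro p hp _
          rw [mem_PI hw0.le] at hp
          have h1 : 0 < log p := log_pos (by linarith [hp.2.1])
          have h2 : log p ≤ log w := log_le_log (by linarith [hp.2.1]) hp.2.2
          have := RR_child_nonneg PrP (l := log v) h1 (by linarith)
          positivity
  refine le_trans ?_ hRu
  unfold Ru
  rw [Finset.sum_add_distrib]
  calc _ ≤ v * (∑ p ∈ PI 2 w, (1:ℝ)/p * RR rM (log v - log p) (log p)) +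
      v * (if log v/log w < s5 then K/(log v)^3 else K * exp (-(log v/2))) := by linarith
    _ = v * (_ + _) := by rw [mul_add]
    _ ≤ _ := by gcongr

end CI

namespace CI

open ArithmeticFunction in
lemma rough_pow {z : ℝ} (hz : 0 ≤ z) : ∀ n : ℕ, 1 ≤ n → Rough z n → z ^ (cardFactors n) ≤ n := by
  intro n
  induction n using Nat.strong_induction_on with
  | _ n ih =>
    intro hn hr
    rcases eq_or_ne n 1 with rfl | h1
    · simp
    · have hp := Nat.minFac_prime h1
      obtain ⟨m, hm⟩ := Nat.minFac_dvd n
      set p := n.minFac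
      have hm0 : m ≠ 0 := by rintro rfl; omega
      have hmn : m < n := by
        rw [hm]
        exact lt_mul_of_one_lt_left (Nat.pos_of_ne_zero hm0) hp.one_lt
      have hrm : Rough z m := fun q hq hd => hr q hq (hd.trans (hm ▸ dvd_mul_left m p))
      have h2 := ih m hmn (Nat.pos_of_ne_zero hm0) hrm
      have h3 := hr p hp (hm ▸ dvd_mul_right p m)
      rw [hm, cardFactors_mul hp.ne_zero hm0, cardFactors_apply_prime hp, pow_add, pow_one]
      push_cast
      gcongr

lemma even_rough {z : ℝ} (hz : 1 ≤ z) {n : ℕ} (hn : 1 ≤ n) (hr : Rough z n) (hlt : (n:ℝ) < z^2) (he : evenI n ≠ 0) : n = 1 := by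
  have h := rough_pow (by linarith) n hn hr
  unfold evenI at he
  have hev : Even (ArithmeticFunction.cardFactors n) := by
    by_contra hc; rw [if_neg hc] at he; exact he rfl
  have h2 : ArithmeticFunction.cardFactors n < 2 := by
    by_contra hc
    push Not at hc
    have : z^2 ≤ z^(ArithmeticFunction.cardFactors n) := pow_le_pow_right₀ hz hc
    linarith
  have h0 : ArithmeticFunction.cardFactors n = 0 := by
    obtain ⟨k, hk⟩ := hev; omega
  rw [ArithmeticFunction.cardFactors_eq_zero_iff_eq_zero_or_one] at h0
  omega

lemma odd_rough {z : ℝ} (hz : 1 < z) {n : ℕ} (hn : 1 ≤ n) (hr : Rough z n) (hlt : (n:ℝ) ≤ z^2) (he : oddI n ≠ 0) : n.Prime := by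
  have h := rough_pow (by linarith) n hn hr
  unfold oddI at he
  have hev : Odd (ArithmeticFunction.cardFactors n) := by
    by_contra hc; rw [if_neg hc] at he; exact he rfl
  have h2 : ArithmeticFunction.cardFactors n < 3 := by
    by_contra hc
    push Not at hc
    have : z^3 ≤ z^(ArithmeticFunction.cardFactors n) := pow_le_pow_right₀ hz.le hc
    have : z^2 < z^3 := pow_lt_pow_right₀ hz (by norm_num)
    linarith
  have h0 : ArithmeticFunction.cardFactors n = 1 := by
    obtain ⟨k, hk⟩ := hev; omega
  exact ArithmeticFunction.cardFactors_eq_one_iff_prime.1 h0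

lemma g_small (N : ℕ) {w : ℝ} {z : ℝ} (hz : 1 ≤ z) (h : w < z^2) : g N w z ≤ 3 := by
  have := sum_wf_le N w z evenI evenI_le {1} (by
    intro n hn _ hw hr he
    rw [Finset.mem_singleton]
    exact even_rough hz hn hr (by linarith) he)
  simpa [g] using this

lemma G_change (N : ℕ) {w y z : ℝ} (hy : 1 < y) (hyz : y ≤ z) (hw : w ≤ y^2) :
    G N w y ≤ G N w z + 3 * (PB z).card := by
  classical
  have h1 := sum_wf_le N w y (fun n => oddI n * (if Rough z n then 0 else 1)) (by
    intro n
    have := oddI_le n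
    split_ifs <;> simp <;> linarith) (PB z) (by
    intro n hn _ hw' hr he
    have ho : oddI n ≠ 0 := fun h => he (by simp [h])
    have hnr : ¬ Rough z n := fun h => he (by simp [h])
    have hp := odd_rough hy hn hr (by linarith) ho
    rw [mem_PB]
    refine ⟨hp, ?_⟩
    by_contra hc
    push Not at hc
    apply hnr
    intro q hq hd
    rwa [(Nat.prime_dvd_prime_iff_eq hq hp).1 hd])
  have h2 : RS N z = (RS N y).filter (Rough z) := by
    ext n
    simp only [mem_RS, Finset.mem_filter]
    constructor
    · rintro ⟨h, h'⟩; exact ⟨⟨h, rough_mono hyz h'⟩, h'⟩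
    · rintro ⟨⟨h, _⟩, h'⟩; exact ⟨h, h'⟩
  unfold G
  rw [h2, Finset.sum_filter]
  have h3 : ∑ n ∈ RS N y, oddI n * f (w/n) = ∑ n ∈ RS N y, (if Rough z n then oddI n * f (w/n) else 0)
     + ∑ n ∈ RS N y, oddI n * (if Rough z n then 0 else 1) * f (w/n) := by
    rw [← Finset.sum_add_distrib]
    refine Finset.sum_congr rfl fun n _ => ?_
    split_ifs <;> simp
  rw [h3, mul_add]
  linarith

lemma R_lower {r : ℝ → ℝ} (hr : ∀ s, 0 < r s) {v z v1 : ℝ} (hv : 4 ≤ v) (hv1 : v ≤ v1) (hz : 2 ≤ z) :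
    exp (-(log v1/log 2)/4) / (log v1)^3 ≤ v * RR r (log v) (log z) := by
  have l2 : 0 < log 2 := log_pos (by norm_num)
  have hlv : 0 < log v := log_pos (by linarith)
  have hlv1 : log v ≤ log v1 := log_le_log (by linarith) hv1
  have hlz : log 2 ≤ log z := log_le_log (by norm_num) hz
  have hl1 : 0 ≤ log v1 := by linarith
  have h1 : log v/log z ≤ log v1/log 2 := by gcongr
  have h2 : exp (-(log v1/log 2)/4) / (log v1)^3 ≤ exp (-(log v/log z)/4)/(log v)^3 := by gcongr
  unfold RR
  have h3 : 0 ≤ r (log v/log z) * ch (log z) / (log v)^2 := by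
    have := ch_nonneg (l2.le.trans hlz)
    have := (hr (log v/log z)).le
    positivity
  have h4 : 0 ≤ exp (-(log v/log z)/4)/(log v)^3 := by positivity
  nlinarith

lemma R_nonneg {r : ℝ → ℝ} (hr : ∀ s, 0 < r s) {v z : ℝ} (hv : 4 ≤ v) (hz : 2 ≤ z) :
    0 ≤ v * RR r (log v) (log z) := by
  refine le_trans ?_ (R_lower hr hv le_rfl hz)
  have : 0 < log v := log_pos (by linarith)
  positivity

lemma g_triv (N : ℕ) {v z : ℝ} (hv : 0 ≤ v) : g N v z ≤ 3 * v := by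
  have := sum_wf_le N v z evenI evenI_le (Finset.Icc 1 ⌊v⌋₊) (by
    intro n hn _ hw hr he
    rw [Finset.mem_Icc]
    exact ⟨hn, Nat.le_floor hw⟩)
  simp only [Nat.card_Icc, Nat.add_sub_cancel] at this
  have h := Nat.floor_le hv
  unfold g
  linarith

set_option maxHeartbeats 1000000 in
theorem induct : ∃ A : ℝ, 1 ≤ A ∧ ∀ (N : ℕ) (a b z : ℝ), 0 ≤ a → b ≤ N → 4 ≤ b - a → 2 ≤ z → z ≤ √(b-a) →
    S N a b z ≤ G N (b-a) z + A * Ru (b-a) z ∧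
    g N (b-a) z - A * Rl (b-a) z - 3 * ((PB z).card:ℝ)^2 ≤ S N a b z := by
  obtain ⟨vU, hvU, hU⟩ := U_ineq
  obtain ⟨vL, hvL, hL⟩ := L_ineq
  set v1 := max 16 (max vU vL) with hv1
  set ρ := exp (-(log v1/log 2)/4) / (log v1)^3
  have hρ : 0 < ρ := by
    have : 0 < log v1 := log_pos (lt_of_lt_of_le (by norm_num) (le_max_left _ _))
    positivity
  have hv16 : 16 ≤ v1 := le_max_left _ _
  refine ⟨max 1 ((3*v1+1)/ρ), le_max_left _ _, ?_⟩
  set A := max 1 ((3*v1+1)/ρ)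
  have hA1 : 1 ≤ A := le_max_left _ _
  have hAρ : 3*v1+1 ≤ A * ρ := by
    have : (3*v1+1)/ρ ≤ A := le_max_right _ _
    rwa [div_le_iff₀ hρ] at this
  have main : ∀ n : ℕ, ∀ (N : ℕ) (a b z : ℝ), b - a ≤ 2^n → 0 ≤ a → b ≤ N → 4 ≤ b - a → 2 ≤ z → z ≤ √(b-a) →
    S N a b z ≤ G N (b-a) z + A * Ru (b-a) z ∧
    g N (b-a) z - A * Rl (b-a) z - 3 * ((PB z).card:ℝ)^2 ≤ S N a b z := by
    intro n
    induction n with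
    | zero => intro N a b z h; norm_num at h; intros; linarith
    | succ n ih =>
      intro N a b z hn ha hb hv hz hzv
      set v := b - a with hvdef
      have hS2 := S_two N a b ha (by linarith) hb
      rw [abs_le] at hS2
      rcases le_total v v1 with hsm | hbig
      · -- base
        have h1 := R_lower (r := rP) (fun s => (r_pos s).1) hv hsm hz
        have h2 := R_lower (r := rM) (fun s => (r_pos s).2) hv hsm hz
        have h1' : A * ρ ≤ A * Ru v z := by unfold Ru; gcongr
        have h2' : A * ρ ≤ A * Rl v z := by unfold Rl; gcongr
        constructor
        · have h3 := S_anti N a b hz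
          have h4 := G_nonneg N v z
          linarith
        · have h3 := g_triv N (v := v) (z := z) (by linarith)
          have h4 := S_nonneg N a b z
          have h5 : 0 ≤ 3 * ((PB z).card:ℝ)^2 := by positivity
          linarith
      · have hvU' : vU ≤ v := (le_max_left _ _).trans ((le_max_right _ _).trans hbig)
        have hvL' : vL ≤ v := (le_max_right _ _).trans ((le_max_right _ _).trans hbig)
        have hU' := hU v z hvU' hz hzv
        have hL' := hL v z hvL' hz hzv
        have hv0 : 0 < v := by linarith
        have hss : √v * √v = v := mul_self_sqrt hv0.le
        have hs4 : 4 ≤ √v := by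
          apply le_sqrt_of_sq_le; linarith
        have hvN : v ≤ N := by linarith
        have hGg := Gg_two N v (by linarith) hvN
        rw [abs_le, abs_le] at hGg
        have hSb := S_buchstab N a b z hb
        have hGb := G_buchstab N v z hvN
        have hgb := g_buchstab N v z hvN
        -- child facts
        have child : ∀ p ∈ PB z, p.Prime ∧ (2:ℝ) ≤ p ∧ (p:ℝ) < z ∧ b/p - a/p = v/p ∧ v/p ≤ 2^n ∧ 0 ≤ a/p ∧ b/p ≤ N ∧ 4 ≤ v/p := by
          intro p hp
          rw [mem_PB] at hp
          have h2 : (2:ℝ) ≤ p := by exact_mod_cast hp.1.two_le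
          have hp0 : (0:ℝ) < p := by linarith
          refine ⟨hp.1, h2, hp.2, by rw [hvdef]; ring, ?_, by positivity, ?_, ?_⟩
          · rw [div_le_iff₀ hp0]
            rw [pow_succ] at hn
            have : (0:ℝ) < 2^n := by positivity
            nlinarith
          · refine le_trans (div_le_self (by linarith) (by linarith)) hb
          · rw [le_div_iff₀ hp0]
            nlinarith [hp.2]
        constructor
        · -- upper
          have hc : ∑ p ∈ PB z, g N (v/p) p - ∑ p ∈ PB z, S N (a/p) (b/p) p ≤
              A * ∑ p ∈ (PB z).filter (fun p : ℕ => (p:ℝ)^3 ≤ v), (Rl (v/p) p + 3 * ((PB p).card:ℝ)^2) + 3 * (PB z).card := by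
            rw [← Finset.sum_sub_distrib, Finset.mul_sum, Finset.sum_filter]
            have : (3 * (PB z).card : ℝ) = ∑ p ∈ PB z, (3:ℝ) := by simp [mul_comm]
            rw [this, ← Finset.sum_add_distrib]
            apply Finset.sum_le_sum
            intro p hp
            obtain ⟨hpp, h2, hpz, hd, hh, ha', hb', h4⟩ := child p hp
            have hp0 : (0:ℝ) < p := by linarith
            split_ifs with hp3
            · have hps : (p:ℝ) ≤ √(v/p) := by
                apply le_sqrt_of_sq_le
                rw [le_div_iff₀ hp0]; linarith [pow_succ (p:ℝ) 2]
              have := (ih N (a/p) (b/p) p (by rw [hd]; exact hh) ha' hb' (by rw [hd]; exact h4) h2 (by rw [hd]; exact hps)).2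
              rw [hd] at this
              have q : 0 ≤ 3 * ((PB p).card:ℝ)^2 := by positivity
              have q2 := le_mul_of_one_le_left q hA1
              rw [mul_add]
              linarith
            · push Not at hp3
              have := g_small N (w := v/p) (z := p) (by linarith) (by
                rw [div_lt_iff₀ hp0]; linarith [pow_succ (p:ℝ) 2])
              have := S_nonneg N (a/p) (b/p) p
              linarith
          have hcard : (0:ℝ) ≤ (PB z).card := by positivity
          have := mul_le_mul_of_nonneg_left hU' (by linarith : 0 ≤ A)
          rw [mul_add, mul_add] at this
          have q1 := le_mul_of_one_le_left (by positivity : 0 ≤ 20*√v+1) hA1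
          have q2 := le_mul_of_one_le_left (by positivity : (0:ℝ) ≤ 3 * (PB z).card) hA1
          linarith
        · -- lower
          have hc : ∑ p ∈ PB z, S N (a/p) (b/p) p - ∑ p ∈ PB z, G N (v/p) p ≤
              A * ∑ p ∈ PB z, Ru (v/p) p + 3 * ((PB z).card:ℝ)^2 := by
            rw [← Finset.sum_sub_distrib, Finset.mul_sum]
            have : (3 * ((PB z).card:ℝ)^2 : ℝ) = ∑ p ∈ PB z, (3 * (PB z).card:ℝ) := by
              rw [Finset.sum_const, nsmul_eq_mul]; ring
            rw [this, ← Finset.sum_add_distrib]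
            apply Finset.sum_le_sum
            intro p hp
            obtain ⟨hpp, h2, hpz, hd, hh, ha', hb', h4⟩ := child p hp
            have hp0 : (0:ℝ) < p := by linarith
            rcases le_or_gt ((p:ℝ)^3) v with hp3 | hp3
            · have hps : (p:ℝ) ≤ √(v/p) := by
                apply le_sqrt_of_sq_le
                rw [le_div_iff₀ hp0]; linarith [pow_succ (p:ℝ) 2]
              have := (ih N (a/p) (b/p) p (by rw [hd]; exact hh) ha' hb' (by rw [hd]; exact h4) h2 (by rw [hd]; exact hps)).1
              rw [hd] at this
              have q : (0:ℝ) ≤ 3 * (PB z).card := by positivity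
              linarith
            · set w := v/p with hw
              have hw0 : 0 < w := by linarith
              have hw2 : 2 ≤ √w := by apply le_sqrt_of_sq_le; linarith
              have hww : √w^2 = w := sq_sqrt hw0.le
              have hwp : √w ≤ p := by
                rw [sqrt_le_left hp0.le, hw, div_le_iff₀ hp0]
                linarith [pow_succ (p:ℝ) 2]
              have h5 := (ih N (a/p) (b/p) (√w) (by rw [hd]; exact hh) ha' hb' (by rw [hd]; exact h4) hw2 (by rw [hd])).1
              rw [hd] at h5
              have h6 := S_anti N (a/p) (b/p) hwp
              have h7 := G_change N (w := w) (y := √w) (z := p) (by linarith) hwp hww.ge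
              have h8 : Ru w √w ≤ Ru w p := Ru_mono (by linarith) (by linarith) hwp (by
                rw [pow_succ, hww]; nlinarith)
              have h9 : ((PB p).card:ℝ) ≤ (PB z).card := by
                have : PB p ⊆ PB z := by
                  intro q hq
                  rw [mem_PB] at *
                  exact ⟨hq.1, by linarith⟩
                exact_mod_cast Finset.card_le_card this
              have h10 : A * Ru w √w ≤ A * Ru w p := by gcongr
              linarith
          have := mul_le_mul_of_nonneg_left hL' (by linarith : 0 ≤ A)
          rw [mul_add] at this
          have q1 := le_mul_of_one_le_left (by positivity : 0 ≤ 20*√v+1) hA1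
          linarith
  intro N a b z ha hb hv hz hzv
  obtain ⟨n, hn⟩ := pow_unbounded_of_one_lt (b-a) (show (1:ℝ) < 2 by norm_num)
  exact main n N a b z hn.le ha hb hv hz hzv

end CI

namespace CI

lemma log_small (e : ℝ) (he : 0 < e) : ∃ u0 : ℝ, 100 ≤ u0 ∧ ∀ u, u0 ≤ u → log u ≤ e * √u := by
  have h := (isLittleO_log_rpow_atTop (show (0:ℝ) < 1/2 by norm_num)).bound he
  obtain ⟨u0, hu⟩ := (h.and (Filter.eventually_ge_atTop 100)).exists_forall_of_atTop
  refine ⟨u0, (hu u0 le_rfl).2, fun u h => ?_⟩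
  have h1 := (hu u h).1
  rw [← sqrt_eq_rpow, norm_of_nonneg (sqrt_nonneg u)] at h1
  exact (le_norm_self _).trans h1

lemma sum_log_fact (n : ℕ) : ∑ m ∈ Finset.Ioc 0 n, log m = log (n.factorial) := by
  induction n with
  | zero => simp
  | succ n ih =>
    rw [Finset.sum_Ioc_succ_top (by omega), ih, Nat.factorial_succ]
    push_cast
    rw [log_mul (by positivity) (by positivity)]
    ring

lemma fact_low (n : ℕ) : 2^n * ((n/2).factorial * (n/2).factorial) ≤ (n+1) * n.factorial := by
  have h1 : 2^n ≤ (n+1) * n.choose (n/2) := by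
    rw [← Nat.sum_range_choose]
    calc _ ≤ ∑ k ∈ Finset.range (n+1), n.choose (n/2) := Finset.sum_le_sum fun k _ => Nat.choose_le_middle k n
      _ = _ := by simp
  have h2 := Nat.choose_mul_factorial_mul_factorial (n := n) (k := n/2) (by omega)
  have h3 : (n/2).factorial ≤ (n - n/2).factorial := Nat.factorial_le (by omega)
  calc 2^n * ((n/2).factorial * (n/2).factorial) ≤ ((n+1) * n.choose (n/2)) * ((n/2).factorial * (n-n/2).factorial) := by gcongr
    _ = (n+1) * (n.choose (n/2) * (n/2).factorial * (n-n/2).factorial) := by ring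
    _ = _ := by rw [h2]

open ArithmeticFunction hiding log in
lemma lam_f {u : ℝ} (hu : 1 ≤ u) : (u-1) * log 2 - log (u+1) ≤ ∑ n ∈ Finset.Ioc 0 ⌊u⌋₊, vonMangoldt n * f (u/n) := by
  set n := ⌊u⌋₊ with hn
  have hfl : ⌊u/2⌋₊ = n/2 := by
    have := floor_div u 2
    simpa using this
  have h1 : ∑ d ∈ Finset.Ioc 0 n, vonMangoldt d * f (u/d) = log (n.factorial) - 2 * log ((n/2).factorial) := by
    rw [← sum_log_fact, ← sum_log_fact, logfact, logfact, Finset.mul_sum]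
    have : ∑ d ∈ Finset.Ioc 0 (n/2), 2 * (vonMangoldt d * (((n/2)/d : ℕ):ℝ)) = ∑ d ∈ Finset.Ioc 0 n, 2 * (vonMangoldt d * (((n/2)/d : ℕ):ℝ)) := by
      apply Finset.sum_subset
      · intro d hd; simp at *; omega
      · intro d hd hd'
        simp only [Finset.mem_Ioc, not_and, not_le] at hd hd'
        rw [Nat.div_eq_of_lt (hd' hd.1)]; simp
    rw [this, ← Finset.sum_sub_distrib]
    refine Finset.sum_congr rfl fun d _ => ?_
    rw [f_div, hfl]
    ring
  rw [h1]
  have h2 : (2:ℝ)^n * ((n/2).factorial * (n/2).factorial) ≤ (n+1) * n.factorial := by exact_mod_cast fact_low n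
  have h3 := log_le_log (by positivity) h2
  rw [log_mul (by positivity) (by positivity), log_mul (by positivity) (by positivity), log_mul (by positivity) (by positivity), log_pow] at h3
  have h4 : u < n + 1 := Nat.lt_floor_add_one u
  have h5 : (n:ℝ) ≤ u := Nat.floor_le (by linarith)
  have h6 : log (n+1) ≤ log (u+1) := log_le_log (by positivity) (by linarith)
  have h7 : 0 < log 2 := log_pos (by norm_num)
  have h8 : (u-1) * log 2 ≤ n * log 2 := by gcongr; linarith
  linarith

open ArithmeticFunction hiding log in
lemma prime_f : ∃ u0 : ℝ, 100 ≤ u0 ∧ ∀ u p : ℝ, u0 ≤ u → 0 ≤ p → p ≤ u / 100 →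
    u/2 ≤ ∑ q ∈ PI p u, log q * f (u/q) := by
  obtain ⟨u0, h100, hlog⟩ := log_small (1/100) (by norm_num)
  refine ⟨u0, h100, fun u p hu hp0 hp => ?_⟩
  have hu0 : 0 < u := by linarith
  have h1 := lam_f (u := u) (by linarith)
  have h2 := Chebyshev.psi_sub_theta_le (x := u) (by linarith)
  have h3 := Chebyshev.theta_le_log4_mul_x hp0
  have h4 := hlog u hu
  have hss : √u * √u = u := mul_self_sqrt hu0.le
  have hs10 : 10 ≤ √u := by apply le_sqrt_of_sq_le; linarith
  have h5 := log_upper u hu0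
  have h6 : 1/u ≤ 1 := by rw [div_le_one hu0]; linarith
  have l1 := log_two_gt_d9
  have l2 := log_two_lt_d9
  have l4 : log 4 = 2 * log 2 := by
    rw [show (4:ℝ) = 2^2 by norm_num, log_pow]; norm_num
  have key : ∑ n ∈ Finset.Ioc 0 ⌊u⌋₊, vonMangoldt n * f (u/n) ≤
      (Chebyshev.psi u - Chebyshev.theta u) + Chebyshev.theta p + ∑ q ∈ PI p u, log q * f (u/q) := by
    have e1 : Chebyshev.psi u - Chebyshev.theta u = ∑ n ∈ Finset.Ioc 0 ⌊u⌋₊, (vonMangoldt n - if n.Prime then log n else 0) := by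
      unfold Chebyshev.psi Chebyshev.theta
      rw [Finset.sum_sub_distrib, Finset.sum_filter]
    have e2 : Chebyshev.theta p = ∑ n ∈ Finset.Ioc 0 ⌊u⌋₊, (if n.Prime ∧ (n:ℝ) ≤ p then log n else 0) := by
      unfold Chebyshev.theta
      rw [← Finset.sum_filter]
      apply Finset.sum_congr _ (fun _ _ => rfl)
      ext n
      simp only [Finset.mem_filter, Finset.mem_Ioc, Nat.le_floor_iff hp0, Nat.le_floor_iff hu0.le]
      constructor
      · rintro ⟨⟨a, b⟩, c⟩; exact ⟨⟨a, by linarith⟩, c, b⟩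
      · rintro ⟨⟨a, b⟩, c, d⟩; exact ⟨⟨a, d⟩, c⟩
    have e3 : ∑ q ∈ PI p u, log q * f (u/q) = ∑ n ∈ Finset.Ioc 0 ⌊u⌋₊, (if n.Prime ∧ p ≤ n then log n * f (u/n) else 0) := by
      rw [← Finset.sum_filter]
      apply Finset.sum_congr _ (fun _ _ => rfl)
      ext n
      simp only [mem_PI hu0.le, Finset.mem_filter, Finset.mem_Ioc, Nat.le_floor_iff hu0.le]
      constructor
      · rintro ⟨a, b, c⟩; exact ⟨⟨a.pos, c⟩, a, b⟩
      · rintro ⟨⟨a, b⟩, c, d⟩; exact ⟨c, d, b⟩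
    rw [e1, e2, e3, ← Finset.sum_add_distrib, ← Finset.sum_add_distrib]
    apply Finset.sum_le_sum
    intro n hn
    rw [Finset.mem_Ioc] at hn
    have f0 := f_nonneg (u/n)
    have f1 := f_le_one (u/n)
    have hv0 : 0 ≤ vonMangoldt n := vonMangoldt_nonneg
    by_cases hpr : n.Prime
    · have hl : 0 ≤ log n := log_natCast_nonneg n
      rw [vonMangoldt_apply_prime hpr]
      rcases le_total (n:ℝ) p with h | h
      · have : 0 ≤ (if n.Prime ∧ p ≤ n then log n * f (u/n) else 0) := by
          split_ifs
          · positivity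
          · rfl
        rw [if_pos hpr, if_pos ⟨hpr, h⟩]
        nlinarith
      · have : 0 ≤ (if n.Prime ∧ (n:ℝ) ≤ p then log n else 0) := by
          split_ifs
          · positivity
          · rfl
        rw [if_pos hpr, if_pos (⟨hpr, h⟩ : n.Prime ∧ p ≤ n)]
        linarith
    · simp only [hpr, false_and, if_false]
      nlinarith
  have h7 : √u * log u ≤ u/100 := by
    calc √u * log u ≤ √u * (1/100*√u) := by gcongr
      _ = 1/100 * (√u*√u) := by ring
      _ = _ := by rw [hss]; ring
  have h8 : log u ≤ u/100 := by nlinarith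
  nlinarith

lemma block : ∃ x0 : ℝ, 100 ≤ x0 ∧ ∀ x : ℝ, x0 ≤ x →
    1/(8*log (8*x)) ≤ ∑ p ∈ (PI x (8*x)).filter (fun p : ℕ => x < p), (1:ℝ)/p := by
  obtain ⟨u0, h100, hlog⟩ := log_small (1/100) (by norm_num)
  refine ⟨u0, h100, fun x hx => ?_⟩
  have hx0 : 0 < x := by linarith
  have h1 := Chebyshev.theta_ge' (x := 8*x) (by linarith)
  have h3 := Chebyshev.theta_le_log4_mul_x hx0.le
  have h4 := hlog (8*x) (by linarith)
  have hss : √(8*x) * √(8*x) = 8*x := mul_self_sqrt (by linarith)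
  have hs10 : 10 ≤ √(8*x) := by apply le_sqrt_of_sq_le; linarith
  have l1 := log_two_gt_d9
  have l2 := log_two_lt_d9
  have l4 : log 4 = 2 * log 2 := by
    rw [show (4:ℝ) = 2^2 by norm_num, log_pow]; norm_num
  have h5 : log (8*x+2) ≤ log 2 + log (8*x) := by
    rw [← log_mul (by norm_num) (by linarith)]
    exact log_le_log (by linarith) (by linarith)
  have h7 : √(8*x) * log (8*x) ≤ 8*x/100 := by
    calc √(8*x) * log (8*x) ≤ √(8*x) * (1/100*√(8*x)) := by gcongr
      _ = 1/100 * (√(8*x)*√(8*x)) := by ring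
      _ = _ := by rw [hss]; ring
  have h8 : log (8*x) ≤ 8*x/100 := by nlinarith
  have hl0 : 0 < log (8*x) := log_pos (by linarith)
  have hd : x ≤ Chebyshev.theta (8*x) - Chebyshev.theta x := by
    have : log 4 * x ≤ 1.4 * x := by gcongr; linarith
    nlinarith
  have key : Chebyshev.theta (8*x) - Chebyshev.theta x ≤ (8*x*log (8*x)) * ∑ p ∈ (PI x (8*x)).filter (fun p : ℕ => x < p), (1:ℝ)/p := by
    unfold Chebyshev.theta
    have hsub : (Finset.Ioc 0 ⌊x⌋₊).filter Nat.Prime ⊆ (Finset.Ioc 0 ⌊8*x⌋₊).filter Nat.Prime := by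
      apply Finset.filter_subset_filter
      apply Finset.Ioc_subset_Ioc_right
      apply Nat.floor_le_floor; linarith
    rw [← Finset.sum_sdiff hsub, add_sub_cancel_right, Finset.mul_sum]
    calc _ ≤ ∑ p ∈ (PI x (8*x)).filter (fun p : ℕ => x < p), log p := by
          apply Finset.sum_le_sum_of_subset_of_nonneg
          · intro p hp
            simp only [Finset.mem_sdiff, Finset.mem_filter, Finset.mem_Ioc, not_and, Nat.le_floor_iff hx0.le, Nat.le_floor_iff (show 0 ≤ 8*x by linarith)] at hp
            obtain ⟨⟨⟨a, b⟩, c⟩, d⟩ := hp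
            have hxp : x < p := by
              by_contra hc
              push Not at hc
              exact d ⟨a, hc⟩ c
            rw [Finset.mem_filter, mem_PI (by linarith)]
            exact ⟨⟨c, hxp.le, b⟩, hxp⟩
          · intro p _ _; exact log_natCast_nonneg p
      _ ≤ _ := by
          apply Finset.sum_le_sum
          intro p hp
          rw [Finset.mem_filter, mem_PI (by linarith)] at hp
          have hp0 : (0:ℝ) < p := by linarith [hp.2]
          have a1 : log p ≤ log (8*x) := log_le_log hp0 hp.1.2.2
          have a2 : 1 ≤ 8*x*(1/p) := by
            rw [mul_one_div, le_div_iff₀ hp0]; linarith [hp.1.2.2]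
          nlinarith
  rw [div_le_iff₀ (by positivity)]
  have := hd.trans key
  have h9 : x * 1 ≤ x * ((∑ p ∈ (PI x (8*x)).filter (fun p : ℕ => x < p), (1:ℝ)/p) * (8*log (8*x))) := by
    linarith
  exact le_of_mul_le_mul_left h9 hx0

lemma blocks : ∃ x0 : ℝ, 100 ≤ x0 ∧ ∀ (z l : ℝ), x0 ≤ z → ∀ k : ℕ, log (z * 8^k) ≤ l →
    k / (8*l) ≤ ∑ p ∈ PI z (z*8^k), (1:ℝ)/p := by
  obtain ⟨x0, h100, hb⟩ := block
  refine ⟨x0, h100, fun z l hz k => ?_⟩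
  have hz0 : 0 < z := by linarith
  induction k with
  | zero =>
    intro _
    simp only [Nat.cast_zero, zero_div]
    positivity
  | succ k ih =>
    intro hl
    have h8 : (1:ℝ) ≤ 8^k := one_le_pow₀ (by norm_num)
    set y := z * 8^k with hy
    have hzy : z ≤ y := by rw [hy]; nlinarith
    have hy8 : z * 8^(k+1) = 8 * y := by rw [hy]; ring
    rw [hy8] at hl ⊢
    have hy0 : 0 < y := by linarith
    have h1 := ih ((log_le_log hy0 (by linarith)).trans hl)
    have h2 := hb y (by linarith)
    have hl0 : 0 < log (8*y) := log_pos (by linarith)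
    have h3 : 1/(8*l) ≤ 1/(8*log (8*y)) := by gcongr
    have h4 : ∑ p ∈ PI z y, (1:ℝ)/p + ∑ p ∈ (PI y (8*y)).filter (fun p : ℕ => y < p), (1:ℝ)/p ≤ ∑ p ∈ PI z (8*y), (1:ℝ)/p := by
      rw [← Finset.sum_union]
      · apply Finset.sum_le_sum_of_subset_of_nonneg
        · intro p hp
          rw [Finset.mem_union, Finset.mem_filter, mem_PI (by linarith), mem_PI (by linarith)] at hp
          rw [mem_PI (by linarith)]
          rcases hp with h | h
          · exact ⟨h.1, h.2.1, by linarith [h.2.2]⟩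
          · exact ⟨h.1.1, by linarith [h.2], h.1.2.2⟩
        · intros; positivity
      · rw [Finset.disjoint_left]
        intro p hp hp'
        rw [Finset.mem_filter] at hp'
        rw [mem_PI (by linarith)] at hp
        linarith [hp.2.2, hp'.2]
    push_cast
    rw [add_div]
    linarith

end CI

namespace CI

lemma log_four_gt : 1 < log 4 := by
  have h8 : log 4 = 2 * log 2 := by
    rw [show (4:ℝ) = 2^2 by norm_num, log_pow]; norm_num
  have := log_two_gt_d9
  linarith

lemma RR_le {r : ℝ → ℝ} {K l L : ℝ} (hK : 0 ≤ K) (hr : ∀ s, r s ≤ K) (hl : 1 ≤ l) (hL : 0 < L) :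
    RR r l L ≤ (K + 1) / l^2 := by
  unfold RR
  have hc0 := ch_nonneg hL.le
  have hc1 := ch_le_one (x := L)
  have h1 : r (l/L) * ch L ≤ K := by
    calc r (l/L) * ch L ≤ K * ch L := mul_le_mul_of_nonneg_right (hr _) hc0
      _ ≤ K * 1 := mul_le_mul_of_nonneg_left hc1 hK
      _ = K := mul_one K
  have h2 : exp (-(l/L)/4) ≤ 1 := by
    rw [exp_le_one_iff]
    have : 0 < l / L := by positivity
    linarith
  have h3 : exp (-(l/L)/4) / l^3 ≤ 1 / l^2 := by
    apply div_le_div₀ (by norm_num) h2 (by positivity)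
    exact pow_le_pow_right₀ hl (by norm_num)
  have h4 : r (l/L) * ch L / l^2 ≤ K / l^2 := by gcongr
  rw [add_div]
  linarith

lemma upper : ∃ C : ℝ, 1 ≤ C ∧ ∀ (N : ℕ) (a b : ℝ), 0 ≤ a → b ≤ N → 4 ≤ b - a →
    S N a b √(b-a) ≤ C * (b-a) / log (b-a) := by
  obtain ⟨A, hA, H⟩ := induct
  refine ⟨15 + 2*A, by linarith, fun N a b ha hb hv => ?_⟩
  have h2 : 2 ≤ √(b-a) := by
    rw [le_sqrt (by norm_num) (by linarith)]; linarith
  have h := (H N a b √(b-a) ha hb hv h2 le_rfl).1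
  refine h.trans ?_
  clear H h
  generalize hvd : b - a = v at *
  have hl : 1 ≤ log v := log_four_gt.le.trans (log_le_log (by norm_num) hv)
  have hL : 0 < log √v := log_pos (by linarith)
  have e1 : G N v √v ≤ 3 * (PI 2 v).card := by
    unfold G
    apply sum_wf_le
    · exact oddI_le
    · intro n hn1 hn2 hn3 hn4 hn5
      have hp := odd_rough (by linarith) hn1 hn4 (by rw [sq_sqrt (by linarith)]; exact hn3) hn5
      rw [mem_PI (by linarith)]
      exact ⟨hp, by exact_mod_cast hp.two_le, hn3⟩
  have e2 : ((PI 2 v).card : ℝ) ≤ 5 * v / log v := PI_card_le (by linarith)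
  have e3 : Ru v √v ≤ 2 * v / log v := by
    unfold Ru
    have := RR_le (by norm_num) rP_le hl hL
    calc v * RR rP (log v) (log √v) ≤ v * ((1+1)/(log v)^2) := by gcongr
      _ ≤ v * ((1+1)/(log v)) := by
        gcongr
        nlinarith
      _ = _ := by ring
  calc _ ≤ 3 * (5 * v / log v) + A * (2 * v / log v) := by
        have := mul_le_mul_of_nonneg_left e3 (by linarith : 0 ≤ A)
        linarith
    _ = _ := by ring

lemma G_low : ∃ u0 : ℝ, 100 ≤ u0 ∧ ∀ (N : ℕ) (u : ℝ) (p : ℝ), u0 ≤ u → u ≤ N → 0 ≤ p → p ≤ u/100 →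
    u / log u ≤ G N u p := by
  obtain ⟨u0, h0, H⟩ := prime_f
  refine ⟨u0, h0, fun N u p hu hN hp0 hp => ?_⟩
  have h := H u p hu hp0 hp
  have hu1 : 100 ≤ u := by linarith
  have hl : 0 < log u := log_pos (by linarith)
  have hsub : PI p u ⊆ RS N p := by
    intro q hq
    rw [mem_PI (by linarith)] at hq
    rw [mem_RS]
    refine ⟨⟨hq.1.one_lt.le, ?_⟩, ?_⟩
    · exact_mod_cast hq.2.2.trans hN
    · intro r hr hrq
      rw [(Nat.prime_dvd_prime_iff_eq hr hq.1).1 hrq]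
      exact hq.2.1
  have h1 : ∑ q ∈ PI p u, log q * f (u/q) ≤ log u * ∑ n ∈ RS N p, oddI n * f (u/n) := by
    calc ∑ q ∈ PI p u, log q * f (u/q) ≤ ∑ q ∈ PI p u, log u * (oddI q * f (u/q)) := by
          refine Finset.sum_le_sum fun q hq => ?_
          rw [mem_PI (by linarith)] at hq
          have : oddI q = 1 := by
            unfold oddI
            rw [ArithmeticFunction.cardFactors_apply_prime hq.1]
            simp
          rw [this, one_mul]
          have hq0 : (0:ℝ) < q := by exact_mod_cast hq.1.pos
          have := f_nonneg (u/q)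
          have := log_le_log hq0 hq.2.2
          gcongr
      _ = log u * ∑ q ∈ PI p u, oddI q * f (u/q) := by rw [Finset.mul_sum]
      _ ≤ _ := by
          gcongr
          intro n _ _
          exact mul_nonneg (oddI_nonneg n) (f_nonneg _)
  have h2 : (2:ℝ) ≤ 2 / log 2 := by
    rw [le_div_iff₀ (log_pos one_lt_two)]
    have := log_two_lt_d9
    linarith
  unfold G
  have h3 : 0 ≤ ∑ n ∈ RS N p, oddI n * f (u/n) := Finset.sum_nonneg fun n _ => mul_nonneg (oddI_nonneg n) (f_nonneg _)
  calc u / log u ≤ 2 * ∑ n ∈ RS N p, oddI n * f (u/n) := by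
        rw [div_le_iff₀ hl]; linarith
    _ ≤ _ := mul_le_mul_of_nonneg_right h2 h3

end CI

namespace CI

lemma g_low : ∃ v1 : ℝ, 100 ≤ v1 ∧ ∃ x0 : ℝ, 100 ≤ x0 ∧ ∀ (N : ℕ) (v z : ℝ) (k : ℕ), v1 ≤ v → v ≤ N → x0 ≤ z →
    z * 8^k ≤ √v / 20 → v / log v * (k / (8 * log v)) ≤ g N v z := by
  obtain ⟨u0, hu0, HG⟩ := G_low
  obtain ⟨x0, hx0, HB⟩ := blocks
  refine ⟨max 100 (u0^2), le_max_left _ _, x0, hx0, fun N v z k hv hN hz hzk => ?_⟩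
  have hv100 : 100 ≤ v := (le_max_left _ _).trans hv
  have hvu : u0 ≤ √v := by
    rw [le_sqrt (by linarith) (by linarith)]; exact (le_max_right _ _).trans hv
  have hv0 : 0 < v := by linarith
  have hs0 : 0 < √v := sqrt_pos.2 hv0
  have hss : √v * √v = v := mul_self_sqrt hv0.le
  have hl : 0 < log v := log_pos (by linarith)
  have hz0 : 0 < z := by linarith
  have hzk0 : 0 < z * 8^k := by positivity
  have hsv : √v ≤ v := by nlinarith
  have hb := HB z (log v) hz k (log_le_log hzk0 (by linarith))
  have e1 := g_buchstab N v z hN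
  have e2 := g_buchstab N v (√v/10) hN
  have hnn := g_nonneg N v (√v/10)
  classical
  have hPI : ∀ p ∈ PI z (z*8^k), p.Prime ∧ z ≤ p ∧ (p:ℝ) ≤ √v/20 := by
    intro p hp
    rw [mem_PI hzk0.le] at hp
    exact ⟨hp.1, hp.2.1, hp.2.2.trans hzk⟩
  have hdisj : Disjoint (PB z) (PI z (z*8^k)) := by
    rw [Finset.disjoint_left]
    intro p hp hp'
    rw [mem_PB] at hp
    linarith [(hPI p hp').2.1]
  have hsub : PB z ∪ PI z (z*8^k) ⊆ PB (√v/10) := by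
    intro p hp
    rw [mem_PB]
    rcases Finset.mem_union.1 hp with h | h
    · rw [mem_PB] at h
      refine ⟨h.1, ?_⟩
      have : z ≤ z * 8^k := le_mul_of_one_le_right hz0.le (one_le_pow₀ (by norm_num))
      linarith [h.2]
    · have := hPI p h
      exact ⟨this.1, by linarith [this.2.2]⟩
  have e3 : ∑ p ∈ PB z, G N (v/p) p + ∑ p ∈ PI z (z*8^k), G N (v/p) p ≤ ∑ p ∈ PB (√v/10), G N (v/p) p := by
    rw [← Finset.sum_union hdisj]
    exact Finset.sum_le_sum_of_subset_of_nonneg hsub fun p _ _ => G_nonneg _ _ _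
  have e4 : v / log v * ∑ p ∈ PI z (z*8^k), (1:ℝ)/p ≤ ∑ p ∈ PI z (z*8^k), G N (v/p) p := by
    rw [Finset.mul_sum]
    refine Finset.sum_le_sum fun p hp => ?_
    obtain ⟨hp1, hp2, hp3⟩ := hPI p hp
    have hp0 : (0:ℝ) < p := by linarith
    have h1 : 20 * √v ≤ v / p := by
      rw [le_div_iff₀ hp0]
      nlinarith
    have h2 : v / p ≤ v := div_le_self hv0.le (by linarith)
    have h3 := HG N (v/p) p (by linarith) (by linarith) hp0.le (by linarith)
    refine le_trans ?_ h3
    have h4 : log (v/p) ≤ log v := log_le_log (by linarith) h2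
    have h5 : 0 < log (v/p) := log_pos (by linarith)
    calc v / log v * (1/p) = v/p / log v := by ring
      _ ≤ _ := by gcongr
  have e5 : v / log v * (k / (8 * log v)) ≤ v / log v * ∑ p ∈ PI z (z*8^k), (1:ℝ)/p := by gcongr
  linarith

lemma lower : ∃ c v2 : ℝ, 0 < c ∧ c ≤ 1 ∧ 100 ≤ v2 ∧ ∀ (N : ℕ) (a b : ℝ), 0 ≤ a → b ≤ N → v2 ≤ b - a →
    (b-a) / (log (b-a))^2 ≤ S N a b (c * √(b-a)) := by
  obtain ⟨A, hA, H⟩ := induct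
  obtain ⟨v1, hv1, x0, hx0, HG⟩ := g_low
  obtain ⟨k, hk⟩ := exists_nat_ge (8 * (3*A + 1201))
  obtain ⟨c, hc⟩ : ∃ c : ℝ, c = 1 / (20 * 8^k) := ⟨_, rfl⟩
  have h8 : (1:ℝ) ≤ 8^k := one_le_pow₀ (by norm_num)
  have hc0 : 0 < c := by rw [hc]; positivity
  have hc1 : c ≤ 1 := by
    rw [hc, div_le_one (by positivity)]; linarith
  have hc8 : c * 8^k = 1/20 := by rw [hc]; field_simp
  refine ⟨c, max v1 (max ((x0/c)^2) ((1/c)^4)), hc0, hc1, hv1.trans (le_max_left _ _), fun N a b ha hb hv => ?_⟩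
  have hva : v1 ≤ b - a := (le_max_left _ _).trans hv
  have hvb : (x0/c)^2 ≤ b - a := (le_max_left _ _).trans ((le_max_right _ _).trans hv)
  have hvc : (1/c)^4 ≤ b - a := (le_max_right _ _).trans ((le_max_right _ _).trans hv)
  have hbN : b - a ≤ N := by linarith
  have HH := fun h1 h2 h3 => (H N a b (c * √(b-a)) ha hb h1 h2 h3).2
  clear H
  generalize hvd : b - a = v at *
  have hv0 : 0 < v := by linarith
  have hs0 : 0 < √v := sqrt_pos.2 hv0
  have hl : 1 ≤ log v := log_four_gt.le.trans (log_le_log (by norm_num) (by linarith))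
  have hxz : x0 ≤ c * √v := by
    have : x0 / c ≤ √v := by
      rw [le_sqrt (by positivity) hv0.le]; exact hvb
    rw [div_le_iff₀ hc0] at this
    linarith
  have hzs : c * √v ≤ √v := by nlinarith
  have h1 := HH (by linarith) (by linarith) hzs
  have h2 := HG N v (c * √v) k hva hbN hxz (by
    have : c * √v * 8^k = (c * 8^k) * √v := by ring
    rw [this, hc8]; linarith)
  have hq : √(√v) ≤ c * √v := by
    have h3 : 1/c ≤ √(√v) := by
      rw [le_sqrt (by positivity) hs0.le, le_sqrt (by positivity) hv0.le]
      calc ((1/c)^2)^2 = (1/c)^4 := by ring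
        _ ≤ v := hvc
    rw [div_le_iff₀ hc0] at h3
    have h4 : √(√v) * √(√v) = √v := mul_self_sqrt hs0.le
    nlinarith [sqrt_nonneg (√v)]
  have hlz : log v / 4 ≤ log (c * √v) := by
    have : log (√(√v)) = log v / 4 := by
      rw [log_sqrt hs0.le, log_sqrt hv0.le]; ring
    rw [← this]
    exact log_le_log (sqrt_pos.2 hs0) hq
  generalize hzd : c * √v = z at *
  have hz2 : 2 ≤ z := by linarith
  have hRl : Rl v z ≤ 3 * (v / (log v)^2) := by
    unfold Rl
    have := RR_le (by norm_num) rM_le hl (log_pos (by linarith : 1 < z))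
    calc v * RR rM (log v) (log z) ≤ v * ((2+1)/(log v)^2) := by gcongr
      _ = _ := by ring
  have hPB : ((PB z).card : ℝ)^2 ≤ 400 * (v / (log v)^2) := by
    have h := PB_card_le' hz2
    have h3 : 5 * z / log z ≤ 20 * (√v / log v) := by
      calc 5 * z / log z ≤ 5 * √v / (log v / 4) := by gcongr
        _ = _ := by ring
    calc ((PB z).card : ℝ)^2 ≤ (20 * (√v / log v))^2 := by
          have := h.trans h3
          gcongr
      _ = 400 * ((√v)^2 / (log v)^2) := by ring
      _ = _ := by rw [sq_sqrt hv0.le]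
  have hk2 : (3*A + 1201) * (v / (log v)^2) ≤ v / log v * (k / (8 * log v)) := by
    have : v / log v * (k / (8 * log v)) = (k/8) * (v / (log v)^2) := by field_simp
    rw [this]
    gcongr
    linarith
  have := mul_le_mul_of_nonneg_left hRl (by linarith : 0 ≤ A)
  linarith

end CI

namespace CI

lemma recip_sq_block {t w : ℝ} (ht : 0 < t) (hw : 2 ≤ w) :
    ∑ p ∈ PI t w, (1:ℝ)/(p:ℝ)^2 ≤ 5 * w / log w / t^2 := by
  calc ∑ p ∈ PI t w, (1:ℝ)/(p:ℝ)^2 ≤ ∑ p ∈ PI t w, 1/t^2 := by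
        refine Finset.sum_le_sum fun p hp => ?_
        rw [mem_PI (by linarith)] at hp
        have := hp.2.1
        gcongr
    _ = ((PI t w).card : ℝ) / t^2 := by rw [Finset.sum_const, nsmul_eq_mul]; ring
    _ ≤ _ := by
        have := PI_card_le (x := t) hw
        gcongr

lemma recip_sq_dy {z : ℝ} (hz : 2 ≤ z) (j : ℕ) :
    ∑ p ∈ PI z (z * 2^j), (1:ℝ)/(p:ℝ)^2 ≤ (25 - 20 / 2^j) / (z * log z) := by
  have hl : 0 < log z := log_pos (by linarith)
  have hz0 : 0 < z := by linarith
  induction j with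
  | zero =>
    have h := recip_sq_block hz0 hz
    simp only [pow_zero, mul_one]
    refine h.trans (le_of_eq ?_)
    field_simp
    norm_num
  | succ j ih =>
    classical
    have h2j : (1:ℝ) ≤ 2^j := one_le_pow₀ (by norm_num)
    have hsub : PI z (z * 2^(j+1)) ⊆ PI z (z*2^j) ∪ PI (z*2^j) (z*2^(j+1)) := by
      intro p hp
      rw [mem_PI (by positivity)] at hp
      rw [Finset.mem_union, mem_PI (by positivity), mem_PI (by positivity)]
      rcases le_total (p:ℝ) (z*2^j) with h | h
      · exact Or.inl ⟨hp.1, hp.2.1, h⟩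
      · exact Or.inr ⟨hp.1, h, hp.2.2⟩
    have hw : z ≤ z * 2^(j+1) := le_mul_of_one_le_right hz0.le (one_le_pow₀ (by norm_num))
    have h := recip_sq_block (t := z*2^j) (w := z*2^(j+1)) (by positivity) (by linarith)
    have hlog : log z ≤ log (z*2^(j+1)) := log_le_log hz0 hw
    have h3 : 5 * (z*2^(j+1)) / log (z*2^(j+1)) / (z*2^j)^2 ≤ 10 / 2^j / (z * log z) := by
      calc 5 * (z*2^(j+1)) / log (z*2^(j+1)) / (z*2^j)^2 ≤ 5 * (z*2^(j+1)) / log z / (z*2^j)^2 := by gcongr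
        _ = _ := by field_simp; ring
    have h4 : (25 - 20 / 2^j) / (z * log z) + 10 / 2^j / (z * log z) = (25 - 20 / 2^(j+1)) / (z * log z) := by
      rw [← add_div]; congr 1; field_simp; ring
    calc ∑ p ∈ PI z (z * 2^(j+1)), (1:ℝ)/(p:ℝ)^2 ≤ ∑ p ∈ PI z (z*2^j) ∪ PI (z*2^j) (z*2^(j+1)), (1:ℝ)/(p:ℝ)^2 :=
          Finset.sum_le_sum_of_subset_of_nonneg hsub fun p _ _ => by positivity
      _ ≤ ∑ p ∈ PI z (z*2^j), (1:ℝ)/(p:ℝ)^2 + ∑ p ∈ PI (z*2^j) (z*2^(j+1)), (1:ℝ)/(p:ℝ)^2 := by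
          rw [← Finset.sum_union_inter]
          have : 0 ≤ ∑ p ∈ PI z (z*2^j) ∩ PI (z*2^j) (z*2^(j+1)), (1:ℝ)/(p:ℝ)^2 := Finset.sum_nonneg fun p _ => by positivity
          linarith
      _ ≤ _ := by linarith

lemma recip_sq {z y : ℝ} (hz : 2 ≤ z) (hy : 0 ≤ y) :
    ∑ p ∈ PI z y, (1:ℝ)/(p:ℝ)^2 ≤ 25 / (z * log z) := by
  have hl : 0 < log z := log_pos (by linarith)
  obtain ⟨j, hj⟩ := pow_unbounded_of_one_lt y (by norm_num : (1:ℝ) < 2)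
  have hyj : y ≤ z * 2^j := by nlinarith
  calc ∑ p ∈ PI z y, (1:ℝ)/(p:ℝ)^2 ≤ ∑ p ∈ PI z (z*2^j), (1:ℝ)/(p:ℝ)^2 := by
        apply Finset.sum_le_sum_of_subset_of_nonneg
        · intro p hp
          rw [mem_PI hy] at hp
          rw [mem_PI (by positivity)]
          exact ⟨hp.1, hp.2.1, hp.2.2.trans hyj⟩
        · intro p _ _; positivity
    _ ≤ _ := recip_sq_dy hz j
    _ ≤ _ := by
        gcongr
        have : (0:ℝ) < 20 / 2^j := by positivity
        linarith

/-- conflict degree -/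
noncomputable def dg (V : Finset ℕ) (m : ℕ) : ℕ := (V.filter fun n => m ≠ n ∧ ¬ Nat.Coprime m n).card

lemma indep (V : Finset ℕ) {D : ℝ} (hD : 0 < D) (hE : ∑ m ∈ V, (dg V m : ℝ) ≤ D * V.card / 2) :
    ∃ I ⊆ V, (∀ m ∈ I, ∀ n ∈ I, m ≠ n → Nat.Coprime m n) ∧ (V.card : ℝ) / 2 ≤ I.card * (1 + D) := by
  set W := V.filter fun m => (dg V m : ℝ) ≤ D with hW
  have hWV : W ⊆ V := Finset.filter_subset _ _
  have h1 : (V.card : ℝ) / 2 ≤ W.card := by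
    have hs := Finset.card_filter_add_card_filter_not (s := V) (fun m => (dg V m : ℝ) ≤ D)
    have hs' : (W.card : ℝ) + (V.filter fun m => ¬ (dg V m : ℝ) ≤ D).card = V.card := by exact_mod_cast hs
    have h2 : D * (V.filter fun m => ¬ (dg V m : ℝ) ≤ D).card ≤ ∑ m ∈ V, (dg V m : ℝ) := by
      calc D * (V.filter fun m => ¬ (dg V m : ℝ) ≤ D).card = ∑ m ∈ V.filter (fun m => ¬ (dg V m : ℝ) ≤ D), D := by
            rw [Finset.sum_const, nsmul_eq_mul]; ring
        _ ≤ ∑ m ∈ V.filter (fun m => ¬ (dg V m : ℝ) ≤ D), (dg V m : ℝ) := by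
            refine Finset.sum_le_sum fun m hm => ?_
            exact (not_le.1 (Finset.mem_filter.1 hm).2).le
        _ ≤ _ := Finset.sum_le_sum_of_subset_of_nonneg (Finset.filter_subset _ _) fun _ _ _ => by positivity
    have h3 : D * (V.filter fun m => ¬ (dg V m : ℝ) ≤ D).card ≤ D * (V.card / 2) := by linarith
    have := le_of_mul_le_mul_left h3 hD
    linarith
  set F := W.powerset.filter fun I => ∀ m ∈ I, ∀ n ∈ I, m ≠ n → Nat.Coprime m n with hF
  have hne : F.Nonempty := ⟨∅, by simp [hF]⟩
  obtain ⟨I, hI, hmax⟩ := Finset.exists_max_image F Finset.card hne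
  have hI' := Finset.mem_filter.1 hI
  have hIW : I ⊆ W := Finset.mem_powerset.1 hI'.1
  refine ⟨I, hIW.trans hWV, hI'.2, h1.trans ?_⟩
  have hcov : W ⊆ I.biUnion fun m => insert m (V.filter fun n => m ≠ n ∧ ¬ Nat.Coprime m n) := by
    intro n hn
    rw [Finset.mem_biUnion]
    by_contra hc
    push Not at hc
    have hnI : n ∉ I := fun h => hc n h (Finset.mem_insert_self _ _)
    have hcop : ∀ m ∈ I, Nat.Coprime m n := by
      intro m hm
      by_contra hmn
      apply hc m hm
      apply Finset.mem_insert_of_mem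
      rw [Finset.mem_filter]
      exact ⟨hWV hn, fun h => hnI (h ▸ hm), hmn⟩
    have hins : insert n I ∈ F := by
      rw [hF, Finset.mem_filter, Finset.mem_powerset]
      refine ⟨Finset.insert_subset hn hIW, ?_⟩
      intro a ha b hb hab
      rw [Finset.mem_insert] at ha hb
      rcases ha with rfl | ha <;> rcases hb with rfl | hb
      · exact absurd rfl hab
      · exact (hcop b hb).symm
      · exact hcop a ha
      · exact hI'.2 a ha b hb hab
    have := hmax _ hins
    rw [Finset.card_insert_of_notMem hnI] at this
    omega
  calc (W.card : ℝ) ≤ ((I.biUnion fun m => insert m (V.filter fun n => m ≠ n ∧ ¬ Nat.Coprime m n)).card : ℝ) := by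
        exact_mod_cast Finset.card_le_card hcov
    _ ≤ ∑ m ∈ I, ((insert m (V.filter fun n => m ≠ n ∧ ¬ Nat.Coprime m n)).card : ℝ) := by
        exact_mod_cast Finset.card_biUnion_le
    _ ≤ ∑ m ∈ I, (1 + D) := by
        refine Finset.sum_le_sum fun m hm => ?_
        have h2 : (insert m (V.filter fun n => m ≠ n ∧ ¬ Nat.Coprime m n)).card ≤ dg V m + 1 := Finset.card_insert_le _ _
        have h3 : ((insert m (V.filter fun n => m ≠ n ∧ ¬ Nat.Coprime m n)).card : ℝ) ≤ dg V m + 1 := by exact_mod_cast h2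
        have h4 := (Finset.mem_filter.1 (hIW hm)).2
        linarith
    _ = _ := by rw [Finset.sum_const, nsmul_eq_mul]

/-- sum of degrees bounded by prime multiplicities -/
lemma deg_sum (V : Finset ℕ) {x y z : ℝ} (hy : 0 ≤ y)
    (hV : ∀ n ∈ V, x - y < n ∧ (n:ℝ) ≤ x ∧ Rough z n) :
    ∑ m ∈ V, (dg V m : ℝ) ≤ ∑ p ∈ PI z y, ((V.filter fun n => p ∣ n).card : ℝ)^2 := by
  classical
  have h1 : ∑ m ∈ V, dg V m = (V.sigma fun m => V.filter fun n => m ≠ n ∧ ¬ Nat.Coprime m n).card := by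
    rw [Finset.card_sigma]; rfl
  have h2 : (V.sigma fun m => V.filter fun n => m ≠ n ∧ ¬ Nat.Coprime m n) ⊆
      (PI z y).biUnion fun p => (V.filter fun n => p ∣ n).sigma fun _ => V.filter fun n => p ∣ n := by
    rintro ⟨m, n⟩ hmn
    simp only [Finset.mem_sigma, Finset.mem_filter] at hmn
    obtain ⟨hm, hn, hne, hc⟩ := hmn
    obtain ⟨p, hp, hpm, hpn⟩ := Nat.Prime.not_coprime_iff_dvd.1 hc
    rw [Finset.mem_biUnion]
    refine ⟨p, ?_, ?_⟩
    · rw [mem_PI hy]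
      refine ⟨hp, (hV m hm).2.2 p hp hpm, ?_⟩
      have key : ∀ a b : ℕ, a ∈ V → b ∈ V → a < b → p ∣ a → p ∣ b → (p:ℝ) ≤ y := by
        intro a b ha hb hab hpa hpb
        have h3 : p ∣ b - a := Nat.dvd_sub hpb hpa
        have h4 := Nat.le_of_dvd (by omega) h3
        have h5 : (p:ℝ) ≤ b - a := by
          rw [← Nat.cast_sub hab.le]; exact_mod_cast h4
        linarith [(hV a ha).1, (hV b hb).2.1]
      rcases lt_or_gt_of_ne hne with h | h
      · exact key m n hm hn h hpm hpn
      · exact key n m hn hm h hpn hpm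
    · simp [hm, hn, hpm, hpn]
  have h3 := (Finset.card_le_card h2).trans Finset.card_biUnion_le
  rw [← h1] at h3
  simp only [Finset.card_sigma, Finset.sum_const, smul_eq_mul, ← sq] at h3
  exact_mod_cast h3

end CI

namespace CI

lemma log_cube : ∃ y0 : ℝ, 1 ≤ y0 ∧ ∀ y, y0 ≤ y → (log y)^3 ≤ √(√y) := by
  have h := (isLittleO_pow_log_id_atTop (n := 3)).bound (show (0:ℝ) < 1/64 by norm_num)
  obtain ⟨u0, hu⟩ := (h.and (Filter.eventually_ge_atTop 1)).exists_forall_of_atTop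
  have hu1 : 1 ≤ u0 := (hu u0 le_rfl).2
  refine ⟨u0^4, one_le_pow₀ hu1, fun y hy => ?_⟩
  have hy0 : 0 ≤ y := le_trans (by positivity) hy
  have hq : u0 ≤ √(√y) := by
    rw [le_sqrt (by linarith) (sqrt_nonneg y), le_sqrt (by positivity) hy0]
    calc (u0^2)^2 = u0^4 := by ring
      _ ≤ y := hy
  have h1 := (hu _ hq).1
  rw [log_sqrt (sqrt_nonneg y), log_sqrt hy0] at h1
  simp only [id] at h1
  rw [norm_of_nonneg (sqrt_nonneg _)] at h1
  have h2 := (le_norm_self _).trans h1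
  have h3 : (log y / 2 / 2)^3 = (log y)^3 / 64 := by ring
  rw [h3] at h2
  linarith

/-- multiples of `p` among survivors -/
lemma mult_le {N : ℕ} {a b z : ℝ} (V : Finset ℕ) (hV : ∀ n ∈ V, n ∈ RS N z ∧ a < n ∧ (n:ℝ) ≤ b)
    {p : ℕ} (hp : p.Prime) : ((V.filter fun n => p ∣ n).card : ℝ) ≤ S N (a/p) (b/p) z := by
  classical
  have hp0 : (0:ℝ) < p := by exact_mod_cast hp.pos
  have h1 : (V.filter fun n => p ∣ n).card ≤ ((RS N z).filter fun m : ℕ => a/p < m ∧ (m:ℝ) ≤ b/p).card := by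
    apply Finset.card_le_card_of_injOn (fun n => n / p)
    · intro n hn
      obtain ⟨hn1, m, rfl⟩ := Finset.mem_filter.1 hn
      obtain ⟨h1, h2, h3⟩ := hV _ hn1
      rw [mem_RS] at h1
      have hdiv : p * m / p = m := Nat.mul_div_cancel_left m hp.pos
      simp only [hdiv]
      push_cast at h2 h3
      refine Finset.mem_coe.2 (Finset.mem_filter.2 ⟨?_, ?_, ?_⟩)
      · rw [mem_RS]
        refine ⟨⟨?_, ?_⟩, ?_⟩
        · exact Nat.pos_of_ne_zero (by rintro rfl; simp at h1)
        · exact le_trans (Nat.le_mul_of_pos_left m hp.pos) h1.1.2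
        · intro r hr hrm
          exact h1.2 r hr (Dvd.dvd.mul_left hrm p)
      · rw [div_lt_iff₀ hp0]; linarith
      · rw [le_div_iff₀ hp0]; linarith
    · intro n hn m hm h
      obtain ⟨_, n', rfl⟩ := Finset.mem_filter.1 hn
      obtain ⟨_, m', rfl⟩ := Finset.mem_filter.1 hm
      simp only [Nat.mul_div_cancel_left _ hp.pos] at h
      rw [h]
  have h2 : S N (a/p) (b/p) z = (((RS N z).filter fun m : ℕ => a/p < m ∧ (m:ℝ) ≤ b/p).card : ℝ) := by
    unfold S ind
    rw [Finset.sum_boole]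
  rw [h2]
  exact_mod_cast h1

set_option maxHeartbeats 1000000 in
lemma conflict (c C : ℝ) (hc : 0 < c) (hc1 : c ≤ 1) (hC : 1 ≤ C)
    (H : ∀ (N : ℕ) (a b : ℝ), 0 ≤ a → b ≤ N → 4 ≤ b - a → S N a b √(b-a) ≤ C * (b-a) / log (b-a)) :
    ∃ M Y : ℝ, 1 ≤ M ∧ 100 ≤ Y ∧ ∀ (N : ℕ) (a b : ℝ), 0 ≤ a → b ≤ N → Y ≤ b - a → ∀ V : Finset ℕ,
      (∀ n ∈ V, n ∈ RS N (c * √(b-a)) ∧ a < n ∧ (n:ℝ) ≤ b) →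
      ∑ m ∈ V, (dg V m : ℝ) ≤ M * ((b-a) * √(b-a) / (log (b-a))^3) := by
  obtain ⟨y0, hy0, hlog⟩ := log_cube
  refine ⟨6400 * C^2 / c + 4, max y0 (max (100^4) ((2/c)^8)), ?_, ?_, fun N a b ha hb hv V hV => ?_⟩
  · have : 0 < 6400 * C^2 / c := by positivity
    linarith
  · exact le_trans (by norm_num) ((le_max_left _ _).trans (le_max_right _ _))
  have hva : y0 ≤ b - a := (le_max_left _ _).trans hv
  have hvb : 100^4 ≤ b - a := (le_max_left _ _).trans ((le_max_right _ _).trans hv)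
  have hvc : (2/c)^8 ≤ b - a := (le_max_right _ _).trans ((le_max_right _ _).trans hv)
  obtain ⟨y, hyd⟩ : ∃ y, y = b - a := ⟨_, rfl⟩
  rw [← hyd] at hva hvb hvc hV ⊢
  have hy : 0 < y := by linarith
  have hl3 := hlog y hva
  obtain ⟨s, hs⟩ : ∃ s, s = √y := ⟨_, rfl⟩
  obtain ⟨q, hq⟩ : ∃ q, q = √s := ⟨_, rfl⟩
  obtain ⟨t, ht⟩ : ∃ t, t = √q := ⟨_, rfl⟩
  have hs0 : 0 < s := hs ▸ sqrt_pos.2 hy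
  have hq0 : 0 < q := hq ▸ sqrt_pos.2 hs0
  have ht0 : 0 < t := ht ▸ sqrt_pos.2 hq0
  have hss : s * s = y := hs ▸ mul_self_sqrt hy.le
  have hqq : q * q = s := hq ▸ mul_self_sqrt hs0.le
  have htt : t * t = q := ht ▸ mul_self_sqrt hq0.le
  have hlt : log t = log y / 8 := by
    rw [ht, log_sqrt hq0.le, hq, log_sqrt hs0.le, hs, log_sqrt hy.le]; ring
  have hlq : log q = log y / 4 := by
    rw [hq, log_sqrt hs0.le, hs, log_sqrt hy.le]; ring
  rw [← hs] at hl3 hV ⊢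
  rw [← hq] at hl3
  have hq100 : 100 ≤ q := by
    rw [hq, le_sqrt (by norm_num) hs0.le, hs, le_sqrt (by norm_num) hy.le]
    linarith
  have ht10 : 10 ≤ t := by
    rw [ht, le_sqrt (by norm_num) hq0.le]; linarith
  have htc : 2/c ≤ t := by
    rw [ht, le_sqrt (by positivity) hq0.le, hq, le_sqrt (by positivity) hs0.le, hs, le_sqrt (by positivity) hy.le]
    calc (((2/c)^2)^2)^2 = (2/c)^8 := by ring
      _ ≤ y := hvc
  have hct : 2 ≤ c * t := by
    rw [div_le_iff₀ hc] at htc; linarith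
  have hl : 1 ≤ log y := log_four_gt.le.trans (log_le_log (by norm_num) (by linarith))
  obtain ⟨z, hz⟩ : ∃ z, z = c * s := ⟨_, rfl⟩
  rw [← hz] at hV
  have hqz : q ≤ z := by
    have h1 : z = (c * t) * (t * q) := by rw [hz, ← hqq, ← htt]; ring
    have h2 : q ≤ t * q := le_mul_of_one_le_left hq0.le (by linarith)
    rw [h1]
    exact h2.trans (le_mul_of_one_le_left (by positivity) (by linarith))
  have hz2 : 2 ≤ z := by linarith
  have hlz : log y / 4 ≤ log z := hlq ▸ log_le_log hq0 hqz
  have hE := deg_sum V (x := b) (y := y) (z := z) hy.le (by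
    intro n hn
    obtain ⟨h1, h2, h3⟩ := hV n hn
    exact ⟨by rw [hyd]; linarith, h3, (mem_RS.1 h1).2⟩)
  refine hE.trans ?_
  -- pointwise bound
  have hpt : ∀ p ∈ PI z y, ((V.filter fun n => p ∣ n).card : ℝ)^2 ≤ (8 * C * y / log y)^2 * (1/(p:ℝ)^2) + 4 * q := by
    intro p hp
    rw [mem_PI hy.le] at hp
    obtain ⟨hp1, hp2, hp3⟩ := hp
    have hp0 : (0:ℝ) < p := by linarith
    have hm := mult_le V hV hp1
    have hbp : b / p ≤ N := by
      have : 0 ≤ b := by linarith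
      exact (div_le_self this (by linarith)).trans hb
    have hap : 0 ≤ a / p := by positivity
    have hdiff : b / p - a / p = y / p := by rw [hyd]; ring
    rcases le_total t (y/p) with h | h
    · have h1 := H N (a/p) (b/p) hap hbp (by linarith)
      rw [hdiff] at h1
      have hup : y / p ≤ s / c := by
        calc y / p ≤ y / z := by gcongr
          _ = s / c := by rw [hz, ← hss]; field_simp
      have hsq : √(y/p) ≤ z := by
        rw [sqrt_le_left (by linarith)]
        refine hup.trans ?_
        rw [div_le_iff₀ hc, hz]
        have e2 : s = t*t*t*t := by rw [← hqq, ← htt]; ring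
        have e3 : (c*s)^2*c = s * ((c*t)^3 * t) := by rw [e2]; ring
        rw [e3]
        have h3 : (1:ℝ) ≤ (c*t)^3 := one_le_pow₀ (by linarith)
        have h4 : (1:ℝ) ≤ (c*t)^3 * t := one_le_mul_of_one_le_of_one_le h3 (by linarith)
        exact le_mul_of_one_le_right hs0.le h4
      have h2 := S_anti N (a/p) (b/p) hsq
      have hlu : log y / 8 ≤ log (y/p) := hlt ▸ log_le_log ht0 h
      have h3 : C * (y/p) / log (y/p) ≤ 8 * C * y / log y * (1/p) := by
        calc C * (y/p) / log (y/p) ≤ C * (y/p) / (log y / 8) := by gcongr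
          _ = _ := by field_simp
      have h4 : ((V.filter fun n => p ∣ n).card : ℝ) ≤ 8 * C * y / log y * (1/p) := by linarith
      calc ((V.filter fun n => p ∣ n).card : ℝ)^2 ≤ (8 * C * y / log y * (1/p))^2 := by gcongr
        _ = (8 * C * y / log y)^2 * (1/(p:ℝ)^2) := by ring
        _ ≤ _ := by linarith
    · have h1 := (abs_le.1 (S_two N (a/p) (b/p) hap (by
        have : 0 ≤ y / p := by positivity
        linarith) hbp)).2
      have h2 := S_anti N (a/p) (b/p) hz2
      have h4 : ((V.filter fun n => p ∣ n).card : ℝ) ≤ 2 * t := by linarith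
      calc ((V.filter fun n => p ∣ n).card : ℝ)^2 ≤ (2*t)^2 := by gcongr
        _ = 4 * q := by rw [← htt]; ring
        _ ≤ _ := by
          have : 0 ≤ (8 * C * y / log y)^2 * (1/(p:ℝ)^2) := by positivity
          linarith
  have hcard : ((PI z y).card : ℝ) ≤ y := by
    have h1 : PI z y ⊆ Finset.Icc 1 ⌊y⌋₊ := by
      intro p hp
      rw [mem_PI hy.le] at hp
      exact Finset.mem_Icc.2 ⟨hp.1.one_lt.le, Nat.le_floor hp.2.2⟩
    have h2 := Finset.card_le_card h1
    simp only [Nat.card_Icc, Nat.add_sub_cancel] at h2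
    exact le_trans (by exact_mod_cast h2) (Nat.floor_le hy.le)
  have hrs := recip_sq hz2 hy.le
  have hm1 : (8 * C * y / log y)^2 * (25 / (z * log z)) ≤ 6400 * C^2 / c * (y * s / (log y)^3) := by
    calc (8 * C * y / log y)^2 * (25 / (z * log z)) ≤ (8 * C * y / log y)^2 * (25 / (z * (log y / 4))) := by gcongr
      _ = 6400 * C^2 / c * (y * (y / s) / (log y)^3) := by rw [hz]; field_simp; ring
      _ = _ := by
        congr 4
        rw [← hss]; field_simp
  have hm2 : y * (4 * q) ≤ 4 * (y * s / (log y)^3) := by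
    have : q ≤ s / (log y)^3 := by
      rw [le_div_iff₀ (by positivity), ← hqq]
      gcongr
    calc y * (4 * q) ≤ y * (4 * (s / (log y)^3)) := by gcongr
      _ = _ := by ring
  calc _ ≤ ∑ p ∈ PI z y, ((8 * C * y / log y)^2 * (1/(p:ℝ)^2) + 4 * q) := Finset.sum_le_sum hpt
    _ = (8 * C * y / log y)^2 * ∑ p ∈ PI z y, (1/(p:ℝ)^2) + (PI z y).card * (4 * q) := by
        rw [Finset.sum_add_distrib, Finset.mul_sum, Finset.sum_const, nsmul_eq_mul]
    _ ≤ (8 * C * y / log y)^2 * (25 / (z * log z)) + y * (4 * q) := by gcongr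
    _ ≤ _ := by rw [add_mul]; linarith

end CI

open CI

theorem coprime_subset_of_interval :
    ∃ c₃ : ℝ, 0 < c₃ ∧ ∃ Y : ℝ, ∀ y : ℝ, Y ≤ y → ∀ x : ℝ, y + 1 ≤ x →
      ∃ S : Finset ℕ,
        (∀ n ∈ S, 0 < n ∧ x - y ≤ (n : ℝ) ∧ (n : ℝ) ≤ x) ∧
        (∀ m ∈ S, ∀ n ∈ S, m ≠ n → Nat.Coprime m n) ∧
        c₃ * Real.sqrt y / log y ≤ (S.card : ℝ) := by
  obtain ⟨c, v2, hc, hc1, hv2, HL⟩ := lower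
  obtain ⟨C, hC, HU⟩ := upper
  obtain ⟨M, Y, hM, hY, HE⟩ := conflict c C hc hc1 hC HU
  refine ⟨1 / (2 * (2*M + 2)), by positivity, max v2 Y, fun y hy x hx => ?_⟩
  have hyv : v2 ≤ y := (le_max_left _ _).trans hy
  have hyY : Y ≤ y := (le_max_right _ _).trans hy
  have hy0 : 0 < y := by linarith
  have hN : x ≤ (⌈x⌉₊ : ℝ) := Nat.le_ceil x
  have hxy : x - (x - y) = y := by ring
  have hL := HL ⌈x⌉₊ (x-y) x (by linarith) hN (by linarith)
  have hE := HE ⌈x⌉₊ (x-y) x (by linarith) hN (by linarith)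
  rw [hxy] at hL hE
  classical
  obtain ⟨V, hVd⟩ : ∃ V, V = (RS ⌈x⌉₊ (c * √y)).filter fun n : ℕ => x - y < n ∧ (n:ℝ) ≤ x := ⟨_, rfl⟩
  have hV : ∀ n ∈ V, n ∈ RS ⌈x⌉₊ (c * √y) ∧ x - y < n ∧ (n:ℝ) ≤ x := by
    intro n hn
    rw [hVd, Finset.mem_filter] at hn
    exact hn
  have hcard : CI.S ⌈x⌉₊ (x-y) x (c * √y) = (V.card : ℝ) := by
    rw [hVd]
    unfold CI.S ind
    rw [Finset.sum_boole]
  rw [hcard] at hL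
  have hE := hE V hV
  have hl : 1 ≤ log y := log_four_gt.le.trans (log_le_log (by norm_num) (by linarith))
  have hl0 : 0 < log y := by linarith
  have hs0 : 0 < √y := sqrt_pos.2 hy0
  have hss : √y * √y = y := mul_self_sqrt hy0.le
  obtain ⟨I, hIV, hI, hIc⟩ := indep V (D := 2 * M * √y / log y) (by positivity) (by
    refine hE.trans ?_
    calc M * (y * √y / (log y)^3) = 2 * M * √y / log y * (y / (log y)^2) / 2 := by field_simp
      _ ≤ _ := by gcongr)
  refine ⟨I, ?_, hI, ?_⟩
  · intro n hn
    obtain ⟨h1, h2, h3⟩ := hV n (hIV hn)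
    exact ⟨(mem_RS.1 h1).1.1, h2.le, h3⟩
  · have h1 : 1 ≤ 2 * (√y / log y) := by
      have h := log_le_sub_one_of_pos hs0
      rw [log_sqrt hy0.le] at h
      rw [← mul_div_assoc, le_div_iff₀ hl0]
      linarith
    have h2 : 1 + 2 * M * √y / log y ≤ (2*M+2) * (√y / log y) := by
      have : 2 * M * √y / log y = 2 * M * (√y / log y) := by ring
      rw [this, add_mul]
      linarith
    have h3 : y / (log y)^2 / 2 ≤ I.card * ((2*M+2) * (√y / log y)) := by
      calc y / (log y)^2 / 2 ≤ (V.card:ℝ) / 2 := by gcongr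
        _ ≤ _ := hIc
        _ ≤ _ := by gcongr
    have h4 : 1 / (2 * (2*M+2)) * √y / log y * ((2*M+2) * (√y / log y)) = y / (log y)^2 / 2 := by
      have : (2*M+2) ≠ 0 := by positivity
      have h5 : 1 / (2 * (2*M+2)) * √y / log y * ((2*M+2) * (√y / log y)) = (√y * √y) / (log y)^2 / 2 := by
        generalize √y = w
        field_simp
      rw [h5, hss]
    rw [← h4] at h3
    exact le_of_mul_le_mul_right h3 (by positivity)
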